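/- arXiv:2404.13763 — 2 statements merged into one kernel-verified Lean document; each statement's English description precedes it below -/
import Mathlib

section
/- For every fixed integer d ≥ 1, as the integer b → ∞ (with b > d), I(b,d,3) = b·log b + a₁/b⁵ + a₂/b⁶ + a₃/b⁷ + a₄/b⁸ + O(b⁻⁹), where: a₁ = (d + 1/2)/d²; a₂ = (d + 1/2)·d/(d²(d+1)) · 0 + (d + 1/2)(d + 0)/(d²(d+1)) evaluated as (d + 1/2)((3−2)d + 3 − 3)/(d²(d+1)) = (d + 1/2)·d/(d²(d+1)); a₃ = (d + 1/2)ζ(2) + (d + 1/2)((3² − 5·3 + 4)d³ + (2·3² − 12·3 + 8)d² + (3² − 7·3 + 1)d − 2)/(2d³(d+1)²) = (d + 1/2)ζ(2) + (d + 1/2)(−2d³ − 10d² − 11d − 2)/(2d³(d+1)²); a₄ = −(2d+1)d·ζ(3) + 3(d + 1/2)ζ(2) − (12d⁶ − 50d⁴ − 81d³ − 71d² − 33d − 6)/(12d⁴(d+1)³). -/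
/-!
Put mass `b⁻¹⁻ˡ` at `0.a₁⋯aₗ` for every finite string of base-`b` digits with a prescribed number
of digits `d`. Sorting integers by their leading digit `a` turns the Irwin sum into `b` times a sum
of integrals of `1 / (a + y)` against these measures, and Lebesgue measure in their place gives
exactly `b log b`.

Splitting off the first digit gives a recursion for the difference from Lebesgue measure: functions
are replaced by `y ↦ f ((a + y) / b)`, which divides Lipschitz constants by `b`. Hence allowing one
more digit `d` gains a factor `b⁻²`, and the difference multiplied by the corresponding power of
`b`, the discrepancy, is bounded uniformly in `b` on Lipschitz functions. It annihilates constants,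
so one more use of the recursion on `1 / (a + y)` and a geometric expansion in `y` express the
error term by the discrepancies of the first few monomials and by sums of inverse powers, whence
the zeta values.
-/

open Filter Asymptotics

/-- The Irwin harmonic sum `I(b,d,k)`: sum of `1/m` over positive integers `m`
whose base-`b` digit list contains the digit `d` exactly `k` times. -/
noncomputable def irwinSum (b d k : ℕ) : ℝ :=
  ∑' m : ℕ, if 0 < m ∧ (Nat.digits b m).count d = k then (1 : ℝ) / m else 0

/-- `ζ(s) = ∑_{n ≥ 1} n^{-s}` for an integer exponent. -/
noncomputable def zetaR (s : ℕ) : ℝ := ∑' n : ℕ, 1 / ((n : ℝ) + 1) ^ s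

namespace Irwin

open Finset MeasureTheory Set intervalIntegral
open scoped NNReal Topology

variable {b d : ℕ}

/-! ### Digits -/

lemma count_digits_mul_pow_add {l a n : ℕ} (hd : 0 < d) (ha : a < b) (hn : n < b ^ l) :
    (Nat.digits b (a * b ^ l + n)).count d
      = (Nat.digits b n).count d + if a = d then 1 else 0 := by
  rcases Nat.eq_zero_or_pos a with rfl | ha0
  · simp [hd.ne]
  · have hb : 1 < b := by omega
    have hlen : (Nat.digits b n).length ≤ l := (Nat.digits_length_le_iff hb n).2 hn
    have happend := Nat.digits_append_zeroes_append_digits (k := l - (Nat.digits b n).length)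
      (n := n) hb ha0
    rw [Nat.add_sub_cancel' hlen, add_comm, mul_comm] at happend
    simp [← happend, Nat.digits_of_lt b a ha0.ne' ha, List.count_append, List.count_replicate,
      List.count_singleton, hd.ne]

lemma sum_range_mul {M : Type*} [AddCommMonoid M] (f : ℕ → M) (m n : ℕ) :
    ∑ i ∈ range (m * n), f i = ∑ a ∈ range m, ∑ r ∈ range n, f (a * n + r) := by
  induction m with
  | zero => simp
  | succ m ih => rw [sum_range_succ, ← ih, Nat.succ_mul, sum_range_add]

lemma sum_ite_eq_add_sub {M : Type*} [AddCommGroup M] {s : Finset ℕ} (hd : d ∈ s)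
    (f g : ℕ → M) :
    ∑ a ∈ s, (if a = d then g a else f a) = ∑ a ∈ s, f a - f d + g d := by
  rw [← add_sum_erase s f hd, ← add_sum_erase s _ hd, if_pos rfl,
    sum_congr rfl fun a ha => if_neg (ne_of_mem_erase ha)]
  abel

/-! ### The digit-counting measures -/

/-- The inverse branch `y ↦ (a + y) / b` of `y ↦ b * y mod 1`, which puts the digit `a` in front of
the base-`b` expansion of `y ∈ [0, 1)`. -/
noncomputable def prependDigit (b a : ℕ) (y : ℝ) : ℝ := (a + y) / b

/-- The part of `irwinMeasure b d K` carried by the expansions of length `l`. -/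
noncomputable def levelMeasure (b d K l : ℕ) : Measure ℝ :=
  ((b : ℝ≥0) ^ (l + 1))⁻¹ •
    ∑ n ∈ range (b ^ l) with (Nat.digits b n).count d + 1 = K, Measure.dirac ((n : ℝ) / b ^ l)

/-- The measure `∑ b⁻¹⁻ˡ δ(0.a₁⋯aₗ)` over all finite strings of base-`b` digits in which `d` occurs
exactly `K - 1` times; it vanishes for `K = 0`, and it has mass `1` for `K ≥ 1`. With
this index, the Irwin sum with `k` occurrences of `d` involves the measures with `K = k`
and `K = k + 1`. -/
noncomputable def irwinMeasure (b d K : ℕ) : Measure ℝ := Measure.sum (levelMeasure b d K)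

instance (K l : ℕ) : IsFiniteMeasure (levelMeasure b d K l) := by
  unfold levelMeasure; infer_instance

lemma integral_levelMeasure (K l : ℕ) (f : ℝ → ℝ) :
    ∫ y, f y ∂levelMeasure b d K l
      = (∑ n ∈ range (b ^ l), if (Nat.digits b n).count d + 1 = K then f (n / b ^ l) else 0)
        / b ^ (l + 1) := by
  rw [levelMeasure, integral_smul_nnreal_measure, integral_finsetSum_measure
    fun n _ => integrable_dirac (by simp), sum_filter, div_eq_inv_mul]
  simp [NNReal.smul_def]

lemma integral_levelMeasure_zero_right (K : ℕ) (f : ℝ → ℝ) :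
    ∫ y, f y ∂levelMeasure b d K 0 = if K = 1 then f 0 / b else 0 := by
  rw [integral_levelMeasure]
  simp [ite_div, eq_comm]

lemma levelMeasure_zero_index (l : ℕ) : levelMeasure b d 0 l = 0 := by
  simp [levelMeasure]

lemma irwinMeasure_zero : irwinMeasure b d 0 = 0 := by
  simp [irwinMeasure, levelMeasure_zero_index]

lemma integral_levelMeasure_succ_right (hd : 0 < d) (hdb : d < b) (K l : ℕ) (f : ℝ → ℝ) :
    ∫ y, f y ∂levelMeasure b d (K + 1) (l + 1)
      = (∑ a ∈ range b, ∫ y, f (prependDigit b a y) ∂levelMeasure b d (K + 1) l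
          - ∫ y, f (prependDigit b d y) ∂levelMeasure b d (K + 1) l
          + ∫ y, f (prependDigit b d y) ∂levelMeasure b d K l) / b := by
  have hb : (b : ℝ) ≠ 0 := Nat.cast_ne_zero.2 (by omega)
  have hblock : ∀ a ∈ range b,
      ∑ r ∈ range (b ^ l), (if (Nat.digits b (a * b ^ l + r)).count d + 1 = K + 1 then
          f ((a * b ^ l + r : ℕ) / b ^ (l + 1)) else 0)
        = b ^ (l + 1) * if a = d then ∫ y, f (prependDigit b a y) ∂levelMeasure b d K l
            else ∫ y, f (prependDigit b a y) ∂levelMeasure b d (K + 1) l := by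
    intro a ha
    rw [← apply_ite (fun K => ∫ y, f (prependDigit b a y) ∂levelMeasure b d K l),
      integral_levelMeasure, mul_div_cancel₀ _ (by positivity)]
    refine sum_congr rfl fun r hr => ?_
    have hpt : ((a * b ^ l + r : ℕ) : ℝ) / b ^ (l + 1) = prependDigit b a (r / b ^ l) := by
      rw [prependDigit]; push_cast; field_simp; ring
    rw [count_digits_mul_pow_add hd (mem_range.1 ha) (mem_range.1 hr), hpt]
    congr 1
    split_ifs <;> simp
  rw [integral_levelMeasure, pow_succ' b l, sum_range_mul, sum_congr rfl hblock, ← mul_sum,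
    sum_ite_eq_add_sub (mem_range.2 hdb), pow_succ _ (l + 1), mul_div_mul_left _ _ (by positivity)]

lemma sum_integral_one_levelMeasure_le (hd : 0 < d) (hdb : d < b) (K L : ℕ) :
    ∑ l ∈ range L, ∫ _, (1 : ℝ) ∂levelMeasure b d K l ≤ 1 := by
  have hb : (1 : ℝ) ≤ b := by exact_mod_cast hd.trans hdb
  rcases K with - | K
  · simp [levelMeasure_zero_index]
  induction L generalizing K with
  | zero => simp
  | succ L ih =>
    have hsucc : ∀ l, ∫ _, (1 : ℝ) ∂levelMeasure b d (K + 1) (l + 1)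
        = (1 - (b : ℝ)⁻¹) * (∫ _, (1 : ℝ) ∂levelMeasure b d (K + 1) l)
          + (b : ℝ)⁻¹ * ∫ _, (1 : ℝ) ∂levelMeasure b d K l := by
      intro l
      rw [integral_levelMeasure_succ_right hd hdb K l fun _ => 1, sum_const, card_range,
        nsmul_eq_mul]
      field_simp
    have hinv : (b : ℝ)⁻¹ ≤ 1 := inv_le_one_of_one_le₀ hb
    have hfirst := mul_le_of_le_one_right (sub_nonneg.2 hinv) (ih K)
    rw [sum_range_succ', sum_congr rfl fun l _ => hsucc l, sum_add_distrib, ← mul_sum, ← mul_sum,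
      integral_levelMeasure_zero_right]
    rcases K with - | K
    · simp only [levelMeasure_zero_index, integral_zero_measure, sum_const_zero, mul_zero,
        zero_add, if_true, one_div]
      simp only [zero_add] at hfirst
      linarith
    · have hsecond := mul_le_of_le_one_right (inv_nonneg.2 (by linarith : (0 : ℝ) ≤ b)) (ih K)
      rw [if_neg (by omega)]
      linarith

lemma isFiniteMeasure_irwinMeasure (hd : 0 < d) (hdb : d < b) (K : ℕ) :
    IsFiniteMeasure (irwinMeasure b d K) := by
  have hint : Integrable (fun _ => (1 : ℝ)) (irwinMeasure b d K) := by
    refine integrable_sum_measure (fun l => integrable_const 1) ?_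
    simp only [norm_one]
    exact summable_of_sum_range_le (fun l => integral_nonneg fun _ => zero_le_one)
      (sum_integral_one_levelMeasure_le hd hdb K)
  exact (integrable_const_iff_isFiniteMeasure one_ne_zero).1 hint

lemma ae_irwinMeasure_mem_Icc (K : ℕ) : ∀ᵐ y ∂irwinMeasure b d K, y ∈ Icc (0 : ℝ) 1 := by
  refine Measure.ae_sum_iff.2 fun l => ?_
  refine Measure.ae_smul_measure ?_ _
  rw [ae_iff, Measure.finsetSum_apply]
  refine sum_eq_zero fun n hn => ?_
  have hn' : (n : ℝ) ≤ b ^ l := by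
    exact_mod_cast (mem_range.1 (mem_of_mem_filter n hn)).le
  have hmem : (n : ℝ) / b ^ l ∈ Icc (0 : ℝ) 1 :=
    ⟨by positivity, div_le_one_of_le₀ hn' (by positivity)⟩
  rw [Measure.dirac_apply' _ (by measurability)]
  simpa using hmem

lemma integrable_irwinMeasure (hd : 0 < d) (hdb : d < b) (K : ℕ) {f : ℝ → ℝ}
    (hf : ContinuousOn f (Icc 0 1)) : Integrable f (irwinMeasure b d K) := by
  have := isFiniteMeasure_irwinMeasure hd hdb K
  rw [← Measure.restrict_eq_self_of_ae_mem (ae_irwinMeasure_mem_Icc (b := b) (d := d) K)]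
  exact hf.integrableOn_Icc

lemma prependDigit_mem_Icc {a : ℕ} (ha : a < b) {y : ℝ} (hy : y ∈ Icc (0 : ℝ) 1) :
    prependDigit b a y ∈ Icc (0 : ℝ) 1 := by
  have hab : (a : ℝ) + 1 ≤ b := by exact_mod_cast ha
  have hb : (0 : ℝ) < b := by exact_mod_cast ha.pos
  exact ⟨div_nonneg (add_nonneg a.cast_nonneg hy.1) hb.le,
    (div_le_one hb).2 (by linarith [hy.2])⟩

lemma continuous_prependDigit (b a : ℕ) : Continuous (prependDigit b a) := by
  unfold prependDigit; fun_prop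

lemma continuousOn_comp_prependDigit {a : ℕ} (ha : a < b) {f : ℝ → ℝ}
    (hf : ContinuousOn f (Icc 0 1)) : ContinuousOn (fun y => f (prependDigit b a y)) (Icc 0 1) :=
  hf.comp (continuous_prependDigit b a).continuousOn fun _ hy => prependDigit_mem_Icc ha hy

lemma hasSum_integral_levelMeasure (hd : 0 < d) (hdb : d < b) (K : ℕ) {f : ℝ → ℝ}
    (hf : ContinuousOn f (Icc 0 1)) :
    HasSum (fun l => ∫ y, f y ∂levelMeasure b d K l) (∫ y, f y ∂irwinMeasure b d K) :=
  hasSum_integral_measure (integrable_irwinMeasure hd hdb K hf)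

/-- Splitting a string of digits into its first digit and the rest. -/
lemma integral_irwinMeasure_succ (hd : 0 < d) (hdb : d < b) (K : ℕ) {f : ℝ → ℝ}
    (hf : ContinuousOn f (Icc 0 1)) :
    ∫ y, f y ∂irwinMeasure b d (K + 1)
      = (if K = 0 then f 0 / b else 0)
        + (∑ a ∈ range b, ∫ y, f (prependDigit b a y) ∂irwinMeasure b d (K + 1)
            - ∫ y, f (prependDigit b d y) ∂irwinMeasure b d (K + 1)
            + ∫ y, f (prependDigit b d y) ∂irwinMeasure b d K) / b := by
  have hcomp : ∀ a < b, ∀ K, HasSum (fun l => ∫ y, f (prependDigit b a y) ∂levelMeasure b d K l)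
      (∫ y, f (prependDigit b a y) ∂irwinMeasure b d K) := fun a ha K =>
    hasSum_integral_levelMeasure hd hdb K (continuousOn_comp_prependDigit ha hf)
  have htail : HasSum (fun l => ∫ y, f y ∂levelMeasure b d (K + 1) (l + 1))
      ((∑ a ∈ range b, ∫ y, f (prependDigit b a y) ∂irwinMeasure b d (K + 1)
        - ∫ y, f (prependDigit b d y) ∂irwinMeasure b d (K + 1)
        + ∫ y, f (prependDigit b d y) ∂irwinMeasure b d K) / b) := by
    simp only [integral_levelMeasure_succ_right hd hdb]
    exact (((hasSum_sum fun a ha => hcomp a (mem_range.1 ha) (K + 1)).sub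
      (hcomp d hdb (K + 1))).add (hcomp d hdb K)).div_const (b : ℝ)
  rw [(hasSum_integral_levelMeasure hd hdb (K + 1) hf).unique htail.zero_add,
    integral_levelMeasure_zero_right]
  simp only [Nat.add_eq_right]

lemma integral_irwinMeasure_one (hd : 0 < d) (hdb : d < b) (K : ℕ) :
    ∫ _, (1 : ℝ) ∂irwinMeasure b d (K + 1) = 1 := by
  have hb : (b : ℝ) ≠ 0 := Nat.cast_ne_zero.2 (by omega)
  have hrec : ∀ K, ∫ _, (1 : ℝ) ∂irwinMeasure b d (K + 1)
      = (if K = 0 then 1 else 0) + ∫ _, (1 : ℝ) ∂irwinMeasure b d K := by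
    intro K
    have h := integral_irwinMeasure_succ hd hdb K (continuousOn_const (c := (1 : ℝ)))
    rw [sum_const, card_range, nsmul_eq_mul] at h
    split_ifs at h ⊢ <;> field_simp at h <;> linarith
  induction K with
  | zero => rw [hrec, irwinMeasure_zero]; simp
  | succ K ih => rw [hrec, ih]; simp

/-! ### Irwin sums as integrals -/

/-- The integers with `l + 1` digits are sorted by their leading digit. -/
lemma sum_range_pow_irwin (hd : 0 < d) (hdb : d < b) (k L : ℕ) :
    ∑ m ∈ range (b ^ L), (if 0 < m ∧ (Nat.digits b m).count d = k then (1 : ℝ) / m else 0)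
      = ∑ l ∈ range L, b * (∑ a ∈ Finset.Ico 1 b, ∫ y, 1 / (a + y) ∂levelMeasure b d (k + 1) l
          - ∫ y, 1 / (d + y) ∂levelMeasure b d (k + 1) l
          + ∫ y, 1 / (d + y) ∂levelMeasure b d k l) := by
  have hb : (b : ℝ) ≠ 0 := Nat.cast_ne_zero.2 (by omega)
  have hblock : ∀ l, ∀ a ∈ Finset.Ico 1 b,
      ∑ r ∈ range (b ^ l), (if 0 < a * b ^ l + r ∧ (Nat.digits b (a * b ^ l + r)).count d = k then
          (1 : ℝ) / (a * b ^ l + r : ℕ) else 0)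
        = b * if a = d then ∫ y, 1 / (a + y) ∂levelMeasure b d k l
            else ∫ y, 1 / (a + y) ∂levelMeasure b d (k + 1) l := by
    intro l a ha
    obtain ⟨ha1, hab⟩ := Finset.mem_Ico.1 ha
    rw [← apply_ite (fun K => ∫ y, 1 / (a + y) ∂levelMeasure b d K l),
      integral_levelMeasure, pow_succ', ← mul_div_assoc, mul_div_mul_left _ _ hb, sum_div]
    refine sum_congr rfl fun r hr => ?_
    have hpos : 0 < a * b ^ l + r :=
      Nat.add_pos_left (Nat.mul_pos ha1 (Nat.pow_pos (by omega))) r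
    have hpt : (1 : ℝ) / (a * b ^ l + r : ℕ) = 1 / (a + r / b ^ l) / b ^ l := by
      push_cast; field_simp
    rw [count_digits_mul_pow_add hd hab (mem_range.1 hr), hpt, ite_div, zero_div]
    congr 1
    split_ifs <;> simp [hpos]
  induction L with
  | zero => simp
  | succ L ih =>
    rw [sum_range_succ, ← ih, pow_succ', sum_range_mul, range_eq_Ico,
      sum_eq_sum_Ico_succ_bot (by omega)]
    simp only [zero_mul, zero_add]
    rw [sum_congr rfl (hblock L), ← mul_sum,
      sum_ite_eq_add_sub (Finset.mem_Ico.2 ⟨hd, hdb⟩)]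

lemma continuousOn_one_div_add {A : ℝ} (hA : 0 < A) :
    ContinuousOn (fun y : ℝ => 1 / (A + y)) (Icc 0 1) :=
  continuousOn_const.div (by fun_prop) fun y hy => by linarith [hy.1]

lemma irwinSum_eq_integral (hd : 0 < d) (hdb : d < b) (k : ℕ) :
    irwinSum b d k = b * (∑ a ∈ Finset.Ico 1 b, ∫ y, 1 / (a + y) ∂irwinMeasure b d (k + 1)
      - ∫ y, 1 / (d + y) ∂irwinMeasure b d (k + 1) + ∫ y, 1 / (d + y) ∂irwinMeasure b d k) := by
  set F : ℕ → ℝ := fun m => if 0 < m ∧ (Nat.digits b m).count d = k then (1 : ℝ) / m else 0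
  have hF : ∀ m, 0 ≤ F m := fun m => by positivity
  have hlevel : ∀ a : ℕ, 0 < a → ∀ K, HasSum (fun l => ∫ y, 1 / (a + y) ∂levelMeasure b d K l)
      (∫ y, 1 / (a + y) ∂irwinMeasure b d K) := fun a ha K =>
    hasSum_integral_levelMeasure hd hdb K (continuousOn_one_div_add (Nat.cast_pos.2 ha))
  have hsum := (((hasSum_sum fun a (ha : a ∈ Finset.Ico 1 b) =>
    hlevel a (Finset.mem_Ico.1 ha).1 (k + 1)).sub
      (hlevel d hd (k + 1))).add (hlevel d hd k)).mul_left (b : ℝ)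
  have htendsto := hsum.tendsto_sum_nat
  simp only [← sum_range_pow_irwin hd hdb] at htendsto
  have hmono : Monotone fun n => ∑ m ∈ range n, F m := fun n n' hn =>
    sum_le_sum_of_subset_of_nonneg (range_mono hn) fun m _ _ => hF m
  exact ((hasSum_iff_tendsto_nat_of_nonneg hF _).2 <|
    (tendsto_iff_tendsto_subseq_of_monotone hmono
      (tendsto_pow_atTop_atTop_of_one_lt (by omega : 1 < b))).2 htendsto).tsum_eq

/-! ### Discrepancies -/

/-- The normalised deviation of `irwinMeasure b d K` from Lebesgue measure on `[0, 1]`. The factor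
`b ^ (2 * K)` makes it of order one on Lipschitz functions, uniformly in `b`. -/
noncomputable def discrepancy (b d K : ℕ) (f : ℝ → ℝ) : ℝ :=
  b ^ (2 * K) * (∫ y, f y ∂irwinMeasure b d K - ∫ y in (0 : ℝ)..1, f y)

lemma discrepancy_zero (f : ℝ → ℝ) : discrepancy b d 0 f = -∫ y in (0 : ℝ)..1, f y := by
  simp [discrepancy, irwinMeasure_zero]

lemma discrepancy_congr (K : ℕ) {f g : ℝ → ℝ} (hfg : EqOn f g (Icc 0 1)) :
    discrepancy b d K f = discrepancy b d K g := by
  rw [discrepancy, discrepancy, integral_congr (by rwa [Set.uIcc_of_le zero_le_one]),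
    integral_congr_ae ((ae_irwinMeasure_mem_Icc K).mono fun y hy => hfg hy)]

lemma discrepancy_const_mul (K : ℕ) (r : ℝ) (f : ℝ → ℝ) :
    discrepancy b d K (fun y => r * f y) = r * discrepancy b d K f := by
  simp only [discrepancy, MeasureTheory.integral_const_mul, intervalIntegral.integral_const_mul]
  ring

lemma discrepancy_add (hd : 0 < d) (hdb : d < b) (K : ℕ) {f g : ℝ → ℝ}
    (hf : ContinuousOn f (Icc 0 1)) (hg : ContinuousOn g (Icc 0 1)) :
    discrepancy b d K (fun y => f y + g y) = discrepancy b d K f + discrepancy b d K g := by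
  rw [discrepancy, MeasureTheory.integral_add (integrable_irwinMeasure hd hdb K hf)
    (integrable_irwinMeasure hd hdb K hg), intervalIntegral.integral_add
    (hf.intervalIntegrable_of_Icc zero_le_one) (hg.intervalIntegrable_of_Icc zero_le_one),
    discrepancy, discrepancy]
  ring

lemma discrepancy_sum (hd : 0 < d) (hdb : d < b) (K : ℕ) {ι : Type*} (s : Finset ι)
    {f : ι → ℝ → ℝ} (hf : ∀ i ∈ s, ContinuousOn (f i) (Icc 0 1)) :
    discrepancy b d K (fun y => ∑ i ∈ s, f i y) = ∑ i ∈ s, discrepancy b d K (f i) := by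
  rw [discrepancy, integral_finsetSum s fun i hi => integrable_irwinMeasure hd hdb K (hf i hi),
    intervalIntegral.integral_finsetSum fun i hi =>
      (hf i hi).intervalIntegrable_of_Icc zero_le_one, ← sum_sub_distrib, mul_sum]
  rfl

lemma discrepancy_const (hd : 0 < d) (hdb : d < b) (K : ℕ) (r : ℝ) :
    discrepancy b d (K + 1) (fun _ => r) = 0 := by
  have hone : discrepancy b d (K + 1) (fun _ => 1) = 0 := by
    rw [discrepancy, integral_irwinMeasure_one hd hdb]; simp
  simpa [hone] using discrepancy_const_mul (b := b) (d := d) (K + 1) r fun _ => 1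

lemma integral_zero_one_eq_sum_prependDigit (hb : 0 < b) {f : ℝ → ℝ}
    (hf : ContinuousOn f (Icc 0 1)) :
    ∫ y in (0 : ℝ)..1, f y
      = (∑ a ∈ range b, ∫ y in (0 : ℝ)..1, f (prependDigit b a y)) / b := by
  have hb' : (b : ℝ) ≠ 0 := Nat.cast_ne_zero.2 hb.ne'
  have hpiece : ∀ a ∈ range b, ∫ y in (0 : ℝ)..1, f (prependDigit b a y)
      = b * ∫ y in (a : ℝ) / b..((a + 1 : ℕ) : ℝ) / b, f y := by
    intro a _
    have h := integral_comp_add_div (a := 0) (b := 1) f hb' ((a : ℝ) / b)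
    simpa [prependDigit, add_div] using h
  have hint : ∀ a < b, IntervalIntegrable f volume ((a : ℝ) / b) (((a + 1 : ℕ) : ℝ) / b) := by
    intro a ha
    have ha' : ((a + 1 : ℕ) : ℝ) ≤ b := by exact_mod_cast ha
    refine (hf.mono (Icc_subset_Icc (by positivity)
      (div_le_one_of_le₀ ha' b.cast_nonneg))).intervalIntegrable_of_Icc ?_
    gcongr; simp
  rw [sum_congr rfl hpiece, ← mul_sum,
    sum_integral_adjacent_intervals (a := fun a : ℕ => (a : ℝ) / b) hint]
  simp [hb']

lemma discrepancy_succ (hd : 0 < d) (hdb : d < b) (K : ℕ) {f : ℝ → ℝ}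
    (hf : ContinuousOn f (Icc 0 1)) :
    discrepancy b d (K + 1) f
      = (if K = 0 then b * f 0 else 0)
        + (∑ a ∈ range b, discrepancy b d (K + 1) (fun y => f (prependDigit b a y))
            - discrepancy b d (K + 1) (fun y => f (prependDigit b d y))) / b
        + b * discrepancy b d K (fun y => f (prependDigit b d y)) := by
  have hb : (b : ℝ) ≠ 0 := Nat.cast_ne_zero.2 (by omega)
  simp only [discrepancy]
  rw [integral_irwinMeasure_succ hd hdb K hf,
    integral_zero_one_eq_sum_prependDigit (hd.trans hdb) hf, ← mul_sum, sum_sub_distrib,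
    mul_add 2 K 1, pow_add]
  split_ifs with hK
  · subst hK; field_simp; ring
  · field_simp; ring

lemma lipschitzOnWith_comp_prependDigit {a : ℕ} (ha : a < b) {f : ℝ → ℝ} {L : ℝ≥0}
    (hf : LipschitzOnWith L f (Icc 0 1)) :
    LipschitzOnWith (L * (b : ℝ≥0)⁻¹) (fun y => f (prependDigit b a y)) (Icc 0 1) := by
  refine hf.comp (LipschitzOnWith.of_dist_le_mul fun x _ y _ => ?_)
    fun y hy => prependDigit_mem_Icc ha hy
  rw [Real.dist_eq, Real.dist_eq, prependDigit, prependDigit, ← sub_div, add_sub_add_left_eq_sub,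
    abs_div, Nat.abs_cast, div_eq_inv_mul]
  simp

lemma abs_discrepancy_le_crude (hd : 0 < d) (hdb : d < b) (K : ℕ) {f : ℝ → ℝ} {L : ℝ≥0}
    (hf : LipschitzOnWith L f (Icc 0 1)) :
    |discrepancy b d (K + 1) f| ≤ b ^ (2 * (K + 1)) * 2 * L := by
  have := isFiniteMeasure_irwinMeasure hd hdb (K + 1)
  have hmass : (irwinMeasure b d (K + 1)).real univ = 1 := by
    simpa using integral_irwinMeasure_one hd hdb K
  have hshift : discrepancy b d (K + 1) f = discrepancy b d (K + 1) fun y => f y + -f 0 := by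
    rw [discrepancy_add hd hdb _ hf.continuousOn continuousOn_const, discrepancy_const hd hdb,
      add_zero]
  have hbound : ∀ y ∈ Icc (0 : ℝ) 1, ‖f y + -f 0‖ ≤ L := by
    intro y hy
    refine (hf.dist_le_mul y hy 0 (left_mem_Icc.2 zero_le_one)).trans ?_
    rw [Real.dist_eq, sub_zero, abs_of_nonneg hy.1]
    exact mul_le_of_le_one_right L.2 hy.2
  have hirwin := norm_integral_le_of_norm_le_const
    ((ae_irwinMeasure_mem_Icc (b := b) (d := d) (K + 1)).mono hbound)
  have hlebesgue : ‖∫ y in (0 : ℝ)..1, (f y + -f 0)‖ ≤ L * |1 - 0| :=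
    intervalIntegral.norm_integral_le_of_norm_le_const fun y hy =>
      hbound y (Ioc_subset_Icc_self (by rwa [uIoc_of_le zero_le_one] at hy))
  rw [hmass, mul_one, Real.norm_eq_abs] at hirwin
  rw [sub_zero, abs_one, mul_one, Real.norm_eq_abs] at hlebesgue
  rw [hshift, discrepancy, abs_mul, abs_of_nonneg (by positivity), mul_assoc]
  gcongr
  exact (abs_sub _ _).trans (by linarith)

/-- The part of the recursion for `discrepancy b d (K + 1)` that involves only
`discrepancy b d K`. -/
noncomputable def discrepancySource (b d K : ℕ) (f : ℝ → ℝ) : ℝ :=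
  (if K = 0 then b * f 0 else 0) + b * discrepancy b d K (fun y => f (prependDigit b d y))

/-- The recursion of `discrepancy_succ` contracts: `y ↦ f ((a + y) / b)` is `L / b`-Lipschitz, and
fewer than `b` such terms are averaged with weights `1 / b`. -/
lemma abs_discrepancy_le_add_half (hd : 0 < d) (hdb : d < b) {K : ℕ} {C : ℝ}
    (hC : ∀ {f : ℝ → ℝ} {L : ℝ≥0}, LipschitzOnWith L f (Icc 0 1) →
      |discrepancy b d (K + 1) f| ≤ C * L)
    {f : ℝ → ℝ} {L : ℝ≥0} (hf : LipschitzOnWith L f (Icc 0 1)) :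
    |discrepancy b d (K + 1) f| ≤ |discrepancySource b d K f| + C / 2 * L := by
  have hb : (2 : ℝ) ≤ b := by exact_mod_cast (by omega : 2 ≤ b)
  have hC0 : 0 ≤ C := by
    have h := (abs_nonneg _).trans (hC (f := fun _ => 0) (L := 1)
      (LipschitzWith.const' 0).lipschitzOnWith)
    simpa using h
  have hrest : |∑ a ∈ (range b).erase d,
      discrepancy b d (K + 1) fun y => f (prependDigit b a y)| ≤ b * (C * (L * (b : ℝ)⁻¹)) := by
    refine (abs_sum_le_sum_abs _ _).trans ((sum_le_card_nsmul _ _ (C * (L * (b : ℝ)⁻¹))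
      fun a ha => ?_).trans ?_)
    · simpa using hC (lipschitzOnWith_comp_prependDigit (mem_range.1 (mem_of_mem_erase ha)) hf)
    · rw [nsmul_eq_mul]
      gcongr
      exact_mod_cast (card_erase_le).trans (card_range b).le
  rw [discrepancy_succ hd hdb K hf.continuousOn, ← sum_erase_eq_sub (mem_range.2 hdb),
    add_right_comm, ← discrepancySource]
  refine (abs_add_le _ _).trans (add_le_add_right ?_ _)
  rw [abs_div, Nat.abs_cast, div_le_iff₀ (by linarith)]
  refine hrest.trans ?_
  have hcancel : (b : ℝ) * (C * (L * (b : ℝ)⁻¹)) = C * L := by field_simp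
  have hCL : 0 ≤ C * L := mul_nonneg hC0 L.2
  rw [hcancel]
  nlinarith

lemma abs_discrepancy_le_of_source (hd : 0 < d) (hdb : d < b) {K : ℕ} {s : ℝ}
    (hs : ∀ {f : ℝ → ℝ} {L : ℝ≥0}, LipschitzOnWith L f (Icc 0 1) →
      |discrepancySource b d K f| ≤ s * L)
    {f : ℝ → ℝ} {L : ℝ≥0} (hf : LipschitzOnWith L f (Icc 0 1)) :
    |discrepancy b d (K + 1) f| ≤ 2 * s * L := by
  set C : ℝ := b ^ (2 * (K + 1)) * 2
  have hiter : ∀ n : ℕ, ∀ {f : ℝ → ℝ} {L : ℝ≥0}, LipschitzOnWith L f (Icc 0 1) →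
      |discrepancy b d (K + 1) f| ≤ (2 * s + (C - 2 * s) * (1 / 2) ^ n) * L := by
    intro n
    induction n with
    | zero => intro f L hf; simpa [C] using abs_discrepancy_le_crude hd hdb K hf
    | succ n ih =>
      intro f L hf
      refine (abs_discrepancy_le_add_half hd hdb ih hf).trans ((add_le_add_left (hs hf) _).trans ?_)
      rw [← add_mul, pow_succ]
      exact le_of_eq (by ring)
  have hlim : Tendsto (fun n : ℕ => (2 * s + (C - 2 * s) * (1 / 2) ^ n) * L) atTop
      (𝓝 ((2 * s + (C - 2 * s) * 0) * L)) :=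
    (((tendsto_pow_atTop_nhds_zero_of_lt_one (by norm_num) (by norm_num)).const_mul _).const_add
      _).mul_const _
  rw [mul_zero, add_zero] at hlim
  exact ge_of_tendsto' hlim fun n => hiter n hf

/-- At `K = 0` neither term of the source is small, but the point mass at `0` and the integral
nearly cancel. -/
lemma abs_discrepancySource_zero_le (hdb : d < b) {f : ℝ → ℝ} {L : ℝ≥0}
    (hf : LipschitzOnWith L f (Icc 0 1)) : |discrepancySource b d 0 f| ≤ (d + 1) * L := by
  have hb : (0 : ℝ) < b := by exact_mod_cast hdb.pos
  have hcont := continuousOn_comp_prependDigit hdb hf.continuousOn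
  have hint : discrepancySource b d 0 f
      = b * ∫ y in (0 : ℝ)..1, (f 0 - f (prependDigit b d y)) := by
    rw [discrepancySource, discrepancy_zero, intervalIntegral.integral_sub
      intervalIntegrable_const (hcont.intervalIntegrable_of_Icc zero_le_one)]
    simp; ring
  have hbound : ∀ y ∈ uIoc (0 : ℝ) 1, ‖f 0 - f (prependDigit b d y)‖ ≤ (d + 1) * L / b := by
    intro y hy
    rw [uIoc_of_le zero_le_one] at hy
    have hmem := prependDigit_mem_Icc hdb (Ioc_subset_Icc_self hy)
    refine (hf.dist_le_mul 0 (left_mem_Icc.2 zero_le_one) _ hmem).trans ?_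
    rw [Real.dist_eq, zero_sub, abs_neg, abs_of_nonneg hmem.1, prependDigit, mul_comm (L : ℝ),
      div_mul_eq_mul_div]
    gcongr
    exact hy.2
  have h := intervalIntegral.norm_integral_le_of_norm_le_const hbound
  rw [sub_zero, abs_one, mul_one, Real.norm_eq_abs, le_div_iff₀ hb] at h
  rwa [hint, abs_mul, Nat.abs_cast, mul_comm]

lemma abs_discrepancy_le (hd : 0 < d) (hdb : d < b) (K : ℕ) {f : ℝ → ℝ} {L : ℝ≥0}
    (hf : LipschitzOnWith L f (Icc 0 1)) :
    |discrepancy b d (K + 1) f| ≤ 2 ^ (K + 1) * (d + 1) * L := by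
  induction K generalizing f L with
  | zero => simpa using abs_discrepancy_le_of_source hd hdb (abs_discrepancySource_zero_le hdb) hf
  | succ K ih =>
    have hsource : ∀ {f : ℝ → ℝ} {L : ℝ≥0}, LipschitzOnWith L f (Icc 0 1) →
        |discrepancySource b d (K + 1) f| ≤ 2 ^ (K + 1) * (d + 1) * L := by
      intro f L hf
      have hb : (b : ℝ) ≠ 0 := Nat.cast_ne_zero.2 (by omega)
      rw [discrepancySource, if_neg K.succ_ne_zero, zero_add, abs_mul, Nat.abs_cast]
      calc (b : ℝ) * |discrepancy b d (K + 1) fun y => f (prependDigit b d y)|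
          ≤ b * (2 ^ (K + 1) * (d + 1) * (L * (b : ℝ≥0)⁻¹ : ℝ≥0)) := by
            gcongr; exact ih (lipschitzOnWith_comp_prependDigit hdb hf)
        _ = 2 ^ (K + 1) * (d + 1) * L := by push_cast; field_simp
    calc |discrepancy b d (K + 1 + 1) f| ≤ 2 * (2 ^ (K + 1) * (d + 1)) * L :=
          abs_discrepancy_le_of_source hd hdb hsource hf
      _ = 2 ^ (K + 1 + 1) * (d + 1) * L := by ring

lemma pow_mul_irwinSum_sub_mul_log (hd : 0 < d) (hdb : d < b) (k : ℕ) :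
    (b : ℝ) ^ (2 * k) * (irwinSum b d k - b * Real.log b)
      = ((∑ a ∈ Finset.Ico 1 b, discrepancy b d (k + 1) (fun y => 1 / (a + y))
          - discrepancy b d (k + 1) (fun y => 1 / (d + y))) / b
        + b * discrepancy b d k (fun y => 1 / (d + y))) := by
  have hb : (b : ℝ) ≠ 0 := Nat.cast_ne_zero.2 (by omega)
  have hpiece : ∀ a ∈ Finset.Ico 1 b, ∫ y in (0 : ℝ)..1, 1 / (a + y)
      = Real.log (a + 1 : ℕ) - Real.log a := by
    intro a ha
    have ha0 : (0 : ℝ) < a := Nat.cast_pos.2 (Finset.mem_Ico.1 ha).1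
    rw [integral_comp_add_left (fun y : ℝ => 1 / y), integral_one_div_of_pos (by linarith)
      (by linarith), Real.log_div (by linarith) (by linarith)]
    simp
  have hlog : Real.log b = ∑ a ∈ Finset.Ico 1 b, ∫ y in (0 : ℝ)..1, 1 / (a + y) := by
    rw [sum_congr rfl hpiece, sum_Ico_sub (fun n : ℕ => Real.log n) (by omega)]
    simp
  rw [irwinSum_eq_integral hd hdb, hlog]
  simp only [discrepancy]
  rw [← mul_sum, sum_sub_distrib, mul_add 2 k 1, pow_add]
  field_simp
  ring

/-! ### Expansions in powers of `1 / b` -/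

/-- `HasOrder n f` states that `f b = O(b⁻ⁿ)` as `b → ∞`. -/
def HasOrder (n : ℕ) (f : ℕ → ℝ) : Prop := f =O[atTop] fun b : ℕ => (b : ℝ)⁻¹ ^ n

namespace HasOrder

variable {m n : ℕ} {f g : ℕ → ℝ}

lemma of_abs_le {C : ℝ} (h : ∀ᶠ b : ℕ in atTop, |f b| ≤ C * (b : ℝ)⁻¹ ^ n) : HasOrder n f :=
  IsBigO.of_bound C (h.mono fun b hb => by
    rwa [Real.norm_eq_abs, Real.norm_of_nonneg (by positivity)])

lemma congr' (hf : HasOrder n f) (hfg : f =ᶠ[atTop] g) : HasOrder n g :=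
  IsBigO.congr' hf hfg EventuallyEq.rfl

lemma const (r : ℝ) : HasOrder 0 fun _ => r := by
  simpa [HasOrder] using isBigO_const_const r (one_ne_zero (α := ℝ)) atTop

lemma inv_pow (n : ℕ) : HasOrder n fun b => (b : ℝ)⁻¹ ^ n := isBigO_refl _ _

lemma add (hf : HasOrder n f) (hg : HasOrder n g) : HasOrder n fun b => f b + g b :=
  IsBigO.add hf hg

lemma sub (hf : HasOrder n f) (hg : HasOrder n g) : HasOrder n fun b => f b - g b :=
  IsBigO.sub hf hg

lemma sum {ι : Type*} {s : Finset ι} {F : ι → ℕ → ℝ} (hF : ∀ i ∈ s, HasOrder n (F i)) :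
    HasOrder n fun b => ∑ i ∈ s, F i b :=
  IsBigO.fun_sum hF

lemma mul (hf : HasOrder m f) (hg : HasOrder n g) : HasOrder (m + n) fun b => f b * g b := by
  simpa only [HasOrder, pow_add] using IsBigO.mul hf hg

lemma const_mul (r : ℝ) (hf : HasOrder n f) : HasOrder n fun b => r * f b :=
  IsBigO.const_mul_left hf r

lemma inv_pow_mul (m : ℕ) (hf : HasOrder n f) : HasOrder (m + n) fun b => (b : ℝ)⁻¹ ^ m * f b :=
  (inv_pow m).mul hf

lemma natCast_mul (hf : HasOrder (n + 1) f) : HasOrder n fun b => b * f b := by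
  refine (IsBigO.mul (isBigO_refl (fun b : ℕ => (b : ℝ)) atTop) hf).congr' .rfl ?_
  filter_upwards [eventually_ne_atTop 0] with b hb
  have hb0 : (b : ℝ) ≠ 0 := Nat.cast_ne_zero.2 hb
  rw [pow_succ']
  exact mul_inv_cancel_left₀ hb0 _

lemma mono (hmn : m ≤ n) (hf : HasOrder n f) : HasOrder m f := by
  refine hf.trans (of_abs_le (C := 1) ?_)
  filter_upwards [eventually_ge_atTop 1] with b hb
  have hinv : (b : ℝ)⁻¹ ≤ 1 := inv_le_one_of_one_le₀ (by exact_mod_cast hb)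
  rw [one_mul, abs_of_nonneg (by positivity)]
  exact pow_le_pow_of_le_one (by positivity) hinv hmn

end HasOrder

/-- `HasCubicExpansion f a₀ a₁ a₂ a₃` states that `f b = a₀ + a₁/b + a₂/b² + a₃/b³ + O(b⁻⁴)`
as `b → ∞`. -/
def HasCubicExpansion (f : ℕ → ℝ) (a₀ a₁ a₂ a₃ : ℝ) : Prop :=
  HasOrder 4 fun b =>
    f b - (a₀ + a₁ * (b : ℝ)⁻¹ + a₂ * (b : ℝ)⁻¹ ^ 2 + a₃ * (b : ℝ)⁻¹ ^ 3)

lemma HasOrder.hasCubicExpansion {f : ℕ → ℝ} (hf : HasOrder 4 f) :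
    HasCubicExpansion f 0 0 0 0 := by
  simpa [HasCubicExpansion] using hf

lemma HasOrder.hasCubicExpansion_inv_sq_mul {f : ℕ → ℝ} {a₀ a₁ : ℝ}
    (hf : HasOrder 2 fun b => f b - (a₀ + a₁ * (b : ℝ)⁻¹)) :
    HasCubicExpansion (fun b => (b : ℝ)⁻¹ ^ 2 * f b) 0 0 a₀ a₁ :=
  (hf.inv_pow_mul 2).congr' (.of_forall fun b => by ring)

namespace HasCubicExpansion

variable {f g : ℕ → ℝ} {a₀ a₁ a₂ a₃ b₀ b₁ b₂ b₃ : ℝ}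

lemma congr' (hf : HasCubicExpansion f a₀ a₁ a₂ a₃) (hfg : f =ᶠ[atTop] g) :
    HasCubicExpansion g a₀ a₁ a₂ a₃ :=
  HasOrder.congr' hf (hfg.mono fun b hb => by simp only [hb])

lemma polynomial (a₀ a₁ a₂ a₃ : ℝ) : HasCubicExpansion
    (fun b => a₀ + a₁ * (b : ℝ)⁻¹ + a₂ * (b : ℝ)⁻¹ ^ 2 + a₃ * (b : ℝ)⁻¹ ^ 3) a₀ a₁ a₂ a₃ := by
  simpa [HasCubicExpansion] using (HasOrder.const 0).inv_pow_mul 4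

lemma inv_natCast : HasCubicExpansion (fun b => (b : ℝ)⁻¹) 0 1 0 0 := by
  simpa using polynomial 0 1 0 0

lemma add (hf : HasCubicExpansion f a₀ a₁ a₂ a₃) (hg : HasCubicExpansion g b₀ b₁ b₂ b₃) :
    HasCubicExpansion (fun b => f b + g b) (a₀ + b₀) (a₁ + b₁) (a₂ + b₂) (a₃ + b₃) :=
  (HasOrder.add hf hg).congr' (.of_forall fun b => by ring)

lemma const_mul (r : ℝ) (hf : HasCubicExpansion f a₀ a₁ a₂ a₃) :
    HasCubicExpansion (fun b => r * f b) (r * a₀) (r * a₁) (r * a₂) (r * a₃) :=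
  (HasOrder.const_mul r hf).congr' (.of_forall fun b => by ring)

lemma sub (hf : HasCubicExpansion f a₀ a₁ a₂ a₃) (hg : HasCubicExpansion g b₀ b₁ b₂ b₃) :
    HasCubicExpansion (fun b => f b - g b) (a₀ - b₀) (a₁ - b₁) (a₂ - b₂) (a₃ - b₃) :=
  (HasOrder.sub hf hg).congr' (.of_forall fun b => by ring)

lemma hasOrder_sub_linear (hf : HasCubicExpansion f a₀ a₁ a₂ a₃) :
    HasOrder 2 fun b => f b - (a₀ + a₁ * (b : ℝ)⁻¹) :=
  ((HasOrder.mono (by norm_num) hf).add (((HasOrder.inv_pow 2).const_mul a₂).add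
    (((HasOrder.inv_pow 3).const_mul a₃).mono (by norm_num)))).congr'
      (.of_forall fun b => by ring)

lemma hasOrder_sub_const (hf : HasCubicExpansion f a₀ a₁ a₂ a₃) :
    HasOrder 1 fun b => f b - a₀ :=
  ((hf.hasOrder_sub_linear.mono (by norm_num)).add ((HasOrder.inv_pow 1).const_mul a₁)).congr'
    (.of_forall fun b => by ring)

lemma hasOrder_zero (hf : HasCubicExpansion f a₀ a₁ a₂ a₃) : HasOrder 0 f :=
  ((hf.hasOrder_sub_const.mono (by norm_num)).add (HasOrder.const a₀)).congr'
    (.of_forall fun b => by ring)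

lemma mul (hf : HasCubicExpansion f a₀ a₁ a₂ a₃) (hg : HasCubicExpansion g b₀ b₁ b₂ b₃) :
    HasCubicExpansion (fun b => f b * g b) (a₀ * b₀) (a₀ * b₁ + a₁ * b₀)
      (a₀ * b₂ + a₁ * b₁ + a₂ * b₀) (a₀ * b₃ + a₁ * b₂ + a₂ * b₁ + a₃ * b₀) := by
  have hleft := HasOrder.mul hf hg.hasOrder_zero
  have hright := HasOrder.mul (polynomial a₀ a₁ a₂ a₃).hasOrder_zero hg
  rw [zero_add] at hright
  have hoverflow := (polynomial (a₁ * b₃ + a₂ * b₂ + a₃ * b₁) (a₂ * b₃ + a₃ * b₂) (a₃ * b₃)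
    0).hasOrder_zero.inv_pow_mul 4
  exact ((hleft.add hright).add hoverflow).congr' (.of_forall fun b => by ring)

lemma inv (hf : HasCubicExpansion f 1 a₁ a₂ a₃) : HasCubicExpansion (fun b => (f b)⁻¹)
    1 (-a₁) (a₁ ^ 2 - a₂) (-a₁ ^ 3 + 2 * a₁ * a₂ - a₃) := by
  have htendsto : Tendsto f atTop (𝓝 1) := by
    have hzero : Tendsto (fun b => f b - 1) atTop (𝓝 0) := by
      refine hf.hasOrder_sub_const.trans_tendsto ?_
      simpa using tendsto_inv_atTop_nhds_zero_nat (𝕜 := ℝ)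
    simpa using hzero.add_const 1
  have hbounded : HasOrder 0 fun b => (f b)⁻¹ := by
    simpa [HasOrder] using (htendsto.inv₀ one_ne_zero).isBigO_one ℝ
  have hone := hf.mul (polynomial 1 (-a₁) (a₁ ^ 2 - a₂) (-a₁ ^ 3 + 2 * a₁ * a₂ - a₃))
  refine (HasOrder.mul hbounded (HasOrder.const_mul (-1) hone)).congr' ?_
  filter_upwards [htendsto.eventually_ne one_ne_zero] with b hb
  field_simp
  ring

end HasCubicExpansion

/-! ### Moments -/

/-- The discrepancy of the monomial `y ^ j`. -/
noncomputable def moment (b d K j : ℕ) : ℝ := discrepancy b d K fun y => y ^ j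

lemma moment_zero_left (j : ℕ) : moment b d 0 j = -(1 / (j + 1)) := by
  rw [moment, discrepancy_zero, integral_pow]
  simp

lemma moment_zero_right (hd : 0 < d) (hdb : d < b) (K : ℕ) : moment b d (K + 1) 0 = 0 := by
  simpa [moment] using discrepancy_const hd hdb K 1

lemma discrepancy_add_pow (hd : 0 < d) (hdb : d < b) (K j : ℕ) (A : ℝ) :
    discrepancy b d K (fun y => (A + y) ^ j)
      = ∑ i ∈ range (j + 1), j.choose i * A ^ (j - i) * moment b d K i := by
  have hexpand : (fun y : ℝ => (A + y) ^ j)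
      = fun y => ∑ i ∈ range (j + 1), (j.choose i * A ^ (j - i)) * y ^ i := by
    funext y
    rw [add_comm, add_pow]
    exact sum_congr rfl fun i _ => by ring
  rw [hexpand, discrepancy_sum hd hdb K _ fun i _ => by fun_prop]
  simp only [discrepancy_const_mul, moment]

lemma moment_succ (hd : 0 < d) (hdb : d < b) (K j : ℕ) :
    moment b d (K + 1) (j + 1)
      = (b : ℝ)⁻¹ ^ (j + 2) * ∑ i ∈ range (j + 2), (j + 1).choose i *
          (∑ a ∈ range b, (a : ℝ) ^ (j + 1 - i) - (d : ℝ) ^ (j + 1 - i)) * moment b d (K + 1) i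
        + (b : ℝ)⁻¹ ^ j * ∑ i ∈ range (j + 2), (j + 1).choose i * (d : ℝ) ^ (j + 1 - i)
            * moment b d K i := by
  have hb : (b : ℝ) ≠ 0 := Nat.cast_ne_zero.2 (by omega)
  have hbranch : ∀ K a, discrepancy b d K (fun y => prependDigit b a y ^ (j + 1))
      = (b : ℝ)⁻¹ ^ (j + 1) * ∑ i ∈ range (j + 2), (j + 1).choose i * (a : ℝ) ^ (j + 1 - i)
          * moment b d K i := by
    intro K a
    simp only [prependDigit, div_eq_inv_mul, mul_pow, discrepancy_const_mul,
      discrepancy_add_pow hd hdb]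
  have hdigits : ∑ a ∈ range b, ∑ i ∈ range (j + 2),
        ((j + 1).choose i : ℝ) * (a : ℝ) ^ (j + 1 - i) * moment b d (K + 1) i
      - ∑ i ∈ range (j + 2), (j + 1).choose i * (d : ℝ) ^ (j + 1 - i) * moment b d (K + 1) i
      = ∑ i ∈ range (j + 2), (j + 1).choose i *
          (∑ a ∈ range b, (a : ℝ) ^ (j + 1 - i) - (d : ℝ) ^ (j + 1 - i))
            * moment b d (K + 1) i := by
    rw [sum_comm, ← sum_sub_distrib]
    refine sum_congr rfl fun i _ => ?_
    rw [← sum_mul, ← mul_sum]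
    ring
  rw [moment, discrepancy_succ hd hdb K (by fun_prop)]
  simp only [hbranch, zero_pow j.succ_ne_zero, mul_zero, ite_self, zero_add]
  rw [← mul_sum, ← mul_sub, hdigits, pow_succ _ (j + 1), pow_succ _ j]
  field_simp

lemma moment_succ_one (hd : 0 < d) (hdb : d < b) (K : ℕ) :
    (1 - (b : ℝ)⁻¹ + (b : ℝ)⁻¹ ^ 2) * moment b d (K + 1) 1
      = d * moment b d K 0 + moment b d K 1 := by
  have hb : (b : ℝ) ≠ 0 := Nat.cast_ne_zero.2 (by omega)
  have h := moment_succ hd hdb K 0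
  simp only [sum_range_succ, range_zero, sum_empty, moment_zero_right hd hdb, zero_add, inv_pow,
    Nat.choose_succ_self_right, Nat.cast_one, tsub_zero, pow_one, one_mul, mul_zero, add_zero,
    Nat.choose_self, tsub_self, pow_zero, sum_const, card_range, nsmul_eq_mul, mul_one] at h
  field_simp at h ⊢
  linear_combination h

lemma sum_range_natCast (n : ℕ) : ∑ a ∈ range n, (a : ℝ) = n * (n - 1) / 2 := by
  induction n with
  | zero => simp
  | succ n ih => rw [sum_range_succ, ih]; push_cast; ring

lemma sum_range_natCast_sq (n : ℕ) :
    ∑ a ∈ range n, (a : ℝ) ^ 2 = n * (n - 1) * (2 * n - 1) / 6 := by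
  induction n with
  | zero => simp
  | succ n ih => rw [sum_range_succ, ih]; push_cast; ring

lemma moment_succ_two (hd : 0 < d) (hdb : d < b) (K : ℕ) :
    moment b d (K + 1) 2
      = ((b : ℝ)⁻¹ - (b : ℝ)⁻¹ ^ 2 - 2 * d * (b : ℝ)⁻¹ ^ 3) * moment b d (K + 1) 1
        + ((b : ℝ)⁻¹ ^ 2 - (b : ℝ)⁻¹ ^ 3) * moment b d (K + 1) 2
        + (b : ℝ)⁻¹ * (d ^ 2 * moment b d K 0 + 2 * d * moment b d K 1 + moment b d K 2) := by
  have hb : (b : ℝ) ≠ 0 := Nat.cast_ne_zero.2 (by omega)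
  have h := moment_succ hd hdb K 1
  simp only [Nat.reduceAdd, inv_pow, sum_range_succ _ 2, sum_range_succ _ 1, Finset.range_one,
    sum_singleton, Nat.choose_zero_right, Nat.cast_one, tsub_zero, one_mul,
    moment_zero_right hd hdb, mul_zero, Nat.choose_succ_self_right, Nat.cast_ofNat,
    Nat.add_one_sub_one, pow_one, sum_range_natCast, zero_add, Nat.choose_self, tsub_self, pow_zero,
    sum_const, card_range, nsmul_eq_mul, mul_one] at h
  refine h.trans ?_
  field_simp

lemma moment_succ_three (hd : 0 < d) (hdb : d < b) (K : ℕ) :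
    moment b d (K + 1) 3
      = ((b : ℝ)⁻¹ * (1 - (b : ℝ)⁻¹) * (2 - (b : ℝ)⁻¹) / 2 - 3 * d ^ 2 * (b : ℝ)⁻¹ ^ 4)
          * moment b d (K + 1) 1
        + (b : ℝ)⁻¹ ^ 2 * ((3 / 2 * (1 - (b : ℝ)⁻¹) - 3 * d * (b : ℝ)⁻¹ ^ 2)
            * moment b d (K + 1) 2
          + ((b : ℝ)⁻¹ - (b : ℝ)⁻¹ ^ 2) * moment b d (K + 1) 3
          + (d ^ 3 * moment b d K 0 + 3 * d ^ 2 * moment b d K 1 + 3 * d * moment b d K 2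
              + moment b d K 3)) := by
  have hb : (b : ℝ) ≠ 0 := Nat.cast_ne_zero.2 (by omega)
  have h := moment_succ hd hdb K 2
  simp only [Nat.reduceAdd, inv_pow, sum_range_succ _ 3, sum_range_succ _ 2, sum_range_succ _ 1,
    Finset.range_one, sum_singleton, Nat.choose, Nat.cast_one, tsub_zero, one_mul,
    moment_zero_right hd hdb, mul_zero, add_zero, Nat.cast_ofNat, Nat.add_one_sub_one,
    sum_range_natCast_sq, zero_add, Nat.reduceSub, pow_one, sum_range_natCast, tsub_self, pow_zero,
    sum_const, card_range, nsmul_eq_mul, mul_one] at h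
  refine h.trans ?_
  field_simp
  ring

lemma lipschitzOnWith_pow (j : ℕ) : LipschitzOnWith j (fun y : ℝ => y ^ j) (Icc 0 1) := by
  refine LipschitzOnWith.of_dist_le_mul fun y hy z hz => ?_
  have hmax : max |y| |z| ≤ 1 :=
    max_le (abs_le.2 ⟨by linarith [hy.1], hy.2⟩) (abs_le.2 ⟨by linarith [hz.1], hz.2⟩)
  calc |y ^ j - z ^ j| ≤ |y - z| * j * max |y| |z| ^ (j - 1) := abs_pow_sub_pow_le y z j
    _ ≤ |y - z| * j * 1 := by gcongr; exact pow_le_one₀ (by positivity) hmax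
    _ = (j : ℝ≥0) * dist y z := by rw [Real.dist_eq, NNReal.coe_natCast]; ring

lemma hasOrder_moment (hd : 0 < d) (K j : ℕ) : HasOrder 0 fun b => moment b d K j := by
  cases K with
  | zero => simpa only [moment_zero_left] using HasOrder.const _
  | succ K =>
    refine HasOrder.of_abs_le (C := 2 ^ (K + 1) * (d + 1) * j) ?_
    filter_upwards [eventually_gt_atTop d] with b hdb
    simpa [moment] using abs_discrepancy_le hd hdb K (lipschitzOnWith_pow j)

lemma hasOrder_inv_pow_mul_sum_pow_sub (d n p : ℕ) : HasOrder n fun b =>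
    (b : ℝ)⁻¹ ^ (n + (p + 1)) * (∑ a ∈ range b, (a : ℝ) ^ p - (d : ℝ) ^ p) := by
  refine HasOrder.of_abs_le (C := 1) ?_
  filter_upwards [eventually_gt_atTop d] with b hdb
  have hb : (b : ℝ) ≠ 0 := Nat.cast_ne_zero.2 (by omega)
  have hle : ∑ a ∈ range b, (a : ℝ) ^ p ≤ (b : ℝ) ^ (p + 1) := by
    refine (sum_le_card_nsmul _ _ ((b : ℝ) ^ p) fun a ha => ?_).trans ?_
    · gcongr; exact (mem_range.1 ha).le
    · rw [card_range, nsmul_eq_mul, pow_succ']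
  have hge : (d : ℝ) ^ p ≤ ∑ a ∈ range b, (a : ℝ) ^ p :=
    single_le_sum (f := fun a : ℕ => (a : ℝ) ^ p) (fun a _ => by positivity) (mem_range.2 hdb)
  rw [abs_of_nonneg (mul_nonneg (by positivity) (sub_nonneg.2 hge)), one_mul, pow_add, mul_assoc]
  refine mul_le_of_le_one_right (by positivity) ?_
  rw [inv_pow, inv_mul_le_one₀ (by positivity)]
  exact (sub_le_self _ (by positivity)).trans hle

/-- The moment of order zero vanishes, and the others enter the recursion with at least one
factor `1 / b`. -/
lemma hasOrder_moment_add_two (hd : 0 < d) (K j : ℕ) :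
    HasOrder 1 fun b => moment b d (K + 1) (j + 2) := by
  have hself : ∀ i ∈ range (j + 2), HasOrder 1 fun b => (j + 2).choose (i + 1) *
      ((b : ℝ)⁻¹ ^ (j + 3) * (∑ a ∈ range b, (a : ℝ) ^ (j + 1 - i) - (d : ℝ) ^ (j + 1 - i)))
        * moment b d (K + 1) (i + 1) := by
    intro i hi
    have hexp : 1 + i + (j + 1 - i + 1) = j + 3 := by have := mem_range.1 hi; omega
    have h := hasOrder_inv_pow_mul_sum_pow_sub d (1 + i) (j + 1 - i)
    rw [hexp] at h
    exact ((h.mono (Nat.le_add_right 1 i)).const_mul _).mul (hasOrder_moment hd (K + 1) (i + 1))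
  have hprevious : HasOrder (j + 1) fun b => (b : ℝ)⁻¹ ^ (j + 1) *
      ∑ i ∈ range (j + 3), (j + 2).choose i * (d : ℝ) ^ (j + 2 - i) * moment b d K i :=
    (HasOrder.sum fun i _ => (hasOrder_moment hd K i).const_mul _).inv_pow_mul (j + 1)
  refine ((HasOrder.sum hself).add (hprevious.mono (Nat.le_add_left 1 j))).congr' ?_
  filter_upwards [eventually_gt_atTop d] with b hdb
  rw [moment_succ hd hdb K (j + 1)]
  congr 1
  rw [sum_range_succ' _ (j + 2), moment_zero_right hd hdb, mul_zero, add_zero, mul_sum]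
  exact sum_congr rfl fun i _ => by rw [Nat.add_sub_add_right]; ring

lemma hasCubicExpansion_moment_one_succ (hd : 0 < d) {K : ℕ} {a₀ a₁ a₂ a₃ : ℝ}
    (h : HasCubicExpansion (fun b => d * moment b d K 0 + moment b d K 1) a₀ a₁ a₂ a₃) :
    HasCubicExpansion (fun b => moment b d (K + 1) 1) a₀ (a₀ + a₁) (a₁ + a₂)
      (-a₀ + a₂ + a₃) := by
  have hinv : HasCubicExpansion (fun b => (1 - (b : ℝ)⁻¹ + (b : ℝ)⁻¹ ^ 2)⁻¹) 1 1 0 (-1) := by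
    convert (HasCubicExpansion.polynomial 1 (-1) 1 0).inv using 1
    · funext b; ring
    all_goals norm_num
  have hprod : HasCubicExpansion (fun b => moment b d (K + 1) 1) (1 * a₀) (1 * a₁ + 1 * a₀)
      (1 * a₂ + 1 * a₁ + 0 * a₀) (1 * a₃ + 1 * a₂ + 0 * a₁ + -1 * a₀) := by
    refine (hinv.mul h).congr' ?_
    filter_upwards [eventually_gt_atTop d] with b hdb
    have hdenom : 1 - (b : ℝ)⁻¹ + (b : ℝ)⁻¹ ^ 2 ≠ 0 := by nlinarith [sq_nonneg ((b : ℝ)⁻¹ - 1)]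
    rw [← moment_succ_one hd hdb, inv_mul_cancel_left₀ hdenom]
  convert hprod using 1 <;> ring

lemma hasCubicExpansion_moment_one_one (hd : 0 < d) : HasCubicExpansion
    (fun b => moment b d 1 1) (-(d + 1 / 2)) (-(d + 1 / 2)) 0 (d + 1 / 2) := by
  have hconst := HasCubicExpansion.polynomial (-(d + 1 / 2)) 0 0 0
  convert hasCubicExpansion_moment_one_succ hd (K := 0) (hconst.congr' (.of_forall fun b => ?_))
    using 1
  · ring
  · ring
  · ring
  · simp only [moment_zero_left]; push_cast; ring

lemma hasCubicExpansion_moment_one_add_two (hd : 0 < d) {K : ℕ} {a₀ a₁ a₂ a₃ : ℝ}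
    (h : HasCubicExpansion (fun b => moment b d (K + 1) 1) a₀ a₁ a₂ a₃) :
    HasCubicExpansion (fun b => moment b d (K + 2) 1) a₀ (a₀ + a₁) (a₁ + a₂) (-a₀ + a₂ + a₃) := by
  refine hasCubicExpansion_moment_one_succ hd (h.congr' ?_)
  filter_upwards [eventually_gt_atTop d] with b hdb
  rw [moment_zero_right hd hdb, mul_zero, zero_add]

lemma hasCubicExpansion_moment_two_one (hd : 0 < d) : HasCubicExpansion (fun b => moment b d 2 1)
    (-(d + 1 / 2)) (-2 * (d + 1 / 2)) (-(d + 1 / 2)) (2 * (d + 1 / 2)) := by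
  convert hasCubicExpansion_moment_one_add_two hd (hasCubicExpansion_moment_one_one hd) using 1
  all_goals ring

lemma hasCubicExpansion_moment_three_one (hd : 0 < d) : HasCubicExpansion (fun b => moment b d 3 1)
    (-(d + 1 / 2)) (-3 * (d + 1 / 2)) (-3 * (d + 1 / 2)) (2 * (d + 1 / 2)) := by
  convert hasCubicExpansion_moment_one_add_two hd (hasCubicExpansion_moment_two_one hd) using 1
  all_goals ring

lemma hasCubicExpansion_moment_four_one (hd : 0 < d) : HasCubicExpansion (fun b => moment b d 4 1)
    (-(d + 1 / 2)) (-4 * (d + 1 / 2)) (-6 * (d + 1 / 2)) 0 := by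
  convert hasCubicExpansion_moment_one_add_two hd (hasCubicExpansion_moment_three_one hd) using 1
  all_goals ring

lemma hasOrder_moment_two_sub (hd : 0 < d) (K : ℕ) : HasOrder 3 fun b =>
    moment b d (K + 1) 2 - ((b : ℝ)⁻¹ * (moment b d (K + 1) 1 + d ^ 2 * moment b d K 0
      + 2 * d * moment b d K 1 + moment b d K 2) - (b : ℝ)⁻¹ ^ 2 * moment b d (K + 1) 1) := by
  have hone := ((hasOrder_moment hd (K + 1) 1).const_mul (-2 * d)).inv_pow_mul 3
  have htwo := (hasOrder_moment_add_two hd K 0).inv_pow_mul 2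
  have htwo' := (hasOrder_moment_add_two hd K 0).inv_pow_mul 3
  refine ((hone.add htwo).sub (htwo'.mono (by norm_num))).congr' ?_
  filter_upwards [eventually_gt_atTop d] with b hdb
  linear_combination -moment_succ_two hd hdb K

lemma hasOrder_moment_one_two_sub (hd : 0 < d) : HasOrder 2 fun b =>
    moment b d 1 2 - (-(d + 1 / 2) - (d ^ 2 + d + 1 / 3)) * (b : ℝ)⁻¹ := by
  have hone := (hasCubicExpansion_moment_one_one hd).hasOrder_sub_const.inv_pow_mul 1
  have hsq := (hasOrder_moment hd 1 1).inv_pow_mul 2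
  refine (((hasOrder_moment_two_sub hd 0).mono (by norm_num)).add (hone.sub hsq)).congr' ?_
  refine .of_forall fun b => ?_
  simp only [moment_zero_left]
  push_cast
  ring

lemma hasCubicExpansion_inv_mul_moment_two_two (hd : 0 < d) : HasCubicExpansion
    (fun b => (b : ℝ)⁻¹ * moment b d 2 2) 0 0 ((1 + 2 * d) * -(d + 1 / 2))
      ((2 + 2 * d) * -(d + 1 / 2) - (d ^ 2 + d + 1 / 3)) := by
  have hrem := (hasOrder_moment_two_sub hd 1).inv_pow_mul 1
  have htwo := (hasOrder_moment_one_two_sub hd).inv_pow_mul 2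
  have hsq := HasCubicExpansion.inv_natCast.mul HasCubicExpansion.inv_natCast
  have hmain := hsq.mul (((hasCubicExpansion_moment_two_one hd).add
    ((hasCubicExpansion_moment_one_one hd).const_mul (2 * d))).add
    ((HasCubicExpansion.inv_natCast.const_mul (-(d + 1 / 2) - (d ^ 2 + d + 1 / 3))).sub
      (HasCubicExpansion.inv_natCast.mul (hasCubicExpansion_moment_two_one hd))))
  convert (hmain.add (hrem.add htwo).hasCubicExpansion).congr' ?_ using 1
  · ring
  · ring
  · ring
  · ring
  · filter_upwards [eventually_gt_atTop d] with b hdb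
    rw [moment_zero_right hd hdb 0]
    ring

lemma hasOrder_moment_three_two_sub (hd : 0 < d) : HasOrder 2 fun b =>
    moment b d 3 2 - (1 + 2 * d) * -(d + 1 / 2) * (b : ℝ)⁻¹ := by
  have hthree := (hasCubicExpansion_moment_three_one hd).hasOrder_sub_const.inv_pow_mul 1
  have htwo := (hasCubicExpansion_moment_two_one hd).hasOrder_sub_const.const_mul (2 * d)
  have hsecond := (hasOrder_moment_add_two hd 1 0).inv_pow_mul 1
  have hsq := (hasOrder_moment hd 3 1).inv_pow_mul 2
  refine (((hasOrder_moment_two_sub hd 2).mono (by norm_num)).add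
    ((hthree.add (htwo.inv_pow_mul 1)).add (hsecond.sub hsq))).congr' ?_
  filter_upwards [eventually_gt_atTop d] with b hdb
  rw [moment_zero_right hd hdb 1]
  ring

lemma hasOrder_moment_two_three_sub (hd : 0 < d) : HasOrder 2 fun b =>
    moment b d 2 3 - -(d + 1 / 2) * (b : ℝ)⁻¹ := by
  have hone := (hasCubicExpansion_moment_two_one hd).hasOrder_sub_const.inv_pow_mul 1
  have hbounded : HasOrder 0 fun b =>
      (-3 / 2 + 1 / 2 * (b : ℝ)⁻¹ + -(3 * d ^ 2) * (b : ℝ)⁻¹ ^ 2 + 0 * (b : ℝ)⁻¹ ^ 3)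
          * moment b d 2 1
        + (3 / 2 + -(3 / 2) * (b : ℝ)⁻¹ + -(3 * d) * (b : ℝ)⁻¹ ^ 2 + 0 * (b : ℝ)⁻¹ ^ 3)
          * moment b d 2 2
        + (0 + 1 * (b : ℝ)⁻¹ + -1 * (b : ℝ)⁻¹ ^ 2 + 0 * (b : ℝ)⁻¹ ^ 3) * moment b d 2 3
        + (3 * d ^ 2 * moment b d 1 1 + 3 * d * moment b d 1 2 + moment b d 1 3) :=
    (((HasCubicExpansion.polynomial _ _ _ _).hasOrder_zero.mul (hasOrder_moment hd 2 1)).add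
      ((HasCubicExpansion.polynomial _ _ _ _).hasOrder_zero.mul (hasOrder_moment hd 2 2))).add
      ((HasCubicExpansion.polynomial _ _ _ _).hasOrder_zero.mul (hasOrder_moment hd 2 3)) |>.add
      ((((hasOrder_moment hd 1 1).const_mul _).add ((hasOrder_moment hd 1 2).const_mul _)).add
        (hasOrder_moment hd 1 3))
  refine (hone.add (hbounded.inv_pow_mul 2)).congr' ?_
  filter_upwards [eventually_gt_atTop d] with b hdb
  have h := moment_succ_three hd hdb 1
  rw [moment_zero_right hd hdb 0] at h
  linear_combination -h

/-! ### Sums of inverse powers -/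

lemma abs_sum_Ico_sub_le {f G H : ℕ → ℝ} {m n : ℕ} (hmn : m ≤ n)
    (h : ∀ k, m ≤ k → |f k - (G k - G (k + 1))| ≤ H k - H (k + 1)) :
    |∑ k ∈ Finset.Ico m n, f k - (G m - G n)| ≤ H m - H n := by
  induction n, hmn using Nat.le_induction with
  | base => simp
  | succ n hmn ih =>
    rw [sum_Ico_succ_top hmn]
    calc |∑ k ∈ Finset.Ico m n, f k + f n - (G m - G (n + 1))|
        = |(∑ k ∈ Finset.Ico m n, f k - (G m - G n)) + (f n - (G n - G (n + 1)))| := by ring_nf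
      _ ≤ (H m - H n) + (H n - H (n + 1)) := (abs_add_le _ _).trans (add_le_add ih (h n hmn))
      _ = H m - H (n + 1) := by ring

/-- The first terms of the Euler–Maclaurin expansion of `∑ k ≥ n, 1 / k ^ 2`. -/
noncomputable def sqTail (n : ℕ) : ℝ := 1 / n + 1 / (2 * n ^ 2) + 1 / (6 * n ^ 3)

lemma abs_sum_Ico_one_div_sq_sub_le {m n : ℕ} (hm : 0 < m) (hmn : m ≤ n) :
    |∑ k ∈ Finset.Ico m n, 1 / (k : ℝ) ^ 2 - (sqTail m - sqTail n)|
      ≤ 1 / (m : ℝ) ^ 4 - 1 / (n : ℝ) ^ 4 := by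
  refine abs_sum_Ico_sub_le (f := fun k => 1 / (k : ℝ) ^ 2) (H := fun k => 1 / (k : ℝ) ^ 4) hmn
    fun k hk => ?_
  have hk0 : (0 : ℝ) < k := Nat.cast_pos.2 (hm.trans_le hk)
  have herror : 1 / (k : ℝ) ^ 2 - (sqTail k - sqTail (k + 1))
      = -(1 / (6 * k ^ 3 * (k + 1) ^ 3)) := by
    simp only [sqTail]
    push_cast
    field_simp
    ring
  have hdiff : 1 / (k : ℝ) ^ 4 - 1 / ((k + 1 : ℕ) : ℝ) ^ 4
      = (4 * k ^ 3 + 6 * k ^ 2 + 4 * k + 1) / (k ^ 4 * (k + 1) ^ 4) := by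
    push_cast
    field_simp
    ring
  rw [herror, hdiff, abs_neg, abs_of_nonneg (by positivity),
    div_le_div_iff₀ (by positivity) (by positivity)]
  have hgap : 0 ≤ (k : ℝ) ^ 3 * (k + 1) ^ 3 * (24 * k ^ 3 + 35 * k ^ 2 + 23 * k + 6) := by
    positivity
  nlinarith

lemma abs_sum_Ico_one_div_cube_sub_le {m n : ℕ} (hm : 0 < m) (hmn : m ≤ n) :
    |∑ k ∈ Finset.Ico m n, 1 / (k : ℝ) ^ 3 - (1 / (2 * (m : ℝ) ^ 2) - 1 / (2 * (n : ℝ) ^ 2))|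
      ≤ 1 / (m : ℝ) ^ 3 - 1 / (n : ℝ) ^ 3 := by
  refine abs_sum_Ico_sub_le (f := fun k => 1 / (k : ℝ) ^ 3) (G := fun k => 1 / (2 * (k : ℝ) ^ 2))
    (H := fun k => 1 / (k : ℝ) ^ 3) hmn fun k hk => ?_
  have hk0 : (0 : ℝ) < k := Nat.cast_pos.2 (hm.trans_le hk)
  have herror : 1 / (k : ℝ) ^ 3 - (1 / (2 * (k : ℝ) ^ 2) - 1 / (2 * ((k + 1 : ℕ) : ℝ) ^ 2))
      = (3 * k + 2) / (2 * k ^ 3 * (k + 1) ^ 2) := by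
    push_cast
    field_simp
    ring
  have hdiff : 1 / (k : ℝ) ^ 3 - 1 / ((k + 1 : ℕ) : ℝ) ^ 3
      = (3 * k ^ 2 + 3 * k + 1) / (k ^ 3 * (k + 1) ^ 3) := by
    push_cast
    field_simp
    ring
  rw [herror, hdiff, abs_of_nonneg (by positivity),
    div_le_div_iff₀ (by positivity) (by positivity)]
  have hgap : 0 ≤ (k : ℝ) ^ 4 * (k + 1) ^ 2 * (3 * k + 1) := by positivity
  nlinarith

/-- The sum of `1 / n ^ i` over the integers `n` obtained by appending one base-`b` digit
to `a`. -/
noncomputable def blockSum (b a i : ℕ) : ℝ :=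
  ∑ n ∈ Finset.Ico (a * b) ((a + 1) * b), 1 / (n : ℝ) ^ i

lemma hasCubicExpansion_blockSum_two (hd : 0 < d) : HasCubicExpansion (fun b => blockSum b d 2)
    0 (1 / d - 1 / (d + 1)) ((1 / d ^ 2 - 1 / (d + 1) ^ 2) / 2)
    ((1 / d ^ 3 - 1 / (d + 1) ^ 3) / 6) := by
  refine HasOrder.of_abs_le (C := 1) ?_
  filter_upwards [eventually_gt_atTop 0] with b hb
  have hd1 : (1 : ℝ) ≤ d := by exact_mod_cast hd
  have hb0 : (0 : ℝ) < b := Nat.cast_pos.2 hb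
  have hmain : sqTail (d * b) - sqTail ((d + 1) * b)
      = 0 + (1 / d - 1 / (d + 1)) * (b : ℝ)⁻¹ + (1 / d ^ 2 - 1 / (d + 1) ^ 2) / 2 * (b : ℝ)⁻¹ ^ 2
        + (1 / d ^ 3 - 1 / (d + 1) ^ 3) / 6 * (b : ℝ)⁻¹ ^ 3 := by
    simp only [sqTail]
    push_cast
    field_simp
    ring
  rw [← hmain, one_mul, inv_pow, ← one_div]
  refine ((abs_sum_Ico_one_div_sq_sub_le (Nat.mul_pos hd hb)
    (Nat.mul_le_mul_right b (Nat.le_add_right d 1))).trans (sub_le_self _ (by positivity))).trans ?_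
  push_cast
  gcongr
  exact le_mul_of_one_le_left hb0.le hd1

lemma hasOrder_blockSum_three_sub (hd : 0 < d) : HasOrder 3 fun b =>
    blockSum b d 3 - (1 / d ^ 2 - 1 / (d + 1) ^ 2) / 2 * (b : ℝ)⁻¹ ^ 2 := by
  refine HasOrder.of_abs_le (C := 1) ?_
  filter_upwards [eventually_gt_atTop 0] with b hb
  have hd1 : (1 : ℝ) ≤ d := by exact_mod_cast hd
  have hb0 : (0 : ℝ) < b := Nat.cast_pos.2 hb
  have hmain : 1 / (2 * ((d * b : ℕ) : ℝ) ^ 2) - 1 / (2 * (((d + 1) * b : ℕ) : ℝ) ^ 2)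
      = (1 / d ^ 2 - 1 / (d + 1) ^ 2) / 2 * (b : ℝ)⁻¹ ^ 2 := by
    push_cast
    field_simp
  rw [← hmain, one_mul, inv_pow, ← one_div]
  refine ((abs_sum_Ico_one_div_cube_sub_le (Nat.mul_pos hd hb)
    (Nat.mul_le_mul_right b (Nat.le_add_right d 1))).trans (sub_le_self _ (by positivity))).trans ?_
  push_cast
  gcongr
  exact le_mul_of_one_le_left hb0.le hd1

lemma blockSum_succ_le {a : ℕ} (ha : 0 < a) (hb : 0 < b) (i : ℕ) :
    blockSum b a (i + 1) ≤ (b : ℝ)⁻¹ ^ i / a ^ (i + 1) := by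
  calc blockSum b a (i + 1)
      ≤ #(Finset.Ico (a * b) ((a + 1) * b)) • (1 / ((a : ℝ) * b) ^ (i + 1)) := by
        refine sum_le_card_nsmul _ _ _ fun n hn => ?_
        gcongr
        exact_mod_cast (Finset.mem_Ico.1 hn).1
    _ = (b : ℝ)⁻¹ ^ i / a ^ (i + 1) := by
        rw [Nat.card_Ico, add_mul, one_mul, Nat.add_sub_cancel_left, nsmul_eq_mul, mul_pow,
          pow_succ (b : ℝ), inv_pow]
        field_simp

lemma hasOrder_blockSum_succ {a : ℕ} (ha : 0 < a) (i : ℕ) :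
    HasOrder i fun b => blockSum b a (i + 1) := by
  refine HasOrder.of_abs_le (C := 1 / a ^ (i + 1)) ?_
  filter_upwards [eventually_gt_atTop 0] with b hb
  rw [abs_of_nonneg (sum_nonneg fun n _ => by positivity), one_div_mul_eq_div]
  exact blockSum_succ_le ha hb i

lemma sum_blockSum (b i : ℕ) {m n : ℕ} (hmn : m ≤ n) :
    ∑ a ∈ Finset.Ico m n, blockSum b a i = ∑ k ∈ Finset.Ico (m * b) (n * b), 1 / (k : ℝ) ^ i := by
  induction n, hmn using Nat.le_induction with
  | base => simp
  | succ n hmn ih =>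
    rw [sum_Ico_succ_top hmn, ih, blockSum, sum_Ico_consecutive _ (Nat.mul_le_mul_right b hmn)
      (Nat.mul_le_mul_right b (Nat.le_add_right n 1))]

lemma hasOrder_sum_blockSum_two_sub :
    HasOrder 2 fun b => ∑ a ∈ Finset.Ico 1 b, blockSum b a 2 - (b : ℝ)⁻¹ := by
  have herror : HasOrder 4 fun b =>
      ∑ a ∈ Finset.Ico 1 b, blockSum b a 2 - (sqTail b - sqTail (b * b)) := by
    refine HasOrder.of_abs_le (C := 1) ?_
    filter_upwards [eventually_gt_atTop 0] with b hb
    rw [sum_blockSum b 2 (m := 1) hb, one_mul, one_mul, inv_pow, ← one_div]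
    exact (abs_sum_Ico_one_div_sq_sub_le hb (Nat.le_mul_self b)).trans
      (sub_le_self _ (by positivity))
  have hpoly := (HasCubicExpansion.polynomial (-(1 / 2)) (1 / 6) (-(1 / 2)) 0).hasOrder_zero
  have hlast := HasOrder.inv_pow 6
  refine ((herror.mono (by norm_num)).add
    ((hpoly.inv_pow_mul 2).sub ((hlast.const_mul (1 / 6)).mono (by norm_num)))).congr' ?_
  filter_upwards [eventually_gt_atTop 0] with b hb
  simp only [sqTail]
  push_cast
  field_simp
  ring

lemma tendsto_sum_Ico_one_div_pow {i : ℕ} (hi : 1 < i) :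
    Tendsto (fun n : ℕ => ∑ k ∈ Finset.Ico 1 n, 1 / (k : ℝ) ^ i) atTop (𝓝 (zetaR i)) := by
  have hsummable : Summable fun n : ℕ => 1 / ((n : ℝ) + 1) ^ i := by
    simpa using (summable_nat_add_iff 1).2 (Real.summable_one_div_nat_pow.2 hi)
  rw [← tendsto_add_atTop_iff_nat 1]
  refine hsummable.hasSum.tendsto_sum_nat.congr fun n => ?_
  rw [sum_Ico_eq_sum_range]
  exact sum_congr rfl fun k _ => by push_cast; rw [add_comm]

lemma abs_zetaR_sub_le {i m : ℕ} (hi : 1 < i) (hm : 0 < m) {G : ℕ → ℝ} {r : ℝ}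
    (hG : Tendsto G atTop (𝓝 0))
    (h : ∀ n, m ≤ n → |∑ k ∈ Finset.Ico m n, 1 / (k : ℝ) ^ i - (G m - G n)| ≤ r) :
    |zetaR i - ∑ k ∈ Finset.Ico 1 m, 1 / (k : ℝ) ^ i - G m| ≤ r := by
  have hlim : Tendsto (fun n : ℕ => |∑ k ∈ Finset.Ico 1 n, 1 / (k : ℝ) ^ i
      - ∑ k ∈ Finset.Ico 1 m, 1 / (k : ℝ) ^ i - (G m - G n)|) atTop
      (𝓝 |zetaR i - ∑ k ∈ Finset.Ico 1 m, 1 / (k : ℝ) ^ i - (G m - 0)|) :=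
    (((tendsto_sum_Ico_one_div_pow hi).sub_const _).sub (hG.const_sub _)).abs
  rw [sub_zero] at hlim
  refine le_of_tendsto hlim ?_
  filter_upwards [eventually_ge_atTop m] with n hn
  rw [← sum_Ico_consecutive _ hm hn, add_sub_cancel_left]
  exact h n hn

lemma tendsto_sqTail : Tendsto sqTail atTop (𝓝 0) := by
  have hinv := tendsto_inv_atTop_nhds_zero_nat (𝕜 := ℝ)
  convert (hinv.add ((hinv.pow 2).mul_const (1 / 2))).add ((hinv.pow 3).mul_const (1 / 6)) using 1
  · funext n
    simp only [sqTail]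
    field_simp
  · norm_num

lemma hasOrder_sum_one_div_sq_sub : HasOrder 2 fun b =>
    ∑ a ∈ Finset.Ico 1 b, 1 / (a : ℝ) ^ 2 - (zetaR 2 - (b : ℝ)⁻¹) := by
  have herror : HasOrder 4 fun b =>
      zetaR 2 - ∑ a ∈ Finset.Ico 1 b, 1 / (a : ℝ) ^ 2 - sqTail b := by
    refine HasOrder.of_abs_le (C := 1) ?_
    filter_upwards [eventually_gt_atTop 0] with b hb
    rw [one_mul, inv_pow, ← one_div]
    exact abs_zetaR_sub_le one_lt_two hb tendsto_sqTail fun n hn =>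
      (abs_sum_Ico_one_div_sq_sub_le hb hn).trans (sub_le_self _ (by positivity))
  have htwo := (HasOrder.inv_pow 2).const_mul (1 / 2)
  have hthree := (HasOrder.inv_pow 3).const_mul (1 / 6)
  refine ((herror.mono (by norm_num)).add
    (htwo.add (hthree.mono (by norm_num)))).const_mul (-1) |>.congr' ?_
  filter_upwards [eventually_gt_atTop 0] with b hb
  have hb0 : (b : ℝ) ≠ 0 := Nat.cast_ne_zero.2 hb.ne'
  simp only [sqTail]
  field_simp
  ring

lemma hasOrder_sum_one_div_cube_sub : HasOrder 1 fun b =>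
    ∑ a ∈ Finset.Ico 1 b, 1 / (a : ℝ) ^ 3 - zetaR 3 := by
  have htail : Tendsto (fun n : ℕ => 1 / (2 * (n : ℝ) ^ 2)) atTop (𝓝 0) := by
    convert ((tendsto_inv_atTop_nhds_zero_nat (𝕜 := ℝ)).pow 2).mul_const (1 / 2) using 1
    · funext n; field_simp
    · norm_num
  have herror : HasOrder 3 fun b =>
      zetaR 3 - ∑ a ∈ Finset.Ico 1 b, 1 / (a : ℝ) ^ 3 - 1 / (2 * (b : ℝ) ^ 2) := by
    refine HasOrder.of_abs_le (C := 1) ?_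
    filter_upwards [eventually_gt_atTop 0] with b hb
    rw [one_mul, inv_pow, ← one_div]
    exact abs_zetaR_sub_le (by norm_num) hb htail fun n hn =>
      (abs_sum_Ico_one_div_cube_sub_le hb hn).trans (sub_le_self _ (by positivity))
  have htwo := (HasOrder.inv_pow 2).const_mul (1 / 2)
  refine ((herror.mono (by norm_num)).add (htwo.mono (by norm_num))).const_mul (-1) |>.congr' ?_
  refine .of_forall fun b => ?_
  simp only [one_div, mul_inv, inv_pow]
  ring

lemma sum_Ico_one_div_sq_le (n : ℕ) : ∑ k ∈ Finset.Ico 1 n, 1 / (k : ℝ) ^ 2 ≤ 2 := by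
  have hIco : Finset.Ico 1 n = Finset.Ioo 0 n := rfl
  simpa [hIco] using sum_Ioo_inv_sq_le (α := ℝ) 0 n

lemma abs_one_div_add_sq_sub_le {a t : ℝ} (ha : 1 ≤ a) (ht : 0 ≤ t) :
    |1 / (a + t) ^ 2 - (1 / a ^ 2 - 2 * t * (1 / a ^ 3))| ≤ 3 * t ^ 2 * (1 / a ^ 2) := by
  have ha0 : 0 < a := by linarith
  have herror : 1 / (a + t) ^ 2 - (1 / a ^ 2 - 2 * t * (1 / a ^ 3))
      = t ^ 2 * (3 * a + 2 * t) / (a ^ 3 * (a + t) ^ 2) := by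
    field_simp
    ring
  rw [herror, abs_of_nonneg (by positivity), mul_one_div,
    div_le_div_iff₀ (by positivity) (by positivity)]
  have hgap : 3 * a + 2 * t ≤ 3 * (a * (a + t) ^ 2) := by nlinarith
  calc t ^ 2 * (3 * a + 2 * t) * a ^ 2 ≤ t ^ 2 * (3 * (a * (a + t) ^ 2)) * a ^ 2 := by gcongr
    _ = 3 * t ^ 2 * (a ^ 3 * (a + t) ^ 2) := by ring

lemma hasOrder_sum_one_div_add_sq_sub (d : ℕ) : HasOrder 2 fun b =>
    ∑ a ∈ Finset.Ico 1 b, 1 / (a + d * (b : ℝ)⁻¹) ^ 2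
      - (zetaR 2 - (1 + 2 * d * zetaR 3) * (b : ℝ)⁻¹) := by
  have herror : HasOrder 2 fun b => ∑ a ∈ Finset.Ico 1 b, (1 / (a + d * (b : ℝ)⁻¹) ^ 2
      - (1 / (a : ℝ) ^ 2 - 2 * (d * (b : ℝ)⁻¹) * (1 / (a : ℝ) ^ 3))) := by
    refine HasOrder.of_abs_le (C := 6 * d ^ 2) (.of_forall fun b => ?_)
    refine (abs_sum_le_sum_abs _ _).trans ((sum_le_sum fun a ha => abs_one_div_add_sq_sub_le
      (by exact_mod_cast (Finset.mem_Ico.1 ha).1) (by positivity)).trans ?_)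
    rw [← mul_sum]
    calc 3 * (d * (b : ℝ)⁻¹) ^ 2 * ∑ a ∈ Finset.Ico 1 b, 1 / (a : ℝ) ^ 2
        ≤ 3 * (d * (b : ℝ)⁻¹) ^ 2 * 2 := by gcongr; exact sum_Ico_one_div_sq_le b
      _ = 6 * d ^ 2 * (b : ℝ)⁻¹ ^ 2 := by ring
  have hcube := (hasOrder_sum_one_div_cube_sub.inv_pow_mul 1).const_mul (-2 * d)
  refine ((herror.add hasOrder_sum_one_div_sq_sub).add hcube).congr' (.of_forall fun b => ?_)
  simp only [sum_sub_distrib, ← mul_sum]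
  ring

/-! ### Reciprocals -/

lemma abs_discrepancy_le_of_abs_sub_le (hd : 0 < d) (hdb : d < b) (K : ℕ) {f : ℝ → ℝ} {L : ℝ}
    (hL : 0 ≤ L) (hf : ∀ y ∈ Icc (0 : ℝ) 1, ∀ z ∈ Icc (0 : ℝ) 1, |f y - f z| ≤ L * |y - z|) :
    |discrepancy b d (K + 1) f| ≤ 2 ^ (K + 1) * (d + 1) * L := by
  lift L to ℝ≥0 using hL
  exact abs_discrepancy_le hd hdb K (LipschitzOnWith.of_dist_le_mul hf)

lemma abs_pow_div_add_mul_sub_le (J : ℕ) {A t y z : ℝ} (hA : 1 ≤ A) (ht0 : 0 ≤ t) (ht1 : t ≤ 1)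
    (hy : y ∈ Icc (0 : ℝ) 1) (hz : z ∈ Icc (0 : ℝ) 1) :
    |y ^ J / (A + t * y) - z ^ J / (A + t * z)| ≤ (J + 1) / A * |y - z| := by
  have hA0 : 0 < A := by linarith
  have hAy : A ≤ A + t * y := le_add_of_nonneg_right (mul_nonneg ht0 hy.1)
  have hAz : A ≤ A + t * z := le_add_of_nonneg_right (mul_nonneg ht0 hz.1)
  have hsplit : y ^ J / (A + t * y) - z ^ J / (A + t * z)
      = (y ^ J - z ^ J) / (A + t * y) + z ^ J * t * (z - y) / ((A + t * y) * (A + t * z)) := by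
    have hy0 : A + t * y ≠ 0 := by linarith
    have hz0 : A + t * z ≠ 0 := by linarith
    field_simp
    ring
  have hpow : |(y ^ J - z ^ J) / (A + t * y)| ≤ J * |y - z| / A := by
    rw [abs_div, abs_of_pos (hA0.trans_le hAy)]
    gcongr
    simpa [Real.dist_eq] using (lipschitzOnWith_pow J).dist_le_mul y hy z hz
  have hdenom : |z ^ J * t * (z - y) / ((A + t * y) * (A + t * z))| ≤ |y - z| / A := by
    have hzt : z ^ J * t ≤ 1 := mul_le_one₀ (pow_le_one₀ hz.1 hz.2) ht0 ht1
    have hzt0 : 0 ≤ z ^ J * t := mul_nonneg (pow_nonneg hz.1 J) ht0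
    rw [abs_div, abs_mul, abs_of_nonneg hzt0, abs_sub_comm z y,
      abs_of_pos (mul_pos (hA0.trans_le hAy) (hA0.trans_le hAz))]
    gcongr
    · exact mul_le_of_le_one_left (abs_nonneg _) hzt
    · nlinarith
  rw [hsplit]
  calc _ ≤ J * |y - z| / A + |y - z| / A := (abs_add_le _ _).trans (add_le_add hpow hdenom)
    _ = (J + 1) / A * |y - z| := by ring

/-- The discrepancy of `1 / (A + t * y)`, to be expanded in powers of `t`. -/
noncomputable def reciprocalDiscrepancy (b d K : ℕ) (A t : ℝ) : ℝ :=
  discrepancy b d K fun y => 1 / (A + t * y)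

lemma abs_reciprocalDiscrepancy_sub_le (hd : 0 < d) (hdb : d < b) (K J : ℕ) {A t : ℝ}
    (hA : 1 ≤ A) (ht0 : 0 ≤ t) (ht1 : t ≤ 1) :
    |reciprocalDiscrepancy b d (K + 1) A t
        - ∑ j ∈ range J, (-t) ^ j * moment b d (K + 1) j / A ^ (j + 1)|
      ≤ 2 ^ (K + 1) * (d + 1) * (J + 1) * (t ^ J / A ^ (J + 1)) := by
  have hA0 : 0 < A := by linarith
  have hpos : ∀ y ∈ Icc (0 : ℝ) 1, 0 < A + t * y := fun y hy =>
    add_pos_of_pos_of_nonneg hA0 (mul_nonneg ht0 hy.1)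
  have hgeom : ∀ y ∈ Icc (0 : ℝ) 1, 1 / (A + t * y)
      = ∑ j ∈ range J, (-t) ^ j / A ^ (j + 1) * y ^ j
        + (-t) ^ J / A ^ J * (y ^ J / (A + t * y)) := by
    intro y hy
    have hy0 := (hpos y hy).ne'
    induction J with
    | zero => simp
    | succ J ih =>
      rw [ih, sum_range_succ, add_assoc]
      congr 1
      field_simp
      ring
  have hcont : ContinuousOn (fun y => (-t) ^ J / A ^ J * (y ^ J / (A + t * y))) (Icc 0 1) :=
    continuousOn_const.mul
      ((continuousOn_pow J).div (by fun_prop) fun y hy => (hpos y hy).ne')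
  have hrest := abs_discrepancy_le_of_abs_sub_le hd hdb K (by positivity) fun y hy z hz =>
    abs_pow_div_add_mul_sub_le J hA ht0 ht1 hy hz
  rw [reciprocalDiscrepancy, discrepancy_congr _ hgeom,
    discrepancy_add hd hdb _ (by fun_prop) hcont,
    discrepancy_sum hd hdb _ _ fun _ _ => by fun_prop]
  simp only [discrepancy_const_mul]
  simp only [moment, div_mul_eq_mul_div]
  rw [add_sub_cancel_left, abs_div, abs_mul, abs_pow, abs_neg, abs_of_nonneg ht0,
    abs_of_pos (by positivity : 0 < A ^ J)]
  calc _ ≤ t ^ J * (2 ^ (K + 1) * (d + 1) * ((J + 1) / A)) / A ^ J := by gcongr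
    _ = 2 ^ (K + 1) * (d + 1) * (J + 1) * (t ^ J / A ^ (J + 1)) := by
        rw [pow_succ A]
        field_simp

lemma reciprocalDiscrepancy_add_two (hd : 0 < d) (hdb : d < b) (K : ℕ) {a : ℕ} (ha : 0 < a) :
    reciprocalDiscrepancy b d (K + 2) a 1
      = ∑ n ∈ Finset.Ico (a * b) ((a + 1) * b), reciprocalDiscrepancy b d (K + 2) n 1
        - (b : ℝ)⁻¹ * reciprocalDiscrepancy b d (K + 2) (a + d * (b : ℝ)⁻¹) (b : ℝ)⁻¹
        + b * reciprocalDiscrepancy b d (K + 1) (a + d * (b : ℝ)⁻¹) (b : ℝ)⁻¹ := by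
  have hb : (b : ℝ) ≠ 0 := Nat.cast_ne_zero.2 (by omega)
  have hcont : ContinuousOn (fun y : ℝ => 1 / (a + 1 * y)) (Icc 0 1) := by
    simpa only [one_mul] using continuousOn_one_div_add (Nat.cast_pos.2 ha)
  have hblock : ∀ c : ℕ, (fun y : ℝ => 1 / (a + 1 * prependDigit b c y))
      = fun y => b * (1 / (((a * b + c : ℕ) : ℝ) + 1 * y)) := by
    intro c
    funext y
    have hnum : (a : ℝ) + 1 * ((c + y) / b) = (((a * b + c : ℕ) : ℝ) + 1 * y) / b := by
      push_cast
      field_simp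
      ring
    rw [prependDigit, hnum, one_div_div, mul_one_div]
  have hdigit : (fun y : ℝ => 1 / (a + 1 * prependDigit b d y))
      = fun y => 1 / ((a + d * (b : ℝ)⁻¹) + (b : ℝ)⁻¹ * y) := by
    funext y
    rw [prependDigit]
    ring_nf
  simp only [reciprocalDiscrepancy]
  rw [discrepancy_succ hd hdb (K + 1) hcont, if_neg K.succ_ne_zero, hdigit,
    sum_Ico_eq_sum_range, add_mul, one_mul, Nat.add_sub_cancel_left]
  simp only [hblock, discrepancy_const_mul, ← mul_sum]
  field_simp
  ring

lemma abs_sum_reciprocalDiscrepancy_sub_le (hd : 0 < d) (hdb : d < b) (K J : ℕ) {a : ℕ}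
    (ha : 0 < a) :
    |∑ n ∈ Finset.Ico (a * b) ((a + 1) * b), reciprocalDiscrepancy b d (K + 1) n 1
        - ∑ j ∈ range J, (-1) ^ j * moment b d (K + 1) j * blockSum b a (j + 1)|
      ≤ 2 ^ (K + 1) * (d + 1) * (J + 1) * blockSum b a (J + 1) := by
  simp only [blockSum, mul_sum]
  rw [sum_comm, ← sum_sub_distrib]
  refine (abs_sum_le_sum_abs _ _).trans (sum_le_sum fun n hn => ?_)
  have hn1 : (1 : ℝ) ≤ n := by
    exact_mod_cast (Nat.mul_pos ha hdb.pos).trans_le (Finset.mem_Ico.1 hn).1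
  simpa only [mul_one_div, one_pow] using
    abs_reciprocalDiscrepancy_sub_le hd hdb K J hn1 zero_le_one le_rfl

lemma one_le_add_mul_inv {a : ℕ} (ha : 0 < a) (b d : ℕ) : 1 ≤ (a : ℝ) + d * (b : ℝ)⁻¹ :=
  le_add_of_le_of_nonneg (by exact_mod_cast ha) (by positivity)

lemma hasOrder_sum_reciprocalDiscrepancy_sub (hd : 0 < d) (K J : ℕ) {a : ℕ} (ha : 0 < a) :
    HasOrder J fun b =>
      ∑ n ∈ Finset.Ico (a * b) ((a + 1) * b), reciprocalDiscrepancy b d (K + 1) n 1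
        - ∑ j ∈ range J, (-1) ^ j * moment b d (K + 1) j * blockSum b a (j + 1) := by
  refine HasOrder.of_abs_le (C := 2 ^ (K + 1) * (d + 1) * (J + 1) * (1 / a ^ (J + 1))) ?_
  filter_upwards [eventually_gt_atTop d] with b hdb
  refine (abs_sum_reciprocalDiscrepancy_sub_le hd hdb K J ha).trans ?_
  rw [mul_assoc _ (1 / _), one_div_mul_eq_div]
  gcongr
  exact blockSum_succ_le ha hdb.pos J

lemma hasOrder_reciprocalDiscrepancy_inv_sub (hd : 0 < d) (K J : ℕ) {a : ℕ} (ha : 0 < a) :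
    HasOrder J fun b => reciprocalDiscrepancy b d (K + 1) (a + d * (b : ℝ)⁻¹) (b : ℝ)⁻¹
      - ∑ j ∈ range J, (-(b : ℝ)⁻¹) ^ j * moment b d (K + 1) j
        / (a + d * (b : ℝ)⁻¹) ^ (j + 1) := by
  refine HasOrder.of_abs_le (C := 2 ^ (K + 1) * (d + 1) * (J + 1)) ?_
  filter_upwards [eventually_gt_atTop d] with b hdb
  have hb1 : (b : ℝ)⁻¹ ≤ 1 := inv_le_one_of_one_le₀ (by exact_mod_cast hdb.pos)
  refine (abs_reciprocalDiscrepancy_sub_le hd hdb K J (one_le_add_mul_inv ha b d)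
    (by positivity) hb1).trans ?_
  gcongr
  exact div_le_self (by positivity) (one_le_pow₀ (one_le_add_mul_inv ha b d))

lemma one_div_pow_le_one_div_pow_of_le_of_le {a A : ℝ} (ha : 1 ≤ a) (haA : a ≤ A) {m n : ℕ}
    (hmn : m ≤ n) : 1 / A ^ n ≤ 1 / a ^ m := by
  gcongr 1 / ?_
  exact (pow_le_pow_right₀ ha hmn).trans (pow_le_pow_left₀ (by linarith) haA _)

lemma abs_sum_reciprocalDiscrepancy_add_le (hd : 0 < d) (hdb : d < b) (K : ℕ) {a : ℕ}
    (ha : 0 < a) :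
    |∑ n ∈ Finset.Ico (a * b) ((a + 1) * b), reciprocalDiscrepancy b d (K + 1) n 1
        + moment b d (K + 1) 1 * blockSum b a 2|
      ≤ 3 * 2 ^ (K + 1) * (d + 1) * ((b : ℝ)⁻¹ ^ 2 * (1 / (a : ℝ) ^ 2)) := by
  have hexpand := abs_sum_reciprocalDiscrepancy_sub_le hd hdb K 2 ha
  have htail : blockSum b a 3 ≤ (b : ℝ)⁻¹ ^ 2 * (1 / (a : ℝ) ^ 2) := by
    refine (blockSum_succ_le ha hdb.pos 2).trans ?_
    rw [← mul_one_div]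
    gcongr
    · exact Nat.one_le_cast.2 ha
    · norm_num
  simp only [sum_range_succ, sum_range_zero, moment_zero_right hd hdb] at hexpand
  calc _ ≤ 2 ^ (K + 1) * (d + 1) * ((2 : ℕ) + 1) * blockSum b a 3 := by
        refine (le_of_eq ?_).trans hexpand
        congr 1
        ring
    _ ≤ 2 ^ (K + 1) * (d + 1) * ((2 : ℕ) + 1) * ((b : ℝ)⁻¹ ^ 2 * (1 / (a : ℝ) ^ 2)) := by gcongr
    _ = _ := by
      push_cast
      ring

lemma abs_reciprocalDiscrepancy_le (hd : 0 < d) (hdb : d < b) (K : ℕ) {A t : ℝ}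
    (hA : 1 ≤ A) (ht0 : 0 ≤ t) (ht1 : t ≤ 1) :
    |reciprocalDiscrepancy b d (K + 1) A t| ≤ 2 * 2 ^ (K + 1) * (d + 1) * (t * (1 / A ^ 2)) := by
  have h := abs_reciprocalDiscrepancy_sub_le hd hdb K 1 hA ht0 ht1
  rw [sum_range_one, moment_zero_right hd hdb, mul_zero, zero_div, sub_zero] at h
  exact h.trans_eq (by push_cast; ring)

lemma abs_reciprocalDiscrepancy_add_le (hd : 0 < d) (hdb : d < b) (K : ℕ) {A t : ℝ}
    (hA : 1 ≤ A) (ht0 : 0 ≤ t) (ht1 : t ≤ 1) :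
    |reciprocalDiscrepancy b d (K + 1) A t + t * (moment b d (K + 1) 1 * (1 / A ^ 2))|
      ≤ 4 * 2 ^ (K + 1) * (d + 1) * (t ^ 3 * (1 / A ^ 4))
        + t ^ 2 * |moment b d (K + 1) 2| * (1 / A ^ 3) := by
  have h := abs_reciprocalDiscrepancy_sub_le hd hdb K 3 hA ht0 ht1
  simp only [sum_range_succ, sum_range_zero, moment_zero_right hd hdb] at h
  have hlast : |t ^ 2 * moment b d (K + 1) 2 * (1 / A ^ 3)|
      = t ^ 2 * |moment b d (K + 1) 2| * (1 / A ^ 3) := by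
    rw [abs_mul, abs_mul, abs_of_nonneg (by positivity : 0 ≤ t ^ 2),
      abs_of_nonneg (by positivity : 0 ≤ 1 / A ^ 3)]
  rw [← hlast]
  refine (le_of_eq ?_).trans ((abs_add_le _ _).trans (add_le_add_left
    (h.trans_eq (by push_cast; ring)) _))
  congr 1
  ring

lemma reciprocalDiscrepancy_add_two_add (hd : 0 < d) (hdb : d < b) (K : ℕ) {a : ℕ}
    (ha : 0 < a) (r s : ℝ) :
    reciprocalDiscrepancy b d (K + 2) a 1 + r + s
      = (∑ n ∈ Finset.Ico (a * b) ((a + 1) * b), reciprocalDiscrepancy b d (K + 2) n 1 + r)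
        - (b : ℝ)⁻¹ * reciprocalDiscrepancy b d (K + 2) (a + d * (b : ℝ)⁻¹) (b : ℝ)⁻¹
        + b * (reciprocalDiscrepancy b d (K + 1) (a + d * (b : ℝ)⁻¹) (b : ℝ)⁻¹
          + (b : ℝ)⁻¹ * s) := by
  have hb : (b : ℝ) ≠ 0 := Nat.cast_ne_zero.2 (by omega)
  rw [reciprocalDiscrepancy_add_two hd hdb K ha, mul_add, mul_inv_cancel_left₀ hb]
  ring

lemma abs_reciprocalDiscrepancy_add_two_add_le (hd : 0 < d) (hdb : d < b) (K : ℕ) {a : ℕ}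
    (ha : 0 < a) :
    |reciprocalDiscrepancy b d (K + 2) a 1 + moment b d (K + 2) 1 * blockSum b a 2
        + moment b d (K + 1) 1 * (1 / (a + d * (b : ℝ)⁻¹) ^ 2)|
      ≤ (7 * 2 ^ (K + 2) * (d + 1) + b * |moment b d (K + 1) 2|)
        * ((b : ℝ)⁻¹ ^ 2 * (1 / (a : ℝ) ^ 2)) := by
  have hb : (1 : ℝ) ≤ b := by exact_mod_cast hdb.pos
  have hbx : (b : ℝ) * (b : ℝ)⁻¹ = 1 := mul_inv_cancel₀ (by linarith)
  have hA1 := one_le_add_mul_inv ha b d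
  have hdecay : ∀ {n : ℕ}, 2 ≤ n → 1 / ((a : ℝ) + d * (b : ℝ)⁻¹) ^ n ≤ 1 / (a : ℝ) ^ 2 :=
    one_div_pow_le_one_div_pow_of_le_of_le (by exact_mod_cast ha)
      (le_add_of_nonneg_right (by positivity))
  have hblock := abs_sum_reciprocalDiscrepancy_add_le hd hdb (K + 1) ha
  rw [reciprocalDiscrepancy_add_two_add hd hdb K ha]
  have hx0 : 0 ≤ (b : ℝ)⁻¹ := by positivity
  have hx1 : (b : ℝ)⁻¹ ≤ 1 := inv_le_one_of_one_le₀ hb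
  generalize (b : ℝ)⁻¹ = x at *
  generalize (a : ℝ) + d * x = A at *
  generalize 1 / (a : ℝ) ^ 2 = q at *
  have hsame : |x * reciprocalDiscrepancy b d (K + 2) A x|
      ≤ x * (2 * 2 ^ (K + 2) * (d + 1) * (x * q)) := by
    rw [abs_mul, abs_of_nonneg hx0]
    gcongr
    refine (abs_reciprocalDiscrepancy_le hd hdb (K + 1) hA1 hx0 hx1).trans ?_
    gcongr
    exact hdecay le_rfl
  have hprev : |b * (reciprocalDiscrepancy b d (K + 1) A x
      + x * (moment b d (K + 1) 1 * (1 / A ^ 2)))|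
      ≤ b * (4 * 2 ^ (K + 1) * (d + 1) * (x ^ 3 * q) + x ^ 2 * |moment b d (K + 1) 2| * q) := by
    rw [abs_mul, Nat.abs_cast]
    gcongr
    refine (abs_reciprocalDiscrepancy_add_le hd hdb K hA1 hx0 hx1).trans ?_
    gcongr <;> exact hdecay (by norm_num)
  refine (abs_add_le _ _).trans ((add_le_add ((abs_sub _ _).trans
    (add_le_add hblock hsame)) hprev).trans_eq ?_)
  linear_combination 4 * 2 ^ (K + 1) * (d + 1) * x ^ 2 * q * hbx

lemma hasOrder_reciprocalDiscrepancy_add_two_sub (hd : 0 < d) (K : ℕ) {a : ℕ} (ha : 0 < a) :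
    HasOrder 4 fun b => reciprocalDiscrepancy b d (K + 2) a 1
      - (-moment b d (K + 2) 1 * blockSum b a 2 + moment b d (K + 2) 2 * blockSum b a 3
        + (b : ℝ)⁻¹ ^ 2 * moment b d (K + 2) 1 * (a + d * (b : ℝ)⁻¹)⁻¹ ^ 2
        - moment b d (K + 1) 1 * (a + d * (b : ℝ)⁻¹)⁻¹ ^ 2
        + (b : ℝ)⁻¹ * moment b d (K + 1) 2 * (a + d * (b : ℝ)⁻¹)⁻¹ ^ 3
        - (b : ℝ)⁻¹ ^ 2 * moment b d (K + 1) 3 * (a + d * (b : ℝ)⁻¹)⁻¹ ^ 4) := by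
  have hbounded : HasOrder 0 fun b : ℕ => (a + d * (b : ℝ)⁻¹)⁻¹ := by
    refine HasOrder.of_abs_le (C := 1) (.of_forall fun b => ?_)
    have hA := one_le_add_mul_inv ha b d
    rw [abs_of_nonneg (by positivity), pow_zero, mul_one]
    exact inv_le_one_of_one_le₀ hA
  have hpow : ∀ n : ℕ, HasOrder 0 fun b : ℕ => (a + d * (b : ℝ)⁻¹)⁻¹ ^ n := fun n => by
    simpa [HasOrder] using IsBigO.pow hbounded n
  have hblock := hasOrder_sum_reciprocalDiscrepancy_sub hd (K + 1) 4 ha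
  have hsame := (hasOrder_reciprocalDiscrepancy_inv_sub hd (K + 1) 3 ha).inv_pow_mul 1
  have hprev := (hasOrder_reciprocalDiscrepancy_inv_sub hd K 5 ha).natCast_mul
  have hthird := (hasOrder_moment_add_two hd (K + 1) 1).mul (hasOrder_blockSum_succ ha 3)
  have hsecond := ((hasOrder_moment_add_two hd (K + 1) 0).mul (hpow 3)).inv_pow_mul 3
  have hfourth := ((hasOrder_moment_add_two hd K 2).mul (hpow 5)).inv_pow_mul 3
  refine ((((hblock.sub hthird).sub hsame).sub hsecond).add (hprev.add hfourth)).congr' ?_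
  filter_upwards [eventually_gt_atTop d] with b hdb
  have hbx : (b : ℝ) * (b : ℝ)⁻¹ = 1 := mul_inv_cancel₀ (Nat.cast_ne_zero.2 (by omega))
  have hrec := reciprocalDiscrepancy_add_two hd hdb K ha
  simp only [sum_range_succ, sum_range_zero, moment_zero_right hd hdb, div_eq_mul_inv, ← inv_pow]
  generalize (b : ℝ)⁻¹ = x at *
  generalize ((a : ℝ) + d * x)⁻¹ = y
  linear_combination (moment b d (K + 1) 1 * y ^ 2 - x * moment b d (K + 1) 2 * y ^ 3
    + x ^ 2 * moment b d (K + 1) 3 * y ^ 4 - x ^ 3 * moment b d (K + 1) 4 * y ^ 5) * hbx - hrec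

lemma exists_abs_reciprocalDiscrepancy_add_two_add_le (hd : 0 < d) (K : ℕ) :
    ∃ C, ∀ᶠ b : ℕ in atTop, ∀ a : ℕ, 0 < a →
      |reciprocalDiscrepancy b d (K + 2) a 1 + moment b d (K + 2) 1 * blockSum b a 2
        + moment b d (K + 1) 1 * (1 / (a + d * (b : ℝ)⁻¹) ^ 2)|
        ≤ C * ((b : ℝ)⁻¹ ^ 2 * (1 / (a : ℝ) ^ 2)) := by
  obtain ⟨M, hM⟩ := (hasOrder_moment_add_two hd K 0).natCast_mul.bound
  refine ⟨7 * 2 ^ (K + 2) * (d + 1) + M, ?_⟩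
  filter_upwards [hM, eventually_gt_atTop d] with b hMb hdb a ha
  refine (abs_reciprocalDiscrepancy_add_two_add_le hd hdb K ha).trans ?_
  gcongr
  simpa [Real.norm_eq_abs, abs_mul] using hMb

lemma hasOrder_reciprocalDiscrepancy_add_two_add (hd : 0 < d) (K : ℕ) {a : ℕ} (ha : 0 < a) :
    HasOrder 2 fun b => reciprocalDiscrepancy b d (K + 2) a 1
      + moment b d (K + 2) 1 * blockSum b a 2
      + moment b d (K + 1) 1 * (1 / (a + d * (b : ℝ)⁻¹) ^ 2) := by
  obtain ⟨C, hC⟩ := exists_abs_reciprocalDiscrepancy_add_two_add_le hd K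
  exact HasOrder.of_abs_le (C := C * (1 / (a : ℝ) ^ 2))
    (hC.mono fun b hb => (hb a ha).trans_eq (by ring))

lemma hasOrder_sum_reciprocalDiscrepancy_add_two_add (hd : 0 < d) (K : ℕ) :
    HasOrder 2 fun b => ∑ a ∈ Finset.Ico 1 b, reciprocalDiscrepancy b d (K + 2) a 1
      + moment b d (K + 2) 1 * ∑ a ∈ Finset.Ico 1 b, blockSum b a 2
      + moment b d (K + 1) 1 * ∑ a ∈ Finset.Ico 1 b, 1 / (a + d * (b : ℝ)⁻¹) ^ 2 := by
  obtain ⟨C, hC⟩ := exists_abs_reciprocalDiscrepancy_add_two_add_le hd K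
  refine HasOrder.of_abs_le (C := |C| * 2) (hC.mono fun b hb => ?_)
  rw [mul_sum, mul_sum, ← sum_add_distrib, ← sum_add_distrib]
  calc _ ≤ ∑ a ∈ Finset.Ico 1 b, |C| * (b : ℝ)⁻¹ ^ 2 * (1 / (a : ℝ) ^ 2) := by
        refine (abs_sum_le_sum_abs _ _).trans (sum_le_sum fun a ha => ?_)
        refine (hb a (Finset.mem_Ico.1 ha).1).trans ?_
        rw [mul_assoc]
        gcongr
        exact le_abs_self C
    _ ≤ |C| * (b : ℝ)⁻¹ ^ 2 * 2 := by
        rw [← mul_sum]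
        gcongr
        exact sum_Ico_one_div_sq_le b
    _ = |C| * 2 * (b : ℝ)⁻¹ ^ 2 := by ring

lemma hasCubicExpansion_inv_add_mul_inv (r : ℝ) :
    HasCubicExpansion (fun b => (r + r * (b : ℝ)⁻¹)⁻¹) (1 / r) (-1 / r) (1 / r) (-1 / r) := by
  have hinv := (HasCubicExpansion.polynomial 1 1 0 0).inv.const_mul (1 / r)
  convert hinv using 1
  · funext b
    rw [one_div, ← mul_inv]
    ring_nf
  all_goals ring

lemma hasCubicExpansion_sum_reciprocalDiscrepancy_four (hd : 0 < d) : HasCubicExpansion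
    (fun b => (b : ℝ)⁻¹ ^ 2 * ∑ a ∈ Finset.Ico 1 b, reciprocalDiscrepancy b d 4 a 1)
    0 0 ((d + 1 / 2) * zetaR 2) ((d + 1 / 2) * (3 * zetaR 2 - 2 * d * zetaR 3)) := by
  have hrem := ((hasOrder_sum_reciprocalDiscrepancy_add_two_add hd 2).inv_pow_mul
    2).hasCubicExpansion
  have hblock := HasOrder.hasCubicExpansion_inv_sq_mul (a₀ := 0) (a₁ := 1)
    (hasOrder_sum_blockSum_two_sub.congr' (.of_forall fun b => by ring))
  have hdigit := HasOrder.hasCubicExpansion_inv_sq_mul (a₀ := zetaR 2)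
    (a₁ := -(1 + 2 * d * zetaR 3))
    ((hasOrder_sum_one_div_add_sq_sub d).congr' (.of_forall fun b => by ring))
  convert (hrem.sub ((hasCubicExpansion_moment_four_one hd).mul hblock)).sub
    ((hasCubicExpansion_moment_three_one hd).mul hdigit) using 1
  · funext b; ring
  all_goals ring

lemma hasCubicExpansion_reciprocalDiscrepancy_four (hd : 0 < d) : HasCubicExpansion
    (fun b => (b : ℝ)⁻¹ ^ 2 * reciprocalDiscrepancy b d 4 d 1)
    0 0 ((d + 1 / 2) / d ^ 2) ((d + 1 / 2) * (1 / d - 1 / (d + 1) + 1 / d ^ 2)) := by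
  have hrem := ((hasOrder_reciprocalDiscrepancy_add_two_add hd 2 hd).inv_pow_mul
    2).hasCubicExpansion
  have hblock := (hasCubicExpansion_blockSum_two hd).hasOrder_sub_linear
    |>.hasCubicExpansion_inv_sq_mul
  have hinv := hasCubicExpansion_inv_add_mul_inv d
  have hdigit := (hinv.mul hinv).hasOrder_sub_linear.hasCubicExpansion_inv_sq_mul
  convert (hrem.sub ((hasCubicExpansion_moment_four_one hd).mul hblock)).sub
    ((hasCubicExpansion_moment_three_one hd).mul hdigit) using 1
  · funext b
    simp only [one_div, ← inv_pow]
    ring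
  all_goals ring

lemma hasCubicExpansion_moment_three_two_mul_blockSum (hd : 0 < d) : HasCubicExpansion
    (fun b => moment b d 3 2 * blockSum b d 3)
    0 0 0 ((1 + 2 * d) * -(d + 1 / 2) * ((1 / d ^ 2 - 1 / (d + 1) ^ 2) / 2)) := by
  have hmoment := (hasOrder_moment_three_two_sub hd).mul (hasOrder_blockSum_succ hd 2)
  have hblock := ((hasOrder_blockSum_three_sub hd).inv_pow_mul 1).const_mul
    ((1 + 2 * d) * -(d + 1 / 2))
  exact (hmoment.add hblock).congr' (.of_forall fun b => by ring)

lemma hasCubicExpansion_reciprocalDiscrepancy_three (hd : 0 < d) : HasCubicExpansion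
    (fun b => reciprocalDiscrepancy b d 3 d 1)
    ((d + 1 / 2) / d ^ 2)
    ((d + 1 / 2) * (1 / d - 1 / (d + 1)))
    ((d + 1 / 2) * ((1 / d ^ 2 - 1 / (d + 1) ^ 2) / 2 + 3 * (1 / d - 1 / (d + 1)) - 1 / d ^ 2
      - (1 + 2 * d) / d ^ 3))
    ((d + 1 / 2) * ((1 / d ^ 3 - 1 / (d + 1) ^ 3) / 6 + 3 / 2 * (1 / d ^ 2 - 1 / (d + 1) ^ 2)
      + 3 * (1 / d - 1 / (d + 1)) - (1 + 2 * d) * ((1 / d ^ 2 - 1 / (d + 1) ^ 2) / 2)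
      - 3 / d ^ 2 + (1 + 4 * d) / d ^ 3 + 1 / d ^ 4) - (d ^ 2 + d + 1 / 3) / d ^ 3) := by
  have hrem := (hasOrder_reciprocalDiscrepancy_add_two_sub hd 1 hd).hasCubicExpansion
  have hinv := hasCubicExpansion_inv_add_mul_inv d
  have hsq := hinv.mul hinv
  have hthree := hasCubicExpansion_moment_three_one hd
  have hblock := hthree.mul (hasCubicExpansion_blockSum_two hd)
  have hsame := (hthree.mul hsq).hasOrder_sub_linear.hasCubicExpansion_inv_sq_mul
  have hprev := (hasCubicExpansion_moment_two_one hd).mul hsq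
  have hprev_sq := (hasCubicExpansion_inv_mul_moment_two_two hd).mul (hsq.mul hinv)
  have hcube := HasOrder.hasCubicExpansion_inv_sq_mul (a₀ := 0) (a₁ := -(d + 1 / 2))
    ((hasOrder_moment_two_three_sub hd).congr' (.of_forall fun b => by ring))
  have hprev_cube := hcube.mul (hsq.mul hsq)
  convert hrem.add (((((hsame.sub hblock).add
    (hasCubicExpansion_moment_three_two_mul_blockSum hd)).sub hprev).add hprev_sq).sub
      hprev_cube) using 1
  · funext b; ring
  all_goals ring

lemma pow_mul_irwinSum_succ_sub_mul_log (hd : 0 < d) (hdb : d < b) (k : ℕ) :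
    (b : ℝ) ^ (2 * k + 1) * (irwinSum b d (k + 1) - b * Real.log b)
      = reciprocalDiscrepancy b d (k + 1) d 1
        + (b : ℝ)⁻¹ ^ 2 * ∑ a ∈ Finset.Ico 1 b, reciprocalDiscrepancy b d (k + 2) a 1
        - (b : ℝ)⁻¹ ^ 2 * reciprocalDiscrepancy b d (k + 2) d 1 := by
  have hb : (b : ℝ) ≠ 0 := Nat.cast_ne_zero.2 (by omega)
  have h := pow_mul_irwinSum_sub_mul_log hd hdb (k + 1)
  simp only [reciprocalDiscrepancy, one_mul]
  refine mul_left_cancel₀ hb (Eq.trans ?_ (h.trans ?_))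
  · ring
  · field_simp
    ring

lemma hasCubicExpansion_irwinSum_three (hd : 0 < d) : HasCubicExpansion
    (fun b => (b : ℝ) ^ 5 * (irwinSum b d 3 - b * Real.log b))
    ((d + 1 / 2) / d ^ 2)
    ((d + 1 / 2) * d / (d ^ 2 * (d + 1)))
    ((d + 1 / 2) * zetaR 2 + (d + 1 / 2) * (-2 * d ^ 3 - 10 * d ^ 2 - 11 * d - 2)
      / (2 * d ^ 3 * (d + 1) ^ 2))
    (-(2 * d + 1) * d * zetaR 3 + 3 * (d + 1 / 2) * zetaR 2
      - (12 * d ^ 6 - 50 * d ^ 4 - 81 * d ^ 3 - 71 * d ^ 2 - 33 * d - 6)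
        / (12 * d ^ 4 * (d + 1) ^ 3)) := by
  have hd0 : (d : ℝ) ≠ 0 := Nat.cast_ne_zero.2 hd.ne'
  have hd1 : (d : ℝ) + 1 ≠ 0 := by positivity
  have hrec := ((hasCubicExpansion_reciprocalDiscrepancy_three hd).add
    (hasCubicExpansion_sum_reciprocalDiscrepancy_four hd)).sub
      (hasCubicExpansion_reciprocalDiscrepancy_four hd)
  convert hrec.congr' ((eventually_gt_atTop d).mono fun b hdb =>
    (pow_mul_irwinSum_succ_sub_mul_log hd hdb 2).symm) using 1
  all_goals field_simp
  all_goals ring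

end Irwin

theorem irwin_d_three_asymptotic (d : ℕ) (hd : 1 ≤ d) (a1 a2 a3 a4 : ℝ)
    (h1 : a1 = ((d : ℝ) + 1 / 2) / (d : ℝ) ^ 2)
    (h2 : a2 = ((d : ℝ) + 1 / 2) * d / ((d : ℝ) ^ 2 * ((d : ℝ) + 1)))
    (h3 : a3 = ((d : ℝ) + 1 / 2) * zetaR 2
      + ((d : ℝ) + 1 / 2) * (-2 * (d : ℝ) ^ 3 - 10 * (d : ℝ) ^ 2 - 11 * d - 2)
        / (2 * (d : ℝ) ^ 3 * ((d : ℝ) + 1) ^ 2))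
    (h4 : a4 = -(2 * (d : ℝ) + 1) * d * zetaR 3 + 3 * ((d : ℝ) + 1 / 2) * zetaR 2
      - (12 * (d : ℝ) ^ 6 - 50 * (d : ℝ) ^ 4 - 81 * (d : ℝ) ^ 3 - 71 * (d : ℝ) ^ 2
          - 33 * d - 6)
        / (12 * (d : ℝ) ^ 4 * ((d : ℝ) + 1) ^ 3)) :
    (fun b : ℕ => irwinSum b d 3 -
      ((b : ℝ) * Real.log b
        + a1 / (b : ℝ) ^ 5 + a2 / (b : ℝ) ^ 6 + a3 / (b : ℝ) ^ 7 + a4 / (b : ℝ) ^ 8))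
      =O[atTop] fun b : ℕ => ((b : ℝ) ^ 9)⁻¹ := by
  subst h1 h2 h3 h4
  refine IsBigO.congr' (Irwin.HasOrder.inv_pow_mul 5 (Irwin.hasCubicExpansion_irwinSum_three hd))
    ?_ (.of_forall fun b => inv_pow _ 9)
  filter_upwards [eventually_ne_atTop 0] with b hb
  have hb0 : (b : ℝ) ≠ 0 := Nat.cast_ne_zero.2 hb
  field_simp
  ring
end

section
/- For every pair of fixed integers d ≥ 0 and k ≥ 0 there exists a real sequence (aₙ)_{n≥1} such that for every N ≥ 0, as the integer b → ∞ (with b > d), I(b,d,k) − b·log b + c₀(b) − ∑_{n=1}^{N} aₙ/bⁿ = O(b^{−(N+1)}), where c₀(b) = b·log(1 + 1/d) if k = 0 and d ≥ 1, and c₀(b) = 0 otherwise; i.e. I(b,d,k) − b·log b (corrected by −b·log(1+1/d) when k = 0 and d ≥ 1) admits an asymptotic expansion to all orders in descending powers of b. -/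
open Filter Asymptotics

/-!
Let `μ_j` be the functional `f ↦ ∑ b⁻ˡ f (0.a₁…aₗ)`, the sum being over all strings of base-`b`
digits in which `d` occurs exactly `j` times. Sorting integers by their leading digit `n` expresses
the Irwin sum through `μ_k` and `μ_{k-1}` applied to the functions `x ↦ 1 / (n + x)`, and Gauss's
multiplication formula gives `∑_{0 < n < b} 1 / (n + x) = log b - (Ψ - A Ψ)(x)`, where
`Ψ(x) = Γ'(1 + x) / Γ(1 + x)` and `A f` is the mean of `f` over the points `(a + x) / b`, `a < b`.

Splitting off the first digit of a string gives
`μ_j(f) = [j = 0] f(0) + μ_j(A f) + b⁻¹ (μ_{j-1} - μ_j)(x ↦ f((d + x) / b))`.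
The Euler–Maclaurin formula expands `A f` around `∫ f` and Taylor's formula expands `f((d + x) / b)`
around `f(0)`. As `‖μ_j‖ ≤ b`, this identity turns an expansion of `b⁻¹ μ_j(f)` to order `N` for all
smooth `f` into one to order `N + 1`.
-/

open MeasureTheory unitInterval
open scoped ContDiff Nat

section Expansion

variable {E F : Type*} [NormedAddCommGroup E] [NormedSpace ℝ E] [NormedAddCommGroup F]
  [NormedSpace ℝ F] {N : ℕ} {f g : ℕ → E} {c c' : ℕ → E} {v w : E}

/-- `f b = ∑_{r < N} c r / b ^ r + O(1 / b ^ N)` as `b → ∞`: an `N`-term asymptotic expansion of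
`f` in descending powers of `b`. The coefficients `c r` with `N ≤ r` are irrelevant. -/
def HasExpansion (N : ℕ) (f c : ℕ → E) : Prop :=
  (fun b : ℕ => f b - ∑ r ∈ Finset.range N, (b : ℝ)⁻¹ ^ r • c r) =O[atTop]
    fun b => (b : ℝ)⁻¹ ^ N

/-- `f` has an `N`-term asymptotic expansion in descending powers of `b` whose constant term is `v`.
For `N = 0` this only says that `f` is bounded. -/
def HasExpansionFrom (N : ℕ) (v : E) (f : ℕ → E) : Prop :=
  ∃ c, c 0 = v ∧ HasExpansion N f c

theorem hasExpansion_zero_iff : HasExpansion 0 f c ↔ f =O[atTop] fun _ => (1 : ℝ) := by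
  simp [HasExpansion]

theorem hasExpansion_succ_iff :
    HasExpansion (N + 1) f c ↔
      HasExpansion N (fun b => (b : ℝ) • (f b - c 0)) fun r => c (r + 1) := by
  have hb : ∀ᶠ b : ℕ in atTop, (b : ℝ) ≠ 0 :=
    (eventually_ne_atTop 0).mono fun b => Nat.cast_ne_zero.2
  have hrem : (fun b : ℕ => f b - ∑ r ∈ Finset.range (N + 1), (b : ℝ)⁻¹ ^ r • c r) =ᶠ[atTop]
      fun b => (b : ℝ)⁻¹ • ((b : ℝ) • (f b - c 0)
        - ∑ r ∈ Finset.range N, (b : ℝ)⁻¹ ^ r • c (r + 1)) := by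
    filter_upwards [hb] with b hb
    rw [Finset.sum_range_succ', smul_sub, inv_smul_smul₀ hb, Finset.smul_sum]
    simp only [smul_smul, pow_succ', pow_zero, one_smul, sub_sub, add_comm (c 0)]
  have hpow : (fun b : ℕ => (b : ℝ)⁻¹ ^ (N + 1)) = fun b : ℕ => (b : ℝ)⁻¹ • (b : ℝ)⁻¹ ^ N := by
    simp only [pow_succ', smul_eq_mul]
  rw [HasExpansion, isBigO_congr hrem .rfl, hpow, HasExpansion]
  refine ⟨fun h => ?_, fun h => (isBigO_refl _ _).smul h⟩
  refine ((isBigO_refl (fun b : ℕ => (b : ℝ)) atTop).smul h).congr' ?_ ?_ <;>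
    filter_upwards [hb] with b hb using smul_inv_smul₀ hb _

theorem HasExpansion.congr' (h : HasExpansion N f c) (hfg : f =ᶠ[atTop] g) : HasExpansion N g c :=
  IsBigO.congr' h (hfg.fun_sub .rfl) .rfl

theorem HasExpansion.add (hf : HasExpansion N f c) (hg : HasExpansion N g c') :
    HasExpansion N (f + g) (c + c') := by
  refine (IsBigO.add hf hg).congr_left fun b => ?_
  simp only [Pi.add_apply, smul_add, Finset.sum_add_distrib]
  abel

theorem HasExpansion.sub (hf : HasExpansion N f c) (hg : HasExpansion N g c') :
    HasExpansion N (f - g) (c - c') := by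
  refine (IsBigO.sub hf hg).congr_left fun b => ?_
  simp only [Pi.sub_apply, smul_sub, Finset.sum_sub_distrib]
  abel

theorem HasExpansion.pred (h : HasExpansion (N + 1) f c) : HasExpansion N f c := by
  have hinv : (fun b : ℕ => (b : ℝ)⁻¹) =O[atTop] fun _ => (1 : ℝ) :=
    tendsto_inv_atTop_nhds_zero_nat.isBigO_one ℝ
  have hpow : (fun b : ℕ => (b : ℝ)⁻¹ ^ (N + 1)) =O[atTop] fun b : ℕ => (b : ℝ)⁻¹ ^ N := by
    simpa [pow_succ] using (isBigO_refl (fun b : ℕ => (b : ℝ)⁻¹ ^ N) atTop).mul hinv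
  have hlast : (fun b : ℕ => (b : ℝ)⁻¹ ^ N • c N) =O[atTop] fun b : ℕ => (b : ℝ)⁻¹ ^ N := by
    simpa using (isBigO_refl (fun b : ℕ => (b : ℝ)⁻¹ ^ N) atTop).smul
      (isBigO_const_const (c N) (one_ne_zero (α := ℝ)) atTop)
  refine ((IsBigO.trans h hpow).add hlast).congr_left fun b => ?_
  rw [Finset.sum_range_succ]
  abel

theorem HasExpansion.mono {M : ℕ} (h : HasExpansion N f c) (hMN : M ≤ N) : HasExpansion M f c := by
  induction N, hMN using Nat.le_induction with
  | base => exact h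
  | succ N _ ih => exact ih h.pred

theorem HasExpansion.tendsto (h : HasExpansion (N + 1) f c) : Tendsto f atTop (nhds (c 0)) := by
  have h₁ : HasExpansion 1 f c := h.mono (by lia)
  have h₂ : (fun b => f b - c 0) =O[atTop] fun b : ℕ => (b : ℝ)⁻¹ := by
    simpa [HasExpansion] using h₁
  exact tendsto_sub_nhds_zero_iff.1 (h₂.trans_tendsto tendsto_inv_atTop_nhds_zero_nat)

theorem HasExpansion.coeff_eq (h : HasExpansion N f c) (h' : HasExpansion N f c') {r : ℕ}
    (hr : r < N) : c r = c' r := by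
  induction r generalizing N f c c' with
  | zero =>
    obtain ⟨N, rfl⟩ := Nat.exists_eq_succ_of_ne_zero hr.ne'
    exact tendsto_nhds_unique h.tendsto h'.tendsto
  | succ r ih =>
    obtain ⟨N, rfl⟩ := Nat.exists_eq_succ_of_ne_zero (Nat.ne_zero_of_lt hr)
    have h₀ : c 0 = c' 0 := tendsto_nhds_unique h.tendsto h'.tendsto
    rw [hasExpansion_succ_iff] at h h'
    exact ih h (h₀ ▸ h') (Nat.succ_lt_succ_iff.1 hr)

namespace HasExpansionFrom

theorem congr' (h : HasExpansionFrom N v f) (hfg : f =ᶠ[atTop] g) : HasExpansionFrom N v g :=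
  let ⟨c, hc₀, hc⟩ := h
  ⟨c, hc₀, hc.congr' hfg⟩

theorem add (hf : HasExpansionFrom N v f) (hg : HasExpansionFrom N w g) :
    HasExpansionFrom N (v + w) (f + g) :=
  let ⟨c, hc₀, hc⟩ := hf
  let ⟨c', hc'₀, hc'⟩ := hg
  ⟨c + c', by simp only [Pi.add_apply, hc₀, hc'₀], hc.add hc'⟩

theorem sub (hf : HasExpansionFrom N v f) (hg : HasExpansionFrom N w g) :
    HasExpansionFrom N (v - w) (f - g) :=
  let ⟨c, hc₀, hc⟩ := hf
  let ⟨c', hc'₀, hc'⟩ := hg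
  ⟨c - c', by simp only [Pi.sub_apply, hc₀, hc'₀], hc.sub hc'⟩

theorem pred (h : HasExpansionFrom (N + 1) v f) : HasExpansionFrom N v f :=
  let ⟨c, hc₀, hc⟩ := h
  ⟨c, hc₀, hc.pred⟩

theorem succ (h : HasExpansionFrom N w fun b => (b : ℝ) • (f b - v)) :
    HasExpansionFrom (N + 1) v f :=
  let ⟨c, _, hc⟩ := h
  ⟨fun r => r.casesOn v c, rfl, hasExpansion_succ_iff.2 hc⟩

theorem const (N : ℕ) (v : E) : HasExpansionFrom N v fun _ => v := by
  induction N generalizing v with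
  | zero => exact ⟨fun _ => v, rfl, hasExpansion_zero_iff.2 (isBigO_const_const v one_ne_zero _)⟩
  | succ N ih => exact succ (w := 0) (by simpa using ih 0)

theorem inv_smul (h : HasExpansionFrom N w f) :
    HasExpansionFrom (N + 1) 0 fun b => (b : ℝ)⁻¹ • f b :=
  succ <| h.congr' <| (eventually_ne_atTop 0).mono fun b hb => by
    simp only [sub_zero, smul_inv_smul₀ (Nat.cast_ne_zero.2 hb : (b : ℝ) ≠ 0)]

theorem exists_forall_hasExpansion (h : ∀ N, HasExpansionFrom N v f) :
    ∃ c, c 0 = v ∧ ∀ N, HasExpansion N f c := by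
  choose c hc₀ hc using h
  refine ⟨fun r => c (r + 1) r, hc₀ 1, fun N => ?_⟩
  have hcoeff : ∀ r ∈ Finset.range N, c N r = c (r + 1) r := fun r hr =>
    ((hc N).mono (Finset.mem_range.1 hr)).coeff_eq (hc (r + 1)) r.lt_succ_self
  refine IsBigO.congr_left (hc N) fun b => congrArg _ (Finset.sum_congr rfl fun r hr => ?_)
  rw [hcoeff r hr]

end HasExpansionFrom

theorem isBigO_clm_apply {T : ℕ → E →L[ℝ] F} {C : ℝ} (hT : ∀ᶠ b in atTop, ‖T b‖ ≤ C)
    (hf : f =O[atTop] fun _ => (1 : ℝ)) : (fun b => T b (f b)) =O[atTop] fun _ => (1 : ℝ) := by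
  have hT' : (fun b => ‖T b‖) =O[atTop] fun _ => (1 : ℝ) := .of_bound C (by simpa using hT)
  simpa using (IsBigO.of_bound 1 (.of_forall fun b => by
    simpa using (T b).le_opNorm (f b))).trans (hT'.mul hf.norm_left)

theorem HasExpansion.clm_apply {T : ℕ → E →L[ℝ] F} {C : ℝ} (hT : ∀ᶠ b in atTop, ‖T b‖ ≤ C)
    {L : E → F} (hf : HasExpansion N f c)
    (hc : ∀ r, HasExpansionFrom N (L (c r)) fun b => T b (c r)) :
    HasExpansionFrom N (L (c 0)) fun b => T b (f b) := by
  induction N generalizing f c with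
  | zero =>
    exact ⟨fun _ => L (c 0), rfl, hasExpansion_zero_iff.2 <|
      isBigO_clm_apply hT (hasExpansion_zero_iff.1 hf)⟩
  | succ N ih =>
    have htail := ih (hasExpansion_succ_iff.1 hf) fun r => (hc (r + 1)).pred
    have hsum := (hc 0).add htail.inv_smul
    rw [add_zero] at hsum
    refine hsum.congr' <| (eventually_ne_atTop 0).mono fun b hb => ?_
    simp [inv_smul_smul₀ (Nat.cast_ne_zero.2 hb : (b : ℝ) ≠ 0)]

end Expansion

section UnitInterval

variable {f g f' g' : C(I, ℝ)}

theorem integrable_unitInterval (f : C(I, ℝ)) : Integrable f :=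
  f.continuous.integrable_of_hasCompactSupport (.of_compactSpace f)

/-- Smoothness on the closed unit interval, one-sided at the end points. -/
def SmoothOnUnit (f : C(I, ℝ)) : Prop :=
  ContDiffOn ℝ ∞ (Set.IccExtend zero_le_one f) I

/-- `f'` is the derivative of `f` on the closed unit interval, one-sided at the end points. -/
def HasDerivOnUnit (f f' : C(I, ℝ)) : Prop :=
  ∀ x : I, HasDerivWithinAt (Set.IccExtend zero_le_one f) (f' x) I x

theorem smoothOnUnit_of_eqOn {g : ℝ → ℝ} (hg : ContDiffOn ℝ ∞ g I) (h : ∀ x : I, f x = g x) :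
    SmoothOnUnit f :=
  hg.congr fun x hx => (Set.IccExtend_of_mem zero_le_one f hx).trans (h ⟨x, hx⟩)

theorem hasDerivOnUnit_of_eqOn {g : ℝ → ℝ} (hg : ∀ x : I, HasDerivWithinAt g (f' x) I x)
    (h : ∀ x : I, f x = g x) : HasDerivOnUnit f f' := fun x =>
  (hg x).congr (fun y hy => (Set.IccExtend_of_mem zero_le_one f hy).trans (h ⟨y, hy⟩))
    ((Set.IccExtend_val zero_le_one f x).trans (h x))

theorem SmoothOnUnit.const_smul (hf : SmoothOnUnit f) (c : ℝ) : SmoothOnUnit (c • f) :=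
  contDiffOn_const.smul hf

theorem SmoothOnUnit.exists_hasDerivOnUnit (hf : SmoothOnUnit f) :
    ∃ f', SmoothOnUnit f' ∧ HasDerivOnUnit f f' := by
  obtain ⟨hdiff, hderiv⟩ := (contDiffOn_infty_iff_derivWithin uniqueDiffOn_Icc_zero_one).1 hf
  exact ⟨⟨fun x => derivWithin (Set.IccExtend zero_le_one f) I x,
    hderiv.continuousOn.domRestrict⟩, smoothOnUnit_of_eqOn hderiv fun _ => rfl,
    fun x => (hdiff x x.2).hasDerivWithinAt⟩

namespace HasDerivOnUnit

theorem const (c : ℝ) : HasDerivOnUnit (.const I c) 0 := fun x =>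
  hasDerivWithinAt_const (x : ℝ) I c

theorem add (hf : HasDerivOnUnit f f') (hg : HasDerivOnUnit g g') :
    HasDerivOnUnit (f + g) (f' + g') := fun x => (hf x).add (hg x)

theorem sub (hf : HasDerivOnUnit f f') (hg : HasDerivOnUnit g g') :
    HasDerivOnUnit (f - g) (f' - g') := fun x => (hf x).sub (hg x)

theorem const_smul (c : ℝ) (hf : HasDerivOnUnit f f') : HasDerivOnUnit (c • f) (c • f') :=
  fun x => (hf x).const_smul c

theorem sum {ι : Type*} {s : Finset ι} {f f' : ι → C(I, ℝ)}
    (h : ∀ i ∈ s, HasDerivOnUnit (f i) (f' i)) : HasDerivOnUnit (∑ i ∈ s, f i) (∑ i ∈ s, f' i) := by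
  classical
  induction s using Finset.induction_on with
  | empty => simpa using const 0
  | insert i s hi ih =>
    rw [Finset.sum_insert hi, Finset.sum_insert hi]
    exact (h i (s.mem_insert_self i)).add (ih fun j hj => h j (Finset.mem_insert_of_mem hj))

theorem norm_le_of_integral_eq_zero (h : HasDerivOnUnit f f') (hf : ∫ x, f x = 0) : ‖f‖ ≤ ‖f'‖ := by
  have hlip (x y : I) : ‖f x - f y‖ ≤ ‖f'‖ := by
    have hmvt := (convex_Icc (0 : ℝ) 1).norm_image_sub_le_of_norm_hasDerivWithin_le
      (f' := Set.IccExtend zero_le_one f')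
      (fun z hz => by simpa only [Set.IccExtend_of_mem zero_le_one f' hz] using h ⟨z, hz⟩)
      (fun z _ => f'.norm_coe_le_norm _) y.2 x.2
    rw [Set.IccExtend_val, Set.IccExtend_val] at hmvt
    refine hmvt.trans (mul_le_of_le_one_right (norm_nonneg f') ?_)
    exact abs_sub_le_of_le_of_le x.2.1 x.2.2 y.2.1 y.2.2 |>.trans (by simp)
  refine (ContinuousMap.norm_le _ (norm_nonneg f')).2 fun x => ?_
  have hint : f x = ∫ y, (f x - f y) := by
    rw [integral_sub (integrable_const _) (integrable_unitInterval f), hf]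
    simp
  rw [hint]
  simpa using norm_integral_le_of_norm_le_const (μ := (volume : Measure I))
    (.of_forall fun y => hlip x y)

end HasDerivOnUnit

theorem integral_unitInterval_eq {f : I → ℝ} {F : ℝ → ℝ} (h : ∀ x : I, f x = F x) :
    ∫ x, f x = ∫ x in (0 : ℝ)..1, F x := by
  rw [intervalIntegral.integral_of_le zero_le_one, ← integral_Icc_eq_integral_Ioc,
    ← unitInterval.measurePreserving_coe.integral_comp
      (MeasurableEmbedding.subtype_coe measurableSet_Icc)]
  simp only [h]

end UnitInterval

section DigitMean

variable {f f' : C(I, ℝ)} {b a d : ℕ}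

/-- The map `x ↦ (a + x) / b`, which prepends the digit `a` to the base-`b` expansion `x`. For
`b ≤ a` the value is projected to the unit interval, which is never relevant. -/
noncomputable def digitMap (b a : ℕ) : C(I, I) where
  toFun x := Set.projIcc 0 1 zero_le_one ((a + x) / b)

theorem add_div_mem_unitInterval (ha : a < b) (x : I) : ((a + x) / b : ℝ) ∈ I := by
  have hab : (a + 1 : ℝ) ≤ b := by exact_mod_cast ha
  exact unitInterval.div_mem (add_nonneg a.cast_nonneg x.2.1) b.cast_nonneg
    (by linarith [x.2.2])

theorem coe_digitMap (ha : a < b) (x : I) : (digitMap b a x : ℝ) = (a + x) / b :=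
  congrArg Subtype.val (Set.projIcc_of_mem zero_le_one (add_div_mem_unitInterval ha x))

theorem norm_comp_digitMap_le (b a : ℕ) (f : C(I, ℝ)) : ‖f.comp (digitMap b a)‖ ≤ ‖f‖ :=
  (ContinuousMap.norm_le _ (norm_nonneg f)).2 fun _ => f.norm_coe_le_norm _

theorem comp_digitMap_apply (ha : a < b) (x : I) :
    f.comp (digitMap b a) x = Set.IccExtend zero_le_one f ((a + x) / b) := by
  rw [← coe_digitMap ha, Set.IccExtend_val, ContinuousMap.comp_apply]

theorem HasDerivOnUnit.comp_digitMap (h : HasDerivOnUnit f f') (ha : a < b) :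
    HasDerivOnUnit (f.comp (digitMap b a)) ((b : ℝ)⁻¹ • f'.comp (digitMap b a)) := by
  refine hasDerivOnUnit_of_eqOn (g := fun y => Set.IccExtend zero_le_one f ((a + y) / b))
    (fun x => ?_) (comp_digitMap_apply ha)
  have hφ : HasDerivWithinAt (fun y : ℝ => (a + y) / b) (b : ℝ)⁻¹ I x := by
    simpa using (((hasDerivAt_id (x : ℝ)).const_add (a : ℝ)).div_const (b : ℝ)).hasDerivWithinAt
  have hf := h (digitMap b a x)
  rw [coe_digitMap ha] at hf
  exact hf.scomp (x : ℝ) hφ fun y hy => add_div_mem_unitInterval ha ⟨y, hy⟩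

/-- The mean of `f` over the `b` points obtained from `x` by prepending a base-`b` digit. -/
noncomputable def digitMean (b : ℕ) (f : C(I, ℝ)) : C(I, ℝ) :=
  (b : ℝ)⁻¹ • ∑ a ∈ Finset.range b, f.comp (digitMap b a)

theorem norm_digitMean_le (b : ℕ) (f : C(I, ℝ)) : ‖digitMean b f‖ ≤ ‖f‖ :=
  calc ‖digitMean b f‖ ≤ (b : ℝ)⁻¹ * (b * ‖f‖) := by
        rw [digitMean, norm_smul, norm_inv, RCLike.norm_natCast]
        gcongr
        simpa using norm_sum_le_of_le (Finset.range b) fun a _ => norm_comp_digitMap_le b a f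
    _ ≤ ‖f‖ := by
        rw [← mul_assoc]
        exact mul_le_of_le_one_left (norm_nonneg f) (inv_mul_le_one_of_le₀ le_rfl b.cast_nonneg)

theorem HasDerivOnUnit.digitMean (h : HasDerivOnUnit f f') (b : ℕ) :
    HasDerivOnUnit (digitMean b f) ((b : ℝ)⁻¹ • digitMean b f') := by
  have hsum := HasDerivOnUnit.sum fun a ha => h.comp_digitMap (b := b) (Finset.mem_range.1 ha)
  rw [← Finset.smul_sum] at hsum
  exact hsum.const_smul _

theorem integral_digitMean (hb : b ≠ 0) (f : C(I, ℝ)) : ∫ x, digitMean b f x = ∫ x, f x := by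
  have hb' : (b : ℝ) ≠ 0 := Nat.cast_ne_zero.2 hb
  set F : ℝ → ℝ := Set.IccExtend zero_le_one f
  have hcont : Continuous F := f.continuous.Icc_extend'
  calc ∫ x, digitMean b f x
      = ∫ x in (0 : ℝ)..1, (b : ℝ)⁻¹ * ∑ a ∈ Finset.range b, F (a / b + x / b) := by
        refine integral_unitInterval_eq fun x => ?_
        simp only [digitMean, ContinuousMap.smul_apply, ContinuousMap.sum_apply, smul_eq_mul]
        congr 1
        refine Finset.sum_congr rfl fun a ha => ?_
        rw [comp_digitMap_apply (Finset.mem_range.1 ha), add_div]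
    _ = ∑ a ∈ Finset.range b, ∫ x in (a / b : ℝ)..((a + 1 : ℕ) / b : ℝ), F x := by
        rw [intervalIntegral.integral_const_mul, intervalIntegral.integral_finsetSum
          fun a _ => Continuous.intervalIntegrable (by fun_prop) _ _, Finset.mul_sum]
        refine Finset.sum_congr rfl fun a _ => ?_
        rw [intervalIntegral.integral_comp_add_div F hb', smul_eq_mul, inv_mul_cancel_left₀ hb',
          zero_div, add_zero, ← add_div, Nat.cast_succ]
    _ = ∫ x, f x := by
        rw [intervalIntegral.sum_integral_adjacent_intervals (a := fun a : ℕ => (a / b : ℝ))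
          fun a _ => hcont.intervalIntegrable _ _, Nat.cast_zero, zero_div, div_self hb']
        exact (integral_unitInterval_eq fun x => (Set.IccExtend_val zero_le_one f x).symm).symm

end DigitMean

section DigitExpansions

variable {f : C(I, ℝ)}

/-- The normalised Bernoulli polynomial `B_r(x) / r!` on the unit interval. -/
noncomputable def bernoulliOnUnit (r : ℕ) : C(I, ℝ) where
  toFun x := (r ! : ℝ)⁻¹ * bernoulliFun r x
  continuous_toFun := by
    have := continuous_bernoulliFun r
    fun_prop

theorem bernoulliOnUnit_zero : bernoulliOnUnit 0 = 1 := by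
  ext x
  simp [bernoulliOnUnit]

theorem smoothOnUnit_bernoulliOnUnit (r : ℕ) : SmoothOnUnit (bernoulliOnUnit r) :=
  smoothOnUnit_of_eqOn (contDiff_const.mul ((contDiff_bernoulliFun r).of_le le_top)).contDiffOn
    fun _ => rfl

theorem hasDerivOnUnit_bernoulliOnUnit (r : ℕ) :
    HasDerivOnUnit (bernoulliOnUnit (r + 1)) (bernoulliOnUnit r) := by
  refine hasDerivOnUnit_of_eqOn
    (g := fun y => ((r + 1)! : ℝ)⁻¹ * bernoulliFun (r + 1) y) (fun x => ?_) fun _ => rfl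
  refine ((hasDerivAt_bernoulliFun (r + 1) x).const_mul
    (((r + 1)! : ℝ)⁻¹)).hasDerivWithinAt.congr_deriv ?_
  change _ = (r ! : ℝ)⁻¹ * bernoulliFun r x
  rw [Nat.factorial_succ, Nat.add_sub_cancel]
  push_cast
  field_simp

theorem hasDerivOnUnit_sum_smul_bernoulliOnUnit (c : ℕ → ℝ) (N : ℕ) :
    HasDerivOnUnit (∑ r ∈ Finset.range (N + 1), c r • bernoulliOnUnit r)
      (∑ r ∈ Finset.range N, c (r + 1) • bernoulliOnUnit r) := by
  have hconst : HasDerivOnUnit (c 0 • bernoulliOnUnit 0) 0 := by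
    simpa [bernoulliOnUnit_zero] using (HasDerivOnUnit.const 1).const_smul (c 0)
  rw [Finset.sum_range_succ', ← add_zero (Finset.sum (Finset.range N) fun r =>
    c (r + 1) • bernoulliOnUnit r)]
  exact (HasDerivOnUnit.sum fun r _ => (hasDerivOnUnit_bernoulliOnUnit r).const_smul _).add hconst

theorem integral_bernoulliOnUnit_succ (r : ℕ) : ∫ x, bernoulliOnUnit (r + 1) x = 0 := by
  rw [integral_unitInterval_eq (f := bernoulliOnUnit (r + 1))
    (F := fun x => ((r + 1)! : ℝ)⁻¹ * bernoulliFun (r + 1) x) fun _ => rfl,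
    intervalIntegral.integral_const_mul, integral_bernoulliFun_eq_zero r.succ_ne_zero, mul_zero]

theorem integral_sum_smul_bernoulliOnUnit (c : ℕ → ℝ) (N : ℕ) :
    ∫ x, (∑ r ∈ Finset.range (N + 1), c r • bernoulliOnUnit r) x = c 0 := by
  simp only [ContinuousMap.sum_apply]
  rw [integral_finsetSum _ fun r _ => integrable_unitInterval (c r • bernoulliOnUnit r),
    Finset.sum_range_succ']
  simp [integral_const_mul, integral_bernoulliOnUnit_succ, bernoulliOnUnit_zero]

/-- The remainder has mean zero, so its size is bounded by that of its derivative, which is `1 / b`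
times the remainder of the previous order for `f'`. -/
theorem SmoothOnUnit.exists_hasExpansion_digitMean (hf : SmoothOnUnit f) (N : ℕ) :
    ∃ m : ℕ → ℝ, m 0 = ∫ x, f x ∧
      HasExpansion N (digitMean · f) fun r => m r • bernoulliOnUnit r := by
  induction N generalizing f with
  | zero =>
    exact ⟨fun _ => ∫ x, f x, rfl, hasExpansion_zero_iff.2 <|
      .of_bound ‖f‖ (.of_forall fun b => by simpa using norm_digitMean_le b f)⟩
  | succ N ih =>
    obtain ⟨f', hf', hff'⟩ := hf.exists_hasDerivOnUnit
    obtain ⟨m', -, hm'⟩ := ih hf'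
    let m : ℕ → ℝ := fun r => r.casesOn (∫ x, f x) m'
    refine ⟨m, rfl, ?_⟩
    let u (b : ℕ) : C(I, ℝ) :=
      digitMean b f - ∑ r ∈ Finset.range (N + 1), (b : ℝ)⁻¹ ^ r • m r • bernoulliOnUnit r
    let u' (b : ℕ) : C(I, ℝ) :=
      digitMean b f' - ∑ r ∈ Finset.range N, (b : ℝ)⁻¹ ^ r • m' r • bernoulliOnUnit r
    have hderiv (b : ℕ) : HasDerivOnUnit (u b) ((b : ℝ)⁻¹ • u' b) := by
      simp only [u, u', smul_sub, Finset.smul_sum, smul_smul, ← mul_assoc, ← pow_succ']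
      exact (hff'.digitMean b).sub (hasDerivOnUnit_sum_smul_bernoulliOnUnit _ N)
    have hmean (b : ℕ) (hb : b ≠ 0) : ∫ x, u b x = 0 := by
      simp only [u, ContinuousMap.sub_apply, smul_smul]
      rw [integral_sub (integrable_unitInterval _) (integrable_unitInterval _),
        integral_digitMean hb, integral_sum_smul_bernoulliOnUnit, pow_zero, one_mul]
      exact sub_self _
    have hle : u =O[atTop] fun b => (b : ℝ)⁻¹ • u' b :=
      .of_bound 1 <| (eventually_ne_atTop 0).mono fun b hb => by
        simpa using (hderiv b).norm_le_of_integral_eq_zero (hmean b hb)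
    simpa only [HasExpansion, pow_succ', smul_eq_mul] using
      hle.trans ((isBigO_refl (fun b : ℕ => (b : ℝ)⁻¹) atTop).smul hm')

/-- The function `x ↦ (d + x) ^ r` on the unit interval. -/
noncomputable def addPowOnUnit (d r : ℕ) : C(I, ℝ) where
  toFun x := (d + x) ^ r

theorem smoothOnUnit_addPowOnUnit (d r : ℕ) : SmoothOnUnit (addPowOnUnit d r) :=
  smoothOnUnit_of_eqOn ((contDiff_const.add contDiff_id).pow r).contDiffOn fun _ => rfl

theorem SmoothOnUnit.exists_hasExpansion_comp_digitMap (hf : SmoothOnUnit f) (d N : ℕ) :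
    ∃ a : ℕ → ℝ, a 0 = f 0 ∧
      HasExpansion N (fun b => f.comp (digitMap b d)) fun r => a r • addPowOnUnit d r := by
  set F : ℝ → ℝ := Set.IccExtend zero_le_one f
  refine ⟨fun r => (r ! : ℝ)⁻¹ * iteratedDerivWithin r F I 0, ?_, ?_⟩
  · simp only [Nat.factorial_zero, Nat.cast_one, inv_one, one_mul, iteratedDerivWithin_zero]
    exact Set.IccExtend_val zero_le_one f 0
  obtain _ | n := N
  · exact hasExpansion_zero_iff.2 <| .of_bound ‖f‖ <| .of_forall fun b => by
      simpa using norm_comp_digitMap_le b d f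
  obtain ⟨C, hC⟩ := exists_taylor_mean_remainder_bound zero_le_one
    (n := n) (ContDiffOn.of_le (n := ∞) hf (by exact_mod_cast le_top))
  refine .of_bound (|C| * (d + 1) ^ (n + 1)) <| (eventually_gt_atTop d).mono fun b hb => ?_
  refine (ContinuousMap.norm_le _ (by positivity)).2 fun x => ?_
  have htaylor := hC _ (add_div_mem_unitInterval hb x)
  rw [taylor_within_apply, sub_zero] at htaylor
  calc _ = ‖F ((d + x) / b) - ∑ r ∈ Finset.range (n + 1),
          ((r ! : ℝ)⁻¹ * ((d + x) / b) ^ r) • iteratedDerivWithin r F I 0‖ := by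
        rw [ContinuousMap.sub_apply, comp_digitMap_apply hb, ContinuousMap.sum_apply]
        congr 2
        refine Finset.sum_congr rfl fun r _ => ?_
        simp only [ContinuousMap.smul_apply, addPowOnUnit, ContinuousMap.coe_mk, smul_eq_mul]
        rw [div_pow, inv_pow]
        ring
    _ ≤ C * ((d + x) / b) ^ (n + 1) := htaylor
    _ ≤ |C| * ((d + 1) / b) ^ (n + 1) := by
        have := x.2.1
        gcongr
        exacts [le_abs_self C, x.2.2]
    _ = |C| * (d + 1) ^ (n + 1) * ‖(b : ℝ)⁻¹ ^ (n + 1)‖ := by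
        rw [div_pow, norm_pow, norm_inv, RCLike.norm_natCast, inv_pow, div_eq_mul_inv, mul_assoc]

end DigitExpansions

section Series

variable {M : Type*} [AddCommMonoid M]

theorem sum_Ico_sum_Ico_consecutive (f : ℕ → M) {u : ℕ → ℕ} (hu : Monotone u) {p n : ℕ}
    (hpn : p ≤ n) :
    ∑ a ∈ Finset.Ico p n, ∑ m ∈ Finset.Ico (u a) (u (a + 1)), f m =
      ∑ m ∈ Finset.Ico (u p) (u n), f m := by
  induction n, hpn using Nat.le_induction with
  | base => simp
  | succ n hpn ih =>
    rw [Finset.sum_Ico_succ_top hpn, ih, Finset.sum_Ico_consecutive f (hu hpn) (hu n.le_succ)]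

theorem hasSum_of_hasSum_sum_Ico {f : ℕ → ℝ} (hf : ∀ m, 0 ≤ f m) {u : ℕ → ℕ} (hu : StrictMono u)
    {s : ℝ} (hs : HasSum (fun l => ∑ m ∈ Finset.Ico (u l) (u (l + 1)), f m) s) :
    HasSum f (∑ m ∈ Finset.range (u 0), f m + s) := by
  have hmono : Monotone fun n => ∑ m ∈ Finset.range n, f m := fun n n' h =>
    Finset.sum_le_sum_of_subset_of_nonneg (Finset.range_mono h) fun m _ _ => hf m
  rw [hasSum_iff_tendsto_nat_of_nonneg hf,
    tendsto_iff_tendsto_subseq_of_monotone hmono hu.tendsto_atTop]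
  refine (hs.tendsto_sum_nat.const_add _).congr fun L => ?_
  rw [Finset.range_eq_Ico, Finset.range_eq_Ico, sum_Ico_sum_Ico_consecutive f hu.monotone L.zero_le,
    Finset.sum_Ico_consecutive f (u 0).zero_le (hu.monotone L.zero_le), Function.comp_apply,
    Finset.range_eq_Ico]

theorem hasSum_of_succ_eq_mul_add {q s : ℝ} (hq : q < 1) {x y : ℕ → ℝ} (hx : ∀ l, 0 ≤ x l)
    (hy₀ : ∀ l, 0 ≤ y l) (hy : HasSum y s) (h : ∀ l, x (l + 1) = q * x l + y l) :
    HasSum x ((x 0 + s) / (1 - q)) := by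
  have hq' : 0 < 1 - q := sub_pos.2 hq
  have hsum : Summable x := by
    refine summable_of_sum_range_le (c := (x 0 + s) / (1 - q)) hx fun n => ?_
    have hle : ∑ l ∈ Finset.range n, x l ≤ ∑ l ∈ Finset.range (n + 1), x l :=
      Finset.sum_le_sum_of_subset_of_nonneg (Finset.range_mono n.le_succ) fun l _ _ => hx l
    have hrec : ∑ l ∈ Finset.range (n + 1), x l =
        q * ∑ l ∈ Finset.range n, x l + ∑ l ∈ Finset.range n, y l + x 0 := by
      simp only [Finset.sum_range_succ', h, Finset.sum_add_distrib, Finset.mul_sum]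
    rw [le_div_iff₀ hq']
    linarith [sum_le_hasSum (Finset.range n) (fun l _ => hy₀ l) hy]
  have hrec : ∑' l, x l = x 0 + (q * ∑' l, x l + s) := by
    conv_lhs => rw [hsum.tsum_eq_zero_add]
    simp only [h]
    rw [((hsum.mul_left q).hasSum.add hy).tsum_eq, tsum_mul_left]
  rw [hsum.hasSum_iff, eq_div_iff hq'.ne']
  linarith

end Series

section Functional

variable {b d : ℕ}

/-- Composition with `g`, as a continuous linear map. -/
noncomputable def precompCLM (g : C(I, I)) : C(I, ℝ) →L[ℝ] C(I, ℝ) where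
  __ := (ContinuousMap.compRightAlgHom ℝ ℝ g).toLinearMap
  cont := ContinuousMap.compRightAlgHom_continuous ℝ ℝ g

theorem precompCLM_apply (g : C(I, I)) (f : C(I, ℝ)) : precompCLM g f = f.comp g := rfl

/-- The functional sending `f` to `b⁻ˡ ∑ f (0.a₁…aₗ)`, the sum being over all strings `a₁…aₗ` of
base-`b` digits in which `d` occurs exactly `j` times. The count is an integer so that it can be
decreased without truncation. -/
noncomputable def irwinLevel (b d : ℕ) : ℕ → ℤ → (C(I, ℝ) →L[ℝ] ℝ)
  | 0, j => if j = 0 then ContinuousMap.evalCLM ℝ 0 else 0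
  | l + 1, j => (b : ℝ)⁻¹ • ∑ a ∈ Finset.range b,
      (irwinLevel b d l (j - if a = d then 1 else 0)).comp (precompCLM (digitMap b a))

theorem irwinLevel_zero (j : ℤ) (f : C(I, ℝ)) :
    irwinLevel b d 0 j f = if j = 0 then f 0 else 0 := by
  rw [irwinLevel]
  split_ifs <;> rfl

theorem irwinLevel_succ (l : ℕ) (j : ℤ) (f : C(I, ℝ)) :
    irwinLevel b d (l + 1) j f = (b : ℝ)⁻¹ * ∑ a ∈ Finset.range b,
      irwinLevel b d l (j - if a = d then 1 else 0) (f.comp (digitMap b a)) := by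
  simp [irwinLevel, precompCLM_apply]

theorem irwinLevel_of_neg (l : ℕ) {j : ℤ} (hj : j < 0) : irwinLevel b d l j = 0 := by
  induction l generalizing j with
  | zero => exact if_neg hj.ne
  | succ l ih =>
    rw [irwinLevel, Finset.sum_eq_zero, smul_zero]
    intro a _
    rw [ih (by split_ifs <;> lia), ContinuousLinearMap.zero_comp]

theorem irwinLevel_one_nonneg (l : ℕ) (j : ℤ) : 0 ≤ irwinLevel b d l j 1 := by
  induction l generalizing j with
  | zero =>
    rw [irwinLevel_zero]
    split_ifs <;> simp
  | succ l ih =>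
    rw [irwinLevel_succ]
    exact mul_nonneg (by positivity) (Finset.sum_nonneg fun a _ => ih _)

theorem abs_irwinLevel_le (l : ℕ) (j : ℤ) (f : C(I, ℝ)) :
    |irwinLevel b d l j f| ≤ irwinLevel b d l j 1 * ‖f‖ := by
  induction l generalizing j f with
  | zero =>
    rw [irwinLevel_zero, irwinLevel_zero]
    split_ifs
    · simpa using f.norm_coe_le_norm 0
    · simp
  | succ l ih =>
    rw [irwinLevel_succ, irwinLevel_succ, abs_mul, abs_inv, Nat.abs_cast, mul_assoc,
      Finset.sum_mul]
    gcongr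
    refine Finset.abs_sum_le_sum_abs _ _ |>.trans (Finset.sum_le_sum fun a _ => (ih _ _).trans ?_)
    exact mul_le_mul_of_nonneg_left (norm_comp_digitMap_le b a f)
      (irwinLevel_one_nonneg l _)

theorem norm_irwinLevel_le (l : ℕ) (j : ℤ) : ‖irwinLevel b d l j‖ ≤ irwinLevel b d l j 1 :=
  ContinuousLinearMap.opNorm_le_bound _ (irwinLevel_one_nonneg l j) (abs_irwinLevel_le l j)

theorem sum_range_sub_ite (hd : d < b) {G : Type*} [AddCommGroup G] (F : ℤ → ℕ → G) (j : ℤ) :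
    ∑ a ∈ Finset.range b, F (j - if a = d then 1 else 0) a =
      ∑ a ∈ Finset.range b, F j a + (F (j - 1) d - F j d) := by
  have hd' : d ∈ Finset.range b := Finset.mem_range.2 hd
  rw [← Finset.add_sum_erase _ _ hd', ← Finset.add_sum_erase _ (F j) hd', if_pos rfl,
    Finset.sum_congr rfl fun a ha => by rw [if_neg (Finset.ne_of_mem_erase ha), sub_zero]]
  abel

theorem irwinLevel_succ_one (hd : d < b) (l : ℕ) (j : ℤ) :
    irwinLevel b d (l + 1) j 1 =
      (1 - (b : ℝ)⁻¹) * irwinLevel b d l j 1 + (b : ℝ)⁻¹ * irwinLevel b d l (j - 1) 1 := by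
  have hb : (b : ℝ) ≠ 0 := Nat.cast_ne_zero.2 (Nat.ne_zero_of_lt hd)
  rw [irwinLevel_succ]
  have hone (a : ℕ) : (1 : C(I, ℝ)).comp (digitMap b a) = 1 := rfl
  simp only [hone]
  rw [sum_range_sub_ite hd fun j _ => irwinLevel b d l j 1, Finset.sum_const, Finset.card_range,
    nsmul_eq_mul]
  field_simp
  ring

/-- The total mass of the `j`-th Irwin functional, divided by `b`. -/
def irwinMass (j : ℤ) : ℝ := if 0 ≤ j then 1 else 0

theorem irwinMass_sub_irwinMass (j : ℤ) :
    irwinMass j - irwinMass (j - 1) = if j = 0 then 1 else 0 := by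
  unfold irwinMass
  split_ifs <;> first | lia | norm_num

theorem irwinMass_le_one (j : ℤ) : irwinMass j ≤ 1 := by
  unfold irwinMass
  split_ifs <;> norm_num

theorem hasSum_irwinLevel_one (hd : d < b) (j : ℤ) :
    HasSum (fun l => irwinLevel b d l j 1) (b * irwinMass j) := by
  have hneg {j : ℤ} (hj : j < 0) : HasSum (fun l => irwinLevel b d l j 1) (b * irwinMass j) := by
    simp [irwinLevel_of_neg _ hj, irwinMass, hj.not_ge]
  obtain hj | hj := lt_or_ge j (-1)
  · exact hneg (by lia)
  induction j, hj using Int.leInduction with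
  | base => exact hneg (by lia)
  | succ j _ ih =>
    have hb : (0 : ℝ) < b := Nat.cast_pos.2 (Nat.zero_lt_of_lt hd)
    convert hasSum_of_succ_eq_mul_add (sub_lt_self 1 (inv_pos.2 hb))
      (irwinLevel_one_nonneg · (j + 1))
      (fun l => mul_nonneg (inv_pos.2 hb).le (irwinLevel_one_nonneg l j))
      (ih.mul_left (b : ℝ)⁻¹) fun l => ?_ using 1
    · have := irwinMass_sub_irwinMass (j + 1)
      rw [add_sub_cancel_right] at this
      rw [irwinLevel_zero, ContinuousMap.one_apply, ← this]
      field_simp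
      ring
    · rw [irwinLevel_succ_one hd, add_sub_cancel_right]

/-- Burnol's measure `μ_j`, as a functional on the continuous functions on the unit interval: the
sum of `b⁻ˡ f (0.a₁…aₗ)` over the digit strings of all lengths `l` in which `d` occurs exactly `j`
times. -/
noncomputable def irwinFunctional (b d : ℕ) (j : ℤ) : C(I, ℝ) →L[ℝ] ℝ :=
  ∑' l, irwinLevel b d l j

theorem norm_irwinFunctional_le (hd : d < b) (j : ℤ) : ‖irwinFunctional b d j‖ ≤ b :=
  (tsum_of_norm_bounded (f := (irwinLevel b d · j)) (hasSum_irwinLevel_one hd j)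
    (norm_irwinLevel_le · j)).trans (mul_le_of_le_one_right b.cast_nonneg (irwinMass_le_one j))

theorem hasSum_irwinLevel (hd : d < b) (j : ℤ) (f : C(I, ℝ)) :
    HasSum (fun l => irwinLevel b d l j f) (irwinFunctional b d j f) :=
  (ContinuousLinearMap.apply ℝ ℝ f).hasSum (Summable.of_norm_bounded
    (hasSum_irwinLevel_one hd j).summable fun l => norm_irwinLevel_le l j).hasSum

theorem irwinFunctional_one (hd : d < b) (j : ℤ) : irwinFunctional b d j 1 = b * irwinMass j :=
  (hasSum_irwinLevel hd j 1).unique (hasSum_irwinLevel_one hd j)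

theorem irwinFunctional_eq (hd : d < b) (j : ℤ) (f : C(I, ℝ)) :
    irwinFunctional b d j f =
      (if j = 0 then f 0 else 0) + irwinFunctional b d j (digitMean b f) +
        ((b : ℝ)⁻¹ * irwinFunctional b d (j - 1) (f.comp (digitMap b d)) -
          (b : ℝ)⁻¹ * irwinFunctional b d j (f.comp (digitMap b d))) := by
  have htail : HasSum (fun l => irwinLevel b d (l + 1) j f) ((b : ℝ)⁻¹ * ∑ a ∈ Finset.range b,
      irwinFunctional b d (j - if a = d then 1 else 0) (f.comp (digitMap b a))) := by
    simp only [irwinLevel_succ]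
    exact (hasSum_sum fun a _ => hasSum_irwinLevel hd _ _).mul_left _
  have hmean : irwinFunctional b d j (digitMean b f) =
      (b : ℝ)⁻¹ * ∑ a ∈ Finset.range b, irwinFunctional b d j (f.comp (digitMap b a)) := by
    rw [digitMean, map_smul, map_sum, smul_eq_mul]
  have hsplit := HasSum.zero_add (f := fun l => irwinLevel b d l j f) htail
  rw [(hasSum_irwinLevel hd j f).unique hsplit, irwinLevel_zero, hmean,
    sum_range_sub_ite hd fun j a => irwinFunctional b d j (f.comp (digitMap b a))]
  ring

end Functional

section IrwinSum

variable {b d : ℕ}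

/-- The function `x ↦ 1 / (n + x)` on the unit interval. For `n = 0` it is replaced by `0`, so that
a leading digit `0` contributes nothing to the Irwin sum. -/
noncomputable def recipOnUnit (n : ℕ) : C(I, ℝ) where
  toFun x := if n = 0 then 0 else (n + x : ℝ)⁻¹
  continuous_toFun := by
    split_ifs with hn
    · exact continuous_const
    · refine Continuous.inv₀ (by fun_prop) fun x => ne_of_gt ?_
      exact add_pos_of_pos_of_nonneg (Nat.cast_pos.2 (Nat.pos_of_ne_zero hn)) x.2.1

theorem recipOnUnit_zero : recipOnUnit 0 = 0 := rfl

theorem recipOnUnit_apply {n : ℕ} (hn : n ≠ 0) (x : I) : recipOnUnit n x = (n + x : ℝ)⁻¹ :=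
  if_neg hn

theorem smoothOnUnit_recipOnUnit (n : ℕ) : SmoothOnUnit (recipOnUnit n) := by
  obtain rfl | hn := eq_or_ne n 0
  · exact smoothOnUnit_of_eqOn contDiffOn_const fun _ => rfl
  · refine smoothOnUnit_of_eqOn (g := fun x => (n + x)⁻¹) ?_ (recipOnUnit_apply hn)
    refine (contDiff_const.add contDiff_id).contDiffOn.inv fun x hx => ne_of_gt ?_
    exact add_pos_of_pos_of_nonneg (Nat.cast_pos.2 (Nat.pos_of_ne_zero hn)) hx.1

theorem integral_recipOnUnit {n : ℕ} (hn : n ≠ 0) :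
    ∫ x, recipOnUnit n x = Real.log (1 + 1 / n) := by
  have hn' : (0 : ℝ) < n := Nat.cast_pos.2 (Nat.pos_of_ne_zero hn)
  rw [integral_unitInterval_eq (F := fun x => (n + x)⁻¹) (recipOnUnit_apply hn),
    intervalIntegral.integral_comp_add_left (fun y => y⁻¹), add_zero,
    integral_inv_of_pos hn' (by positivity), add_div, div_self hn'.ne']

theorem recipOnUnit_comp_digitMap {a n : ℕ} (ha : a < b) (hn : n ≠ 0) :
    (recipOnUnit n).comp (digitMap b a) = (b : ℝ) • recipOnUnit (n * b + a) := by
  have hb : (b : ℝ) ≠ 0 := Nat.cast_ne_zero.2 (Nat.ne_zero_of_lt ha)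
  have hnb : n * b + a ≠ 0 := Nat.ne_of_gt <|
    Nat.add_pos_left (Nat.mul_pos (Nat.pos_of_ne_zero hn) (Nat.zero_lt_of_lt ha)) a
  ext x
  rw [ContinuousMap.comp_apply, recipOnUnit_apply hn, coe_digitMap ha, ContinuousMap.smul_apply,
    recipOnUnit_apply hnb, smul_eq_mul, ← div_eq_mul_inv, ← inv_div]
  push_cast
  field_simp
  ring

theorem count_digits_mul_add {a n : ℕ} (hb : 1 < b) (ha : a < b) (hn : n ≠ 0) :
    (Nat.digits b (n * b + a)).count d = (Nat.digits b n).count d + if a = d then 1 else 0 := by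
  rw [add_comm, mul_comm, Nat.digits_add b hb a n ha (.inr hn), List.count_cons]
  simp only [beq_iff_eq]

theorem irwinLevel_recipOnUnit (hb : 1 < b) {n : ℕ} (hn : n ≠ 0) (l : ℕ) (j : ℤ) :
    irwinLevel b d l j (recipOnUnit n) =
      ∑ m ∈ Finset.Ico (n * b ^ l) ((n + 1) * b ^ l),
        if ((Nat.digits b m).count d : ℤ) = (Nat.digits b n).count d + j then (1 : ℝ) / m
        else 0 := by
  induction l generalizing j n with
  | zero => simp [irwinLevel_zero, recipOnUnit_apply hn, eq_comm]
  | succ l ih =>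
    have hb₀ : (b : ℝ) ≠ 0 := Nat.cast_ne_zero.2 (Nat.ne_zero_of_lt hb)
    have hu : Monotone fun a => (n * b + a) * b ^ l := fun a a' h => by dsimp only; gcongr
    have hblocks := sum_Ico_sum_Ico_consecutive (fun m =>
      if ((Nat.digits b m).count d : ℤ) = (Nat.digits b n).count d + j then (1 : ℝ) / m else 0)
      hu b.zero_le
    have hlast : (n * b + b) * b ^ l = (n + 1) * b ^ (l + 1) := by ring
    rw [add_zero, mul_assoc, ← pow_succ', hlast, ← Finset.range_eq_Ico] at hblocks
    rw [irwinLevel_succ, ← hblocks, Finset.mul_sum]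
    refine Finset.sum_congr rfl fun a ha => ?_
    have ha' := Finset.mem_range.1 ha
    have hnb : n * b + a ≠ 0 := Nat.ne_of_gt <|
      Nat.add_pos_left (Nat.mul_pos (Nat.pos_of_ne_zero hn) (Nat.zero_lt_of_lt hb)) a
    rw [recipOnUnit_comp_digitMap ha' hn, map_smul, smul_eq_mul, inv_mul_cancel_left₀ hb₀, ih hnb,
      count_digits_mul_add hb ha' hn, add_assoc (n * b)]
    push_cast
    simp only [add_add_sub_cancel]

theorem sum_Ico_pow_irwinSum_term (hb : 1 < b) (k l : ℕ) :
    (∑ m ∈ Finset.Ico (b ^ l) (b ^ (l + 1)),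
      if 0 < m ∧ (Nat.digits b m).count d = k then (1 : ℝ) / m else 0) =
      ∑ n ∈ Finset.range b, irwinLevel b d l (k - if n = d then 1 else 0) (recipOnUnit n) := by
  have hu : Monotone fun n => n * b ^ l := fun n n' h => by dsimp only; gcongr
  have hblocks := sum_Ico_sum_Ico_consecutive (fun m =>
    if 0 < m ∧ (Nat.digits b m).count d = k then (1 : ℝ) / m else 0) hu hb.le
  rw [one_mul, ← pow_succ'] at hblocks
  rw [← hblocks, Finset.range_eq_Ico, ← Finset.sum_Ico_consecutive _ zero_le_one hb.le,
    Finset.sum_Ico_eq_sum_range _ 0 1, Finset.sum_range_one, add_zero, recipOnUnit_zero, map_zero,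
    zero_add]
  refine Finset.sum_congr rfl fun n hn => ?_
  obtain ⟨hn₁, hnb⟩ := Finset.mem_Ico.1 hn
  have hn₀ : n ≠ 0 := Nat.ne_zero_of_lt hn₁
  rw [irwinLevel_recipOnUnit hb hn₀, Nat.digits_of_lt b n hn₀ hnb, List.count_singleton]
  refine Finset.sum_congr rfl fun m hm => if_congr ?_ rfl rfl
  have hm₀ : 0 < m := (Nat.mul_pos hn₁ (pow_pos (Nat.zero_lt_of_lt hb) l)).trans_le
    (Finset.mem_Ico.1 hm).1
  simp [hm₀]

theorem irwinSum_eq (hb : 1 < b) (hd : d < b) (k : ℕ) :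
    irwinSum b d k = irwinFunctional b d k (∑ n ∈ Finset.range b, recipOnUnit n) +
      (irwinFunctional b d (k - 1) (recipOnUnit d) - irwinFunctional b d k (recipOnUnit d)) := by
  have hblocks : HasSum (fun l => ∑ m ∈ Finset.Ico (b ^ l) (b ^ (l + 1)),
      if 0 < m ∧ (Nat.digits b m).count d = k then (1 : ℝ) / m else 0)
      (∑ n ∈ Finset.range b,
        irwinFunctional b d (k - if n = d then 1 else 0) (recipOnUnit n)) := by
    simp only [sum_Ico_pow_irwinSum_term hb]
    exact hasSum_sum fun n _ => hasSum_irwinLevel hd _ _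
  have hsum := hasSum_of_hasSum_sum_Ico (fun m => by positivity) (pow_right_strictMono₀ hb)
    hblocks
  rw [irwinSum, hsum.tsum_eq, map_sum,
    sum_range_sub_ite hd fun j n => irwinFunctional b d j (recipOnUnit n)]
  simp

end IrwinSum

section Digamma

theorem contDiffOn_Gamma_Ioi : ContDiffOn ℝ ∞ Real.Gamma (Set.Ioi 0) := fun x hx => by
  have hdiff : DifferentiableOn ℂ Complex.Gamma {s | 0 < s.re} := fun s hs =>
    (Complex.differentiableAt_Gamma s fun m hm => by
      rw [hm, Set.mem_ofPred_eq, Complex.neg_re, Complex.natCast_re] at hs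
      linarith [m.cast_nonneg (α := ℝ)]).differentiableWithinAt
  have hcont := hdiff.analyticAt (z := (x : ℂ))
    ((isOpen_lt continuous_const Complex.continuous_re).mem_nhds hx)
  exact hcont.contDiffAt.real_of_complex.contDiffWithinAt

theorem contDiffOn_logDeriv_Gamma_Ioi : ContDiffOn ℝ ∞ (logDeriv Real.Gamma) (Set.Ioi 0) :=
  ((contDiffOn_infty_iff_deriv_of_isOpen isOpen_Ioi).1 contDiffOn_Gamma_Ioi).2.div
    contDiffOn_Gamma_Ioi fun _ hx => (Real.Gamma_pos_of_pos hx).ne'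

theorem hasDerivAt_log_Gamma {x : ℝ} (hx : 0 < x) :
    HasDerivAt (Real.log ∘ Real.Gamma) (logDeriv Real.Gamma x) x :=
  (((contDiffOn_Gamma_Ioi.contDiffAt (Ioi_mem_nhds hx)).differentiableAt
    (by simp)).hasDerivAt.log (Real.Gamma_pos_of_pos hx).ne')

theorem log_Gamma_add_one {x : ℝ} (hx : 0 < x) :
    Real.log (Real.Gamma (x + 1)) = Real.log x + Real.log (Real.Gamma x) := by
  rw [Real.Gamma_add_one hx.ne', Real.log_mul hx.ne' (Real.Gamma_pos_of_pos hx).ne']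

theorem logDeriv_Gamma_add_one {x : ℝ} (hx : 0 < x) :
    logDeriv Real.Gamma (x + 1) = logDeriv Real.Gamma x + x⁻¹ := by
  have hleft :
      HasDerivAt (fun y => Real.log (Real.Gamma (y + 1))) (logDeriv Real.Gamma (x + 1)) x :=
    (hasDerivAt_log_Gamma (by positivity)).comp_add_const x 1
  have hright := (Real.hasDerivAt_log hx.ne').add (hasDerivAt_log_Gamma hx)
  rw [add_comm (logDeriv Real.Gamma x)]
  refine hleft.unique (hright.congr_of_eventuallyEq ?_)
  filter_upwards [Ioi_mem_nhds hx] with y hy using log_Gamma_add_one hy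

/-- By log-convexity of `Γ`, its logarithmic derivatives at `x` and `x + 1` enclose the slope
`log x` of `log Γ` on `[x, x + 1]`. -/
theorem logDeriv_Gamma_mem_Icc {x : ℝ} (hx : 0 < x) :
    logDeriv Real.Gamma x ∈ Set.Icc (Real.log x - x⁻¹) (Real.log x) := by
  have hx' : 0 < x + 1 := by positivity
  have hslope : slope (Real.log ∘ Real.Gamma) x (x + 1) = Real.log x := by
    rw [slope_def_field, Function.comp_apply, Function.comp_apply, log_Gamma_add_one hx]
    ring
  have hle := Real.convexOn_log_Gamma.le_slope_of_hasDerivAt hx hx' (by linarith)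
    (hasDerivAt_log_Gamma hx)
  have hge := Real.convexOn_log_Gamma.slope_le_of_hasDerivAt hx hx' (by linarith)
    (hasDerivAt_log_Gamma hx')
  rw [hslope] at hle hge
  rw [logDeriv_Gamma_add_one hx] at hge
  exact ⟨by linarith, hle⟩

theorem tendsto_logDeriv_Gamma_sub_log :
    Tendsto (fun x => logDeriv Real.Gamma x - Real.log x) atTop (nhds 0) := by
  have hlower : Tendsto (fun x : ℝ => -x⁻¹) atTop (nhds 0) := by
    simpa using (tendsto_inv_atTop_zero (𝕜 := ℝ)).neg
  refine tendsto_of_tendsto_of_tendsto_of_le_of_le' hlower tendsto_const_nhds ?_ ?_ <;>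
    filter_upwards [eventually_gt_atTop 0] with x hx <;>
    linarith [(logDeriv_Gamma_mem_Icc hx).1, (logDeriv_Gamma_mem_Icc hx).2]

theorem eq_zero_of_periodic_of_tendsto_zero {D : ℝ → ℝ} (hD : ∀ y, 0 < y → D (y + 1) = D y)
    (hlim : Tendsto D atTop (nhds 0)) {y : ℝ} (hy : 0 < y) : D y = 0 := by
  have hconst (n : ℕ) : D (y + n) = D y := by
    induction n with
    | zero => simp
    | succ n ih => rw [Nat.cast_succ, ← add_assoc, hD _ (by positivity), ih]
  refine tendsto_nhds_unique ?_
    (hlim.comp (tendsto_atTop_add_const_left _ y tendsto_natCast_atTop_atTop))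
  simp [Function.comp_def, hconst]

section Multiplication

variable {b : ℕ} {y : ℝ}

theorem sum_logDeriv_Gamma_add_one_div (hb : b ≠ 0) (hy : 0 < y) :
    ∑ a ∈ Finset.range b, logDeriv Real.Gamma ((a + (y + 1)) / b) =
      ∑ a ∈ Finset.range b, logDeriv Real.Gamma ((a + y) / b) + (y / b)⁻¹ := by
  have hb' : (0 : ℝ) < b := Nat.cast_pos.2 (Nat.pos_of_ne_zero hb)
  have hterm (a : ℕ) : ((a + (y + 1)) / b : ℝ) = ((a + 1 : ℕ) + y) / b := by
    push_cast
    ring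
  have hsum := Finset.sum_range_succ' (fun a : ℕ => logDeriv Real.Gamma ((a + y) / b)) b
  rw [Finset.sum_range_succ, add_div, div_self hb'.ne', add_comm 1,
    logDeriv_Gamma_add_one (by positivity), Nat.cast_zero, zero_add] at hsum
  simp only [hterm]
  linarith

theorem tendsto_logDeriv_Gamma_add_div (hb : b ≠ 0) (a : ℝ) :
    Tendsto (fun y => logDeriv Real.Gamma ((a + y) / b) - (Real.log y - Real.log b)) atTop
      (nhds 0) := by
  have hb' : (0 : ℝ) < b := Nat.cast_pos.2 (Nat.pos_of_ne_zero hb)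
  have harg : Tendsto (fun y => (a + y) / b) atTop atTop :=
    (tendsto_atTop_add_const_left _ _ tendsto_id).atTop_div_const hb'
  rw [← add_zero (0 : ℝ)]
  refine ((tendsto_logDeriv_Gamma_sub_log.comp harg).add
    (Real.tendsto_log_comp_add_sub_log a)).congr' ?_
  filter_upwards [eventually_gt_atTop (-a)] with y hy
  rw [Function.comp_apply, Real.log_div (by linarith) hb'.ne', add_comm y]
  ring

/-- The logarithmic derivative of Gauss's multiplication formula for `Γ`: the difference of the two
sides is `1`-periodic and tends to zero. -/
theorem logDeriv_Gamma_eq_log_add_sum (hb : b ≠ 0) (hy : 0 < y) :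
    logDeriv Real.Gamma y = Real.log b +
      (b : ℝ)⁻¹ * ∑ a ∈ Finset.range b, logDeriv Real.Gamma ((a + y) / b) := by
  have hb' : (b : ℝ) ≠ 0 := Nat.cast_ne_zero.2 hb
  let D (y : ℝ) : ℝ := logDeriv Real.Gamma y - (Real.log b +
    (b : ℝ)⁻¹ * ∑ a ∈ Finset.range b, logDeriv Real.Gamma ((a + y) / b))
  have hperiodic (y : ℝ) (hy : 0 < y) : D (y + 1) = D y := by
    simp only [D, sum_logDeriv_Gamma_add_one_div hb hy, logDeriv_Gamma_add_one hy]
    field_simp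
    ring
  have hlim := tendsto_logDeriv_Gamma_sub_log.sub
    ((tendsto_finsetSum (Finset.range b) fun a _ =>
      tendsto_logDeriv_Gamma_add_div hb a).const_mul (b : ℝ)⁻¹)
  rw [Finset.sum_const_zero, mul_zero, sub_zero] at hlim
  refine sub_eq_zero.1 <| eq_zero_of_periodic_of_tendsto_zero hperiodic (hlim.congr fun y => ?_) hy
  rw [Finset.sum_sub_distrib, Finset.sum_const, Finset.card_range, nsmul_eq_mul, mul_sub,
    inv_mul_cancel_left₀ hb']
  ring

end Multiplication

/-- The digamma function `x ↦ Γ'(1 + x) / Γ(1 + x)` on the unit interval. -/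
noncomputable def digammaOnUnit : C(I, ℝ) where
  toFun x := logDeriv Real.Gamma (1 + x)
  continuous_toFun := contDiffOn_logDeriv_Gamma_Ioi.continuousOn.comp_continuous (by fun_prop)
    fun x => add_pos_of_pos_of_nonneg one_pos x.2.1

theorem smoothOnUnit_digammaOnUnit : SmoothOnUnit digammaOnUnit :=
  smoothOnUnit_of_eqOn (contDiffOn_logDeriv_Gamma_Ioi.comp
    (contDiff_const.add contDiff_id).contDiffOn fun _ hx =>
      add_pos_of_pos_of_nonneg one_pos hx.1) fun _ => rfl

theorem sum_recipOnUnit_apply {b : ℕ} (hb : b ≠ 0) (x : I) :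
    (∑ n ∈ Finset.range b, recipOnUnit n) x =
      logDeriv Real.Gamma (b + x) - digammaOnUnit x := by
  induction b, Nat.one_le_iff_ne_zero.2 hb using Nat.le_induction with
  | base => simp [recipOnUnit_zero, digammaOnUnit]
  | succ b hb₁ ih =>
    have hb₀ : b ≠ 0 := Nat.one_le_iff_ne_zero.1 hb₁
    have hpos : (0 : ℝ) < b + x := add_pos_of_pos_of_nonneg (Nat.cast_pos.2 hb₁) x.2.1
    rw [Finset.sum_range_succ, ContinuousMap.add_apply, ih hb₀, recipOnUnit_apply hb₀,
      Nat.cast_succ, add_right_comm, logDeriv_Gamma_add_one hpos]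
    ring

theorem sum_recipOnUnit {b : ℕ} (hb : b ≠ 0) :
    ∑ n ∈ Finset.range b, recipOnUnit n =
      Real.log b • 1 - (digammaOnUnit - digitMean b digammaOnUnit) := by
  have hb' : (0 : ℝ) < b := Nat.cast_pos.2 (Nat.pos_of_ne_zero hb)
  ext x
  have hmean : digitMean b digammaOnUnit x =
      (b : ℝ)⁻¹ * ∑ a ∈ Finset.range b, logDeriv Real.Gamma ((a + (b + x)) / b) := by
    simp only [digitMean, ContinuousMap.smul_apply, ContinuousMap.sum_apply, smul_eq_mul]
    congr 1
    refine Finset.sum_congr rfl fun a ha => congrArg (logDeriv Real.Gamma) ?_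
    rw [coe_digitMap (Finset.mem_range.1 ha)]
    field_simp
    ring
  rw [sum_recipOnUnit_apply hb, logDeriv_Gamma_eq_log_add_sum hb
    (add_pos_of_pos_of_nonneg hb' x.2.1), ← hmean]
  simp
  ring

end Digamma

section IrwinExpansion

variable {d N : ℕ} {f : C(I, ℝ)}

theorem norm_inv_smul_irwinFunctional_le {b : ℕ} (hd : d < b) (j : ℤ) :
    ‖(b : ℝ)⁻¹ • irwinFunctional b d j‖ ≤ 1 := by
  refine (ContinuousLinearMap.opNorm_smul_le _ _).trans ?_
  rw [norm_inv, RCLike.norm_natCast]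
  exact inv_mul_le_one_of_le₀ (norm_irwinFunctional_le hd j) b.cast_nonneg

/-- The induction hypothesis of the main argument: for every smooth `f` and every `j`, the mean
`μ_j(f) / b` has an `N`-term expansion with constant term `∫ f` (`0` if `j < 0`). -/
def IrwinMeanExpansion (d N : ℕ) : Prop :=
  ∀ (j : ℤ) (f : C(I, ℝ)), SmoothOnUnit f →
    HasExpansionFrom N (irwinMass j * ∫ x, f x) fun b => (b : ℝ)⁻¹ * irwinFunctional b d j f

namespace IrwinMeanExpansion

theorem zero (d : ℕ) : IrwinMeanExpansion d 0 := fun j f _ =>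
  ⟨fun _ => irwinMass j * ∫ x, f x, rfl, hasExpansion_zero_iff.2 <|
    isBigO_clm_apply
      ((eventually_gt_atTop d).mono fun _ hb => norm_inv_smul_irwinFunctional_le hb j)
      (isBigO_const_const f one_ne_zero atTop)⟩

theorem apply (h : IrwinMeanExpansion d N) (j : ℤ) {u c : ℕ → C(I, ℝ)} (hu : HasExpansion N u c)
    (hc : ∀ r, SmoothOnUnit (c r)) :
    HasExpansionFrom N (irwinMass j * ∫ x, c 0 x)
      fun b => (b : ℝ)⁻¹ * irwinFunctional b d j (u b) :=
  HasExpansion.clm_apply (T := fun b => (b : ℝ)⁻¹ • irwinFunctional b d j)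
    (L := fun q => irwinMass j * ∫ x, q x)
    ((eventually_gt_atTop d).mono fun _ hb => norm_inv_smul_irwinFunctional_le hb j) hu
    fun r => h j (c r) (hc r)

theorem hasExpansionFrom_sub_digitMean (h : IrwinMeanExpansion d N) (j : ℤ) (hf : SmoothOnUnit f) :
    HasExpansionFrom N 0 fun b => irwinFunctional b d j (f - digitMean b f) := by
  obtain ⟨a, ha₀, ha⟩ := hf.exists_hasExpansion_comp_digitMap d N
  have hlead : ∫ x, (a 0 • addPowOnUnit d 0) x = f 0 := by simp [addPowOnUnit, ha₀]
  have hdigit (j : ℤ) : HasExpansionFrom N (irwinMass j * f 0)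
      fun b => (b : ℝ)⁻¹ * irwinFunctional b d j (f.comp (digitMap b d)) :=
    hlead ▸ h.apply j ha fun r => (smoothOnUnit_addPowOnUnit d r).const_smul (a r)
  have hsum := (HasExpansionFrom.const N (if j = 0 then f 0 else 0)).add
    ((hdigit (j - 1)).sub (hdigit j))
  have hzero : (if j = 0 then f 0 else 0) + (irwinMass (j - 1) * f 0 - irwinMass j * f 0) = 0 := by
    have hmass := congrArg (· * f 0) (irwinMass_sub_irwinMass j)
    simp only [sub_mul, ite_zero_mul, one_mul] at hmass
    linarith
  rw [hzero] at hsum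
  refine hsum.congr' <| (eventually_gt_atTop d).mono fun b hb => ?_
  simp only [Pi.add_apply, Pi.sub_apply]
  rw [map_sub, irwinFunctional_eq hb j f]
  ring

theorem hasExpansionFrom_sub_integral (h : IrwinMeanExpansion d N) (j : ℤ) (hf : SmoothOnUnit f) :
    HasExpansionFrom N 0
      fun b => irwinFunctional b d j f - b * (irwinMass j * ∫ x, f x) := by
  obtain ⟨m, hm₀, hm⟩ := hf.exists_hasExpansion_digitMean (N + 1)
  have htail := h.apply j (hasExpansion_succ_iff.1 hm)
    fun r => (smoothOnUnit_bernoulliOnUnit (r + 1)).const_smul (m (r + 1))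
  have hlead : ∫ x, (m (0 + 1) • bernoulliOnUnit (0 + 1)) x = 0 := by
    simp [integral_const_mul, integral_bernoulliOnUnit_succ 0]
  rw [hlead, mul_zero] at htail
  have hsum := (h.hasExpansionFrom_sub_digitMean j hf).add htail
  rw [add_zero] at hsum
  refine hsum.congr' <| (eventually_gt_atTop d).mono fun b hb => ?_
  have hb' : (b : ℝ) ≠ 0 := Nat.cast_ne_zero.2 (Nat.ne_zero_of_lt hb)
  rw [Pi.add_apply, map_smul, smul_eq_mul, inv_mul_cancel_left₀ hb', bernoulliOnUnit_zero, hm₀,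
    ← map_add, sub_add_sub_cancel, map_sub, map_smul, irwinFunctional_one hb, smul_eq_mul]
  ring

theorem succ (h : IrwinMeanExpansion d N) : IrwinMeanExpansion d (N + 1) := fun j f hf =>
  HasExpansionFrom.succ <| (h.hasExpansionFrom_sub_integral j hf).congr' <|
    (eventually_ne_atTop 0).mono fun b hb => by
      dsimp only
      rw [smul_eq_mul, mul_sub, mul_inv_cancel_left₀ (Nat.cast_ne_zero.2 hb)]

end IrwinMeanExpansion

theorem irwinMeanExpansion (d N : ℕ) : IrwinMeanExpansion d N :=
  N.rec (.zero d) fun _ h => h.succ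

theorem irwinSum_sub_eq {b d : ℕ} (hb : 1 < b) (hd : d < b) (k : ℕ) :
    irwinSum b d k - b * Real.log b +
        (if k = 0 ∧ 1 ≤ d then (b : ℝ) * Real.log (1 + 1 / (d : ℝ)) else 0) =
      (irwinFunctional b d (k - 1) (recipOnUnit d) -
          b * (irwinMass (k - 1) * ∫ x, recipOnUnit d x)) -
        (irwinFunctional b d k (recipOnUnit d) - b * (irwinMass k * ∫ x, recipOnUnit d x)) -
        irwinFunctional b d k (digammaOnUnit - digitMean b digammaOnUnit) := by
  have hcorr : (if k = 0 ∧ 1 ≤ d then (b : ℝ) * Real.log (1 + 1 / (d : ℝ)) else 0) =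
      b * ((irwinMass k - irwinMass (k - 1)) * ∫ x, recipOnUnit d x) := by
    rw [irwinMass_sub_irwinMass, ite_zero_mul, one_mul]
    obtain rfl | hd₀ := eq_or_ne d 0
    · simp [recipOnUnit_zero]
    · simp [integral_recipOnUnit hd₀, Nat.one_le_iff_ne_zero.2 hd₀]
  have hmass : irwinMass k = 1 := if_pos (by positivity)
  rw [hcorr, irwinSum_eq hb hd, sum_recipOnUnit (Nat.ne_zero_of_lt hd), map_sub, map_smul,
    irwinFunctional_one hd, hmass, smul_eq_mul]
  ring

theorem hasExpansionFrom_irwinSum (d k N : ℕ) :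
    HasExpansionFrom N 0 fun b : ℕ => irwinSum b d k - (b : ℝ) * Real.log b +
      (if k = 0 ∧ 1 ≤ d then (b : ℝ) * Real.log (1 + 1 / (d : ℝ)) else 0) := by
  have h := irwinMeanExpansion d N
  have hrecip (j : ℤ) := h.hasExpansionFrom_sub_integral j (smoothOnUnit_recipOnUnit d)
  have hsum := ((hrecip (k - 1)).sub (hrecip k)).sub
    (h.hasExpansionFrom_sub_digitMean k smoothOnUnit_digammaOnUnit)
  rw [sub_zero, sub_zero] at hsum
  refine hsum.congr' ?_
  filter_upwards [eventually_gt_atTop 1, eventually_gt_atTop d] with b hb hd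
  exact (irwinSum_sub_eq hb hd k).symm

end IrwinExpansion

theorem irwin_asymptotic_expansion_all_orders (d k : ℕ) :
    ∃ a : ℕ → ℝ, ∀ N : ℕ,
      (fun b : ℕ => irwinSum b d k - (b : ℝ) * Real.log b
        + (if k = 0 ∧ 1 ≤ d then (b : ℝ) * Real.log (1 + 1 / (d : ℝ)) else 0)
        - ∑ n ∈ Finset.Icc 1 N, a n / (b : ℝ) ^ n)
      =O[atTop] fun b : ℕ => ((b : ℝ) ^ (N + 1))⁻¹ := by
  obtain ⟨a, ha₀, ha⟩ :=
    HasExpansionFrom.exists_forall_hasExpansion (hasExpansionFrom_irwinSum d k)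
  refine ⟨a, fun N => (ha (N + 1)).congr (fun b => congrArg _ ?_) fun b => inv_pow _ _⟩
  rw [Finset.range_eq_Ico, Finset.sum_eq_sum_Ico_succ_bot N.succ_pos, ha₀, smul_zero, zero_add]
  exact Finset.sum_congr rfl fun n _ => by
    rw [inv_pow, smul_eq_mul, div_eq_inv_mul]
end
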